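/- arXiv:1512.01160 — 5 statements merged into one kernel-verified Lean document; each statement's English description precedes it below -/
import Mathlib

section
/- Let 1 ≤ d ≤ 19 and let 0 < α_1 ≤ α_2 ≤ … ≤ α_{d-1} ≤ α_d = 1. Consider the torus T^d_α = (0, 2π/α_1) × … × (0, 2π/α_{d-1}) × (0, 2π). Let V : ℝ^d → ℝ be continuous, nonnegative, and periodic with period 2π/α_j in the j-th variable, and let γ ≥ 1 be real. Suppose φ_1, …, φ_N : ℝ^d → ℝ are smooth functions, periodic with period 2π/α_j in the j-th variable, orthonormal in L²(T^d_α), and for each n there is λ_n > 0 such that −Δφ_n − P(V · (Pφ_n)) = −λ_n φ_n on ℝ^d. Then ∑_{n=1}^N λ_n^γ ≤ (π/√3)^d · (Γ(γ+1) / (2^d π^{d/2} Γ(γ + d/2 + 1))) · ∫_{T^d_α} V(x)^{γ + d/2} dx. -/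
open Real MeasureTheory

/-- Second partial derivative of `f : ℝ^d → ℝ` with respect to the `i`-th coordinate. -/
noncomputable def pd2 {d : ℕ} (i : Fin d) (f : (Fin d → ℝ) → ℝ) (x : Fin d → ℝ) : ℝ :=
  deriv (fun s => deriv (fun t => f (Function.update x i t)) s) (x i)

/-- The projection removing the average with respect to the `j`-th coordinate over `(0, 2π)`:
`(Pψ)(x) = ψ(x) − (1/(2π)) ∫_0^{2π} ψ(x₁,…,t,…) dt`. -/
noncomputable def projP {d : ℕ} (j : Fin d) (ψ : (Fin d → ℝ) → ℝ) (x : Fin d → ℝ) : ℝ :=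
  ψ x - (1 / (2 * π)) * ∫ t in (0:ℝ)..(2 * π), ψ (Function.update x j t)

/-!
Expand the `φ n` in the characters of the torus; all of them have modulus one. At every energy
level `E > 0` cut `φ n`, with weight `w (κ / E)` on a mode of kinetic energy `κ`, into a low and
a high part. By Bessel's inequality the low parts of an orthonormal family have pointwise
density at most `∑ₖ w (κₖ / E) ^ 2 ≤ C E ^ (d / 2)`, while the high parts, integrated over `E`, are
controlled by the kinetic energy. Balancing the two parts with a weight that depends on `E / W x`
and integrating over `E` gives `∑ₙ ∫ W φₙ² ≤ ∑ₙ ∫ |∇φₙ|² + C' ∫ W ^ (1 + d / 2)`.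

The projection forces every bound state to have no modes with `k j = 0`, so only `k j ≠ 0` enters
the lattice sum. Majorising `w ^ 2` by an exponential reduces it to theta functions, which the
functional equation of `θ` estimates uniformly in `α`; the resulting constant is at most that of
the theorem up to `d = 19`.

Taking `W = max (V - t) 0` and the bound states below `-t` gives the case `γ = 1` for the shifted
eigenvalues, and integrating against `t ^ (γ - 2)` (Aizenman–Lieb) gives every `γ > 1`.
-/

namespace LiebThirring

open scoped ENNReal InnerProductSpace

section SpectralCutoff

variable {𝕜 K H X ι : Type*} [RCLike 𝕜] [NormedAddCommGroup H] [InnerProductSpace 𝕜 H]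
  [MeasurableSpace X] {μ : Measure X}

theorem one_sub_mul_norm_sq_le {E : Type*} [SeminormedAddCommGroup E] {η : ℝ} (hη : 0 < η)
    (hη1 : η ≤ 1) (z p : E) :
    (1 - η) * ‖z‖ ^ 2 ≤ ‖z - p‖ ^ 2 + (1 / η - 1) * ‖p‖ ^ 2 := by
  have triangle : ‖z‖ ≤ ‖z - p‖ + ‖p‖ := by simpa using norm_add_le (z - p) p
  have complete_square : ‖z - p‖ ^ 2 + (1 / η - 1) * ‖p‖ ^ 2 - (1 - η) * (‖z - p‖ + ‖p‖) ^ 2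
      = (η * ‖z - p‖ - (1 - η) * ‖p‖) ^ 2 / η := by field_simp; ring
  calc (1 - η) * ‖z‖ ^ 2 ≤ (1 - η) * (‖z - p‖ + ‖p‖) ^ 2 := by
        have : 0 ≤ 1 - η := by linarith
        gcongr
    _ ≤ ‖z - p‖ ^ 2 + (1 / η - 1) * ‖p‖ ^ 2 := by
        rw [← sub_nonneg, complete_square]
        positivity

theorem lintegral_ofReal_norm_sq {E : Type*} [NormedAddCommGroup E] (f : Lp E 2 μ) :
    ∫⁻ x, ENNReal.ofReal (‖f x‖ ^ 2) ∂μ = ENNReal.ofReal (‖f‖ ^ 2) := by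
  have eLpNorm_sq : eLpNorm f 2 μ ^ 2 = ∫⁻ x, ‖f x‖ₑ ^ 2 ∂μ := by
    simpa using eLpNorm_nnreal_pow_eq_lintegral (p := 2) (f := f) (μ := μ) two_ne_zero
  rw [Lp.norm_def, ENNReal.ofReal_pow ENNReal.toReal_nonneg,
    ENNReal.ofReal_toReal (Lp.eLpNorm_ne_top f), eLpNorm_sq]
  exact lintegral_congr fun x => by rw [ENNReal.ofReal_pow (norm_nonneg _), ofReal_norm]

theorem hasSum_norm_inner_sq (b : HilbertBasis K 𝕜 H) (f : H) :
    HasSum (fun k => ‖⟪b k, f⟫_𝕜‖ ^ 2) (‖f‖ ^ 2) := by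
  have parseval := b.hasSum_inner_mul_inner f f
  have summand (k : K) : ⟪f, b k⟫_𝕜 * ⟪b k, f⟫_𝕜 = ((‖⟪b k, f⟫_𝕜‖ ^ 2 : ℝ) : 𝕜) := by
    rw [← inner_conj_symm, RCLike.conj_mul, RCLike.ofReal_pow]
  simp only [summand, inner_self_eq_norm_sq_to_K] at parseval
  exact_mod_cast parseval

theorem ofReal_norm_sq_eq_tsum (b : HilbertBasis K 𝕜 H) (f : H) :
    ENNReal.ofReal (‖f‖ ^ 2) = ∑' k, ENNReal.ofReal (‖⟪b k, f⟫_𝕜‖ ^ 2) := by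
  have h := hasSum_norm_inner_sq b f
  rw [← h.tsum_eq, ENNReal.ofReal_tsum_of_nonneg (fun _ => by positivity) h.summable]

/-- The part of `f` selected by the spectral weight `w`, namely `∑ k ∈ F, w k ⟪b k, f⟫ b k`. The
finite set `F` of modes makes pointwise evaluation in `L²` unproblematic. -/
noncomputable def spectralCutoff (b : HilbertBasis K 𝕜 H) (F : Finset K) (w : K → ℝ) (f : H) : H :=
  ∑ k ∈ F, ((w k : 𝕜) * ⟪b k, f⟫_𝕜) • b k

theorem inner_sub_spectralCutoff (b : HilbertBasis K 𝕜 H) {F : Finset K} {w : K → ℝ} {f : H}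
    (hF : ∀ k ∉ F, (w k : 𝕜) * ⟪b k, f⟫_𝕜 = 0) (k : K) :
    ⟪b k, f - spectralCutoff b F w f⟫_𝕜 = ((1 - w k : ℝ) : 𝕜) * ⟪b k, f⟫_𝕜 := by
  classical
  have inner_cutoff : ⟪b k, spectralCutoff b F w f⟫_𝕜 = (w k : 𝕜) * ⟪b k, f⟫_𝕜 := by
    simp only [spectralCutoff, inner_sum, inner_smul_right, orthonormal_iff_ite.1 b.orthonormal k,
      mul_ite, mul_one, mul_zero, Finset.sum_ite_eq]
    exact ite_eq_left_iff.2 fun hk => (hF k hk).symm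
  rw [inner_sub_right, inner_cutoff]
  push_cast
  ring

theorem ofReal_norm_sub_spectralCutoff_sq (b : HilbertBasis K 𝕜 H) {F : Finset K} {w : K → ℝ}
    {f : H} (hF : ∀ k ∉ F, (w k : 𝕜) * ⟪b k, f⟫_𝕜 = 0) :
    ENNReal.ofReal (‖f - spectralCutoff b F w f‖ ^ 2) =
      ∑' k, ENNReal.ofReal ((1 - w k) ^ 2 * ‖⟪b k, f⟫_𝕜‖ ^ 2) := by
  rw [ofReal_norm_sq_eq_tsum b]
  refine tsum_congr fun k => ?_
  rw [inner_sub_spectralCutoff b hF, norm_mul, RCLike.norm_ofReal, mul_pow, sq_abs]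

theorem coeFn_spectralCutoff {b : HilbertBasis K 𝕜 (Lp 𝕜 2 μ)} {e : K → X → 𝕜}
    (he : ∀ k, b k =ᵐ[μ] e k) (F : Finset K) (w : K → ℝ) (f : Lp 𝕜 2 μ) :
    (spectralCutoff b F w f : Lp 𝕜 2 μ) =ᵐ[μ] fun x => ∑ k ∈ F, (w k : 𝕜) * ⟪b k, f⟫_𝕜 * e k x := by
  have summand : ∀ᵐ x ∂μ, ∀ k ∈ F,
      (((w k : 𝕜) * ⟪b k, f⟫_𝕜) • b k : Lp 𝕜 2 μ) x = (w k : 𝕜) * ⟪b k, f⟫_𝕜 * e k x := by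
    refine (Filter.eventually_all_finset F).2 fun k _ => ?_
    filter_upwards [Lp.coeFn_smul ((w k : 𝕜) * ⟪b k, f⟫_𝕜) (b k), he k] with x hsmul hbe
    rw [hsmul, Pi.smul_apply, hbe, smul_eq_mul]
  filter_upwards [Lp.coeFn_fun_finsetSum F fun k => ((w k : 𝕜) * ⟪b k, f⟫_𝕜) • b k, summand]
    with x hsum hx
  exact hsum.trans (Finset.sum_congr rfl hx)

/-- With `‖z k‖ = 1`, evaluation of the cutoff at a point is the inner product with a vector of norm
squared `∑ w k ^ 2`. -/
theorem sum_norm_sum_mul_inner_sq_le [Fintype ι] (b : HilbertBasis K 𝕜 H) {U : ι → H}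
    (hU : Orthonormal 𝕜 U) (F : Finset K) (w : K → ℝ) {z : K → 𝕜} (hz : ∀ k, ‖z k‖ = 1) :
    ∑ n, ‖∑ k ∈ F, (w k : 𝕜) * ⟪b k, U n⟫_𝕜 * z k‖ ^ 2 ≤ ∑ k ∈ F, w k ^ 2 := by
  set g : H := ∑ k ∈ F, ((w k : 𝕜) * (starRingEnd 𝕜) (z k)) • b k with hg
  have inner_g (n : ι) : ‖⟪U n, g⟫_𝕜‖ = ‖∑ k ∈ F, (w k : 𝕜) * ⟪b k, U n⟫_𝕜 * z k‖ := by
    rw [← RCLike.norm_conj, hg, inner_sum, map_sum]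
    congr 1
    refine Finset.sum_congr rfl fun k _ => ?_
    rw [inner_smul_right, map_mul, map_mul, inner_conj_symm, RCLike.conj_conj, RCLike.conj_ofReal]
    ring
  have norm_g : ‖g‖ ^ 2 = ∑ k ∈ F, w k ^ 2 := by
    have h := b.orthonormal.inner_sum (fun k => (w k : 𝕜) * (starRingEnd 𝕜) (z k))
      (fun k => (w k : 𝕜) * (starRingEnd 𝕜) (z k)) F
    simp only [RCLike.conj_mul, norm_mul, RCLike.norm_ofReal, RCLike.norm_conj, hz, mul_one,
      ← hg, inner_self_eq_norm_sq_to_K] at h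
    have h' : ‖g‖ ^ 2 = ∑ k ∈ F, |w k| ^ 2 := by exact_mod_cast h
    simpa only [sq_abs] using h'
  calc _ = ∑ n, ‖⟪U n, g⟫_𝕜‖ ^ 2 := by simp only [inner_g]
    _ ≤ ‖g‖ ^ 2 := hU.sum_inner_products_le g
    _ = _ := norm_g

theorem ae_one_sub_mul_sum_norm_sq_le [Fintype ι] {b : HilbertBasis K 𝕜 (Lp 𝕜 2 μ)}
    {e : K → X → 𝕜} (he : ∀ k, b k =ᵐ[μ] e k) (he1 : ∀ k x, ‖e k x‖ = 1) {U : ι → Lp 𝕜 2 μ}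
    (hU : Orthonormal 𝕜 U) (F : Finset K) (w : K → ℝ) {η : X → ℝ} (hη : ∀ x, 0 < η x)
    (hη1 : ∀ x, η x ≤ 1) :
    ∀ᵐ x ∂μ, (1 - η x) * ∑ n, ‖U n x‖ ^ 2 ≤
      ∑ n, ‖(U n - spectralCutoff b F w (U n) : Lp 𝕜 2 μ) x‖ ^ 2 +
        (∑ k ∈ F, w k ^ 2) * (1 / η x - 1) := by
  filter_upwards [ae_all_iff.2 fun n => Lp.coeFn_sub (U n) (spectralCutoff b F w (U n)),
    ae_all_iff.2 fun n => coeFn_spectralCutoff he F w (U n)] with x hsub hcut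
  have bessel := sum_norm_sum_mul_inner_sq_le b hU F w (z := (e · x)) (he1 · x)
  simp only [← hcut] at bessel
  have one_le_inv : 0 ≤ 1 / η x - 1 := sub_nonneg.2 (one_le_one_div (hη x) (hη1 x))
  simp only [hsub, Pi.sub_apply]
  calc (1 - η x) * ∑ n, ‖U n x‖ ^ 2 = ∑ n, (1 - η x) * ‖U n x‖ ^ 2 := Finset.mul_sum ..
    _ ≤ ∑ n, (‖U n x - spectralCutoff b F w (U n) x‖ ^ 2 +
          (1 / η x - 1) * ‖spectralCutoff b F w (U n) x‖ ^ 2) :=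
        Finset.sum_le_sum fun n _ => one_sub_mul_norm_sq_le (hη x) (hη1 x) _ _
    _ = ∑ n, ‖U n x - spectralCutoff b F w (U n) x‖ ^ 2 +
          (∑ n, ‖spectralCutoff b F w (U n) x‖ ^ 2) * (1 / η x - 1) := by
        rw [Finset.sum_add_distrib, ← Finset.mul_sum, mul_comm (1 / η x - 1)]
    _ ≤ _ := by gcongr

theorem lintegral_one_sub_mul_sum_norm_sq_le [Fintype ι] {b : HilbertBasis K 𝕜 (Lp 𝕜 2 μ)}
    {e : K → X → 𝕜} (he : ∀ k, b k =ᵐ[μ] e k) (he1 : ∀ k x, ‖e k x‖ = 1) {U : ι → Lp 𝕜 2 μ}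
    (hU : Orthonormal 𝕜 U) {F : Finset K} {w : K → ℝ}
    (hF : ∀ n, ∀ k ∉ F, (w k : 𝕜) * ⟪b k, U n⟫_𝕜 = 0) {η : X → ℝ} (hη : ∀ x, 0 < η x)
    (hη1 : ∀ x, η x ≤ 1) (hηm : Measurable η) :
    ∫⁻ x, ENNReal.ofReal ((1 - η x) * ∑ n, ‖U n x‖ ^ 2) ∂μ ≤
      ∑ n, ∑' k, ENNReal.ofReal ((1 - w k) ^ 2 * ‖⟪b k, U n⟫_𝕜‖ ^ 2) +
        ENNReal.ofReal (∑ k ∈ F, w k ^ 2) * ∫⁻ x, ENNReal.ofReal (1 / η x - 1) ∂μ := by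
  have cutoff_measurable (n : ι) :
      Measurable fun x => ENNReal.ofReal (‖(U n - spectralCutoff b F w (U n) : Lp 𝕜 2 μ) x‖ ^ 2) :=
    ((Lp.stronglyMeasurable _).measurable.norm.pow_const 2).ennreal_ofReal
  calc _ ≤ ∫⁻ x, (∑ n, ENNReal.ofReal (‖(U n - spectralCutoff b F w (U n) : Lp 𝕜 2 μ) x‖ ^ 2) +
        ENNReal.ofReal (∑ k ∈ F, w k ^ 2) * ENNReal.ofReal (1 / η x - 1)) ∂μ := by
        refine lintegral_mono_ae ?_
        filter_upwards [ae_one_sub_mul_sum_norm_sq_le he he1 hU F w hη hη1] with x hx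
        refine (ENNReal.ofReal_le_ofReal hx).trans (ENNReal.ofReal_add_le.trans_eq ?_)
        rw [ENNReal.ofReal_sum_of_nonneg fun _ _ => by positivity,
          ENNReal.ofReal_mul (Finset.sum_nonneg fun _ _ => by positivity)]
    _ = _ := by
        rw [lintegral_add_right _ (by fun_prop), lintegral_const_mul _ (by fun_prop),
          lintegral_finsetSum _ fun n _ => cutoff_measurable n]
        simp only [lintegral_ofReal_norm_sq, fun n => ofReal_norm_sub_spectralCutoff_sq b (hF n)]

end SpectralCutoff

section CutoffProfile

/-- `w (κ / E)` is the weight with which a mode of kinetic energy `κ` enters the low-energy part at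
energy `E`: it vanishes once `κ / E ≥ a`, and `A κ` bounds the `L²(dE)` cost of the discarded
weight `1 - w (κ / E)`. -/
structure IsCutoffProfile (w : ℝ → ℝ) (a A : ℝ) : Prop where
  measurable : Measurable w
  eq_zero : ∀ u, a ≤ u → w u = 0
  cost_pos : 0 < A
  lintegral_le : ∀ κ, 0 < κ →
    ∫⁻ E in Set.Ioi (0 : ℝ), ENNReal.ofReal ((1 - w (κ / E)) ^ 2) ≤ ENNReal.ofReal (A * κ)

/-- The quadratic cutoff profile `1 - b u + c u²`, cut off at `u = a`. -/
noncomputable def truncatedQuadratic (a b c u : ℝ) : ℝ :=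
  if u < a then 1 - b * u + c * u ^ 2 else 0

/-- The value of `∫ (1 - w (1 / E))² dE` over `E > 0` for the truncated quadratic profile `w`. -/
noncomputable def truncatedQuadraticCost (a b c : ℝ) : ℝ :=
  1 / a + b ^ 2 * a - b * c * a ^ 2 + c ^ 2 * a ^ 3 / 3

theorem truncatedQuadraticCost_pos {a : ℝ} (ha : 0 < a) (b c : ℝ) :
    0 < truncatedQuadraticCost a b c := by
  have sum_of_squares : truncatedQuadraticCost a b c =
      1 / a + a * ((b - c * a / 2) ^ 2 + (c * a) ^ 2 / 12) := by
    rw [truncatedQuadraticCost]; ring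
  rw [sum_of_squares]
  positivity

theorem lintegral_Ioi_div_sub_div_sq {p : ℝ} (hp : 0 < p) (b c : ℝ) :
    ∫⁻ E in Set.Ioi p, ENNReal.ofReal ((b / E - c / E ^ 2) ^ 2) =
      ENNReal.ofReal (b ^ 2 / p - b * c / p ^ 2 + c ^ 2 / (3 * p ^ 3)) := by
  set f : ℝ → ℝ := fun E => -b ^ 2 * E⁻¹ + b * c * E⁻¹ ^ 2 - c ^ 2 / 3 * E⁻¹ ^ 3 with hf
  have hderiv : ∀ E ∈ Set.Ici p, HasDerivAt f ((b / E - c / E ^ 2) ^ 2) E := by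
    intro E hE
    have hE0 : E ≠ 0 := (hp.trans_le hE).ne'
    have hinv := hasDerivAt_inv hE0
    refine (((hinv.const_mul (-b ^ 2)).add ((hinv.pow 2).const_mul (b * c))).sub
      ((hinv.pow 3).const_mul (c ^ 2 / 3))).congr_deriv ?_
    simp only [Nat.add_one_sub_one, pow_one, Nat.cast_ofNat]
    field_simp
    ring
  have hlim : Filter.Tendsto f Filter.atTop (nhds 0) := by
    have hinv := tendsto_inv_atTop_zero (𝕜 := ℝ)
    simpa [hf] using ((hinv.const_mul (-b ^ 2)).add ((hinv.pow 2).const_mul (b * c))).sub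
      ((hinv.pow 3).const_mul (c ^ 2 / 3))
  have hnonneg : ∀ E ∈ Set.Ioi p, 0 ≤ (b / E - c / E ^ 2) ^ 2 := fun E _ => sq_nonneg _
  rw [← ofReal_integral_eq_lintegral_ofReal
      (integrableOn_Ioi_deriv_of_nonneg' hderiv hnonneg hlim) (ae_of_all _ fun E => sq_nonneg _),
    integral_Ioi_of_hasDerivAt_of_nonneg' hderiv hnonneg hlim]
  congr 1
  simp only [hf]
  field_simp
  ring

theorem measurable_truncatedQuadratic (a b c : ℝ) : Measurable (truncatedQuadratic a b c) :=
  Measurable.ite measurableSet_Iio (by fun_prop) measurable_const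

theorem lintegral_one_sub_truncatedQuadratic_sq_le {a : ℝ} (ha : 0 < a) (b c : ℝ) {κ : ℝ}
    (hκ : 0 < κ) :
    ∫⁻ E in Set.Ioi (0 : ℝ), ENNReal.ofReal ((1 - truncatedQuadratic a b c (κ / E)) ^ 2) ≤
      ENNReal.ofReal (truncatedQuadraticCost a b c * κ) := by
  have hp : 0 < κ / a := by positivity
  have below : ∫⁻ E in Set.Ioc 0 (κ / a),
      ENNReal.ofReal ((1 - truncatedQuadratic a b c (κ / E)) ^ 2) = ENNReal.ofReal (κ / a) := by
    rw [setLIntegral_congr_fun (g := fun _ => 1) measurableSet_Ioc]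
    · simp
    · intro E hE
      have : ¬ κ / E < a := not_lt.2 <| (le_div_comm₀ hE.1 ha).1 hE.2
      simp [truncatedQuadratic, this]
  have above : ∫⁻ E in Set.Ioi (κ / a),
      ENNReal.ofReal ((1 - truncatedQuadratic a b c (κ / E)) ^ 2) =
        ENNReal.ofReal ((b * κ) ^ 2 / (κ / a) - b * κ * (c * κ ^ 2) / (κ / a) ^ 2 +
          (c * κ ^ 2) ^ 2 / (3 * (κ / a) ^ 3)) := by
    rw [← lintegral_Ioi_div_sub_div_sq hp]
    refine setLIntegral_congr_fun measurableSet_Ioi fun E hE => ?_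
    have : κ / E < a := (div_lt_comm₀ ha (hp.trans hE)).1 hE
    simp only [truncatedQuadratic, if_pos this]
    congr 1
    ring
  rw [← Set.Ioc_union_Ioi_eq_Ioi hp.le]
  refine (lintegral_union_le _ _ _).trans_eq ?_
  rw [below, above, ← ENNReal.ofReal_add hp.le]
  · congr 1
    simp only [truncatedQuadraticCost]
    field_simp
    ring
  · have sum_of_squares : (b * κ) ^ 2 / (κ / a) - b * κ * (c * κ ^ 2) / (κ / a) ^ 2 +
        (c * κ ^ 2) ^ 2 / (3 * (κ / a) ^ 3) =
        κ * a * ((b - c * a / 2) ^ 2 + (c * a) ^ 2 / 12) := by field_simp; ring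
    rw [sum_of_squares]
    positivity

theorem isCutoffProfile_truncatedQuadratic {a : ℝ} (ha : 0 < a) (b c : ℝ) :
    IsCutoffProfile (truncatedQuadratic a b c) a (truncatedQuadraticCost a b c) where
  measurable := measurable_truncatedQuadratic a b c
  eq_zero _ hu := if_neg hu.not_gt
  cost_pos := truncatedQuadraticCost_pos ha b c
  lintegral_le _ := lintegral_one_sub_truncatedQuadratic_sq_le ha b c

end CutoffProfile

section SplitWeight

/-- The weight `min 1 ((E / M) ^ s)` used to split a function into its low- and high-energy parts
at energy `E`; it is `1`, rather than the junk value of `E / 0`, when `M = 0`. -/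
noncomputable def splitWeight (s M E : ℝ) : ℝ := if E ≤ M then (E / M) ^ s else 1

variable {s M E : ℝ}

theorem splitWeight_pos (hE : 0 < E) : 0 < splitWeight s M E := by
  unfold splitWeight
  split_ifs with h
  · exact rpow_pos_of_pos (div_pos hE (hE.trans_le h)) s
  · exact one_pos

theorem splitWeight_le_one (hs : 0 ≤ s) (hE : 0 ≤ E) : splitWeight s M E ≤ 1 := by
  unfold splitWeight
  split_ifs with h
  · exact rpow_le_one (div_nonneg hE (hE.trans h)) (div_le_one_of_le₀ h (hE.trans h)) hs
  · exact le_rfl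

theorem splitWeight_eq_of_le (hE : 0 ≤ E) (h : E ≤ M) : splitWeight s M E = E ^ s / M ^ s := by
  rw [splitWeight, if_pos h, div_rpow hE (hE.trans h)]

theorem splitWeight_eq_one (h : M < E) : splitWeight s M E = 1 := if_neg h.not_ge

theorem lintegral_Ioi_zero_eq_of_eqOn_Ioc {f g : ℝ → ℝ} (hM : 0 ≤ M)
    (hfg : Set.EqOn f g (Set.Ioc 0 M)) (hf : ∀ E > M, f E = 0) (hf0 : ∀ E ∈ Set.Ioc 0 M, 0 ≤ f E)
    (hg : IntervalIntegrable g volume 0 M) :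
    ∫⁻ E in Set.Ioi (0 : ℝ), ENNReal.ofReal (f E) = ENNReal.ofReal (∫ E in (0 : ℝ)..M, g E) := by
  have tail : ∫⁻ E in Set.Ioi M, ENNReal.ofReal (f E) = 0 := by
    rw [setLIntegral_congr_fun (g := fun _ => 0) measurableSet_Ioi fun E hE => by simp [hf E hE],
      lintegral_zero]
  rw [← Set.Ioc_union_Ioi_eq_Ioi hM, lintegral_union measurableSet_Ioi Set.Ioc_disjoint_Ioi_same,
    tail, add_zero, intervalIntegral.integral_of_le hM, ofReal_integral_eq_lintegral_ofReal]
  · exact setLIntegral_congr_fun measurableSet_Ioc fun E hE => by simp only [hfg hE]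
  · exact (intervalIntegrable_iff_integrableOn_Ioc_of_le hM).1 hg
  · exact ae_restrict_of_forall_mem measurableSet_Ioc fun E hE => hfg hE ▸ hf0 E hE

theorem lintegral_one_sub_splitWeight (hs : 0 < s) (hM : 0 ≤ M) :
    ∫⁻ E in Set.Ioi (0 : ℝ), ENNReal.ofReal (1 - splitWeight s M E) =
      ENNReal.ofReal (M * s / (1 + s)) := by
  have hint : IntervalIntegrable (fun E : ℝ => E ^ s) volume 0 M :=
    intervalIntegral.intervalIntegrable_rpow' (by linarith)
  rw [lintegral_Ioi_zero_eq_of_eqOn_Ioc (g := fun E => 1 - E ^ s / M ^ s) hM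
    (fun E hE => by simp only [splitWeight_eq_of_le hE.1.le hE.2])
    (fun E hE => by rw [splitWeight_eq_one hE, sub_self])
    (fun E hE => sub_nonneg.2 (splitWeight_le_one hs.le hE.1.le))
    (intervalIntegrable_const.sub (hint.div_const _))]
  congr 1
  rw [intervalIntegral.integral_sub intervalIntegrable_const (hint.div_const _),
    intervalIntegral.integral_div, integral_rpow (Or.inl (by linarith)),
    zero_rpow (by linarith), intervalIntegral.integral_const]
  rcases hM.eq_or_lt with rfl | hM
  · simp [zero_rpow (by linarith : s + 1 ≠ 0)]
  · rw [rpow_add_one hM.ne']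
    have := (rpow_pos_of_pos hM s).ne'
    simp only [sub_zero, smul_eq_mul, mul_one]
    field_simp
    ring

theorem lintegral_rpow_mul_inv_splitWeight_sub_one (hs : 0 < s) (hM : 0 ≤ M) :
    ∫⁻ E in Set.Ioi (0 : ℝ), ENNReal.ofReal (E ^ (2 * s) * (1 / splitWeight s M E - 1)) =
      ENNReal.ofReal (M ^ (1 + 2 * s) * (1 / (1 + s) - 1 / (1 + 2 * s))) := by
  have hint : IntervalIntegrable (fun E : ℝ => E ^ s) volume 0 M :=
    intervalIntegral.intervalIntegrable_rpow' (by linarith)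
  have hint_two : IntervalIntegrable (fun E : ℝ => E ^ (2 * s)) volume 0 M :=
    intervalIntegral.intervalIntegrable_rpow' (by linarith)
  have eq_below : ∀ E ∈ Set.Ioc 0 M,
      E ^ (2 * s) * (1 / splitWeight s M E - 1) = M ^ s * E ^ s - E ^ (2 * s) := by
    intro E hE
    have := (rpow_pos_of_pos hE.1 s).ne'
    rw [splitWeight_eq_of_le hE.1.le hE.2, two_mul, rpow_add hE.1]
    field_simp
  rw [lintegral_Ioi_zero_eq_of_eqOn_Ioc hM eq_below
    (fun E hE => by rw [splitWeight_eq_one hE, one_div_one, sub_self, mul_zero])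
    (fun E hE => mul_nonneg (rpow_nonneg hE.1.le _) (sub_nonneg.2
      (one_le_one_div (splitWeight_pos hE.1) (splitWeight_le_one hs.le hE.1.le))))
    ((hint.const_mul _).sub hint_two)]
  congr 1
  rw [intervalIntegral.integral_sub (hint.const_mul _) hint_two,
    intervalIntegral.integral_const_mul, integral_rpow (Or.inl (by linarith)),
    integral_rpow (Or.inl (by linarith)), zero_rpow (by linarith), zero_rpow (by linarith),
    sub_zero, sub_zero, add_comm (2 * s) 1, add_comm s 1, ← mul_div_assoc,
    ← rpow_add_of_nonneg hM hs.le (by linarith), show s + (1 + s) = 1 + 2 * s by ring]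
  ring

end SplitWeight

section EnergyIntegration

variable {𝕜 K X ι : Type*} [RCLike 𝕜] [MeasurableSpace X] {μ : Measure X}

theorem measurable_splitWeight {M : X → ℝ} (hM : Measurable M) (s : ℝ) :
    Measurable fun p : ℝ × X => splitWeight s (M p.2) p.1 :=
  Measurable.ite (measurableSet_le (by fun_prop) (by fun_prop))
    ((measurable_fst.div (hM.comp measurable_snd)).pow_const s) measurable_const

theorem lintegral_lintegral_one_sub_splitWeight_mul [SFinite μ] {s : ℝ} (hs : 0 < s)
    {M ρ : X → ℝ} (hM : Measurable M) (hM0 : ∀ x, 0 ≤ M x) (hρ : Measurable ρ)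
    (hρ0 : ∀ x, 0 ≤ ρ x) :
    ∫⁻ E in Set.Ioi (0 : ℝ), ∫⁻ x, ENNReal.ofReal ((1 - splitWeight s (M x) E) * ρ x) ∂μ =
      ∫⁻ x, ENNReal.ofReal (M x * s / (1 + s) * ρ x) ∂μ := by
  have hη := measurable_splitWeight hM s
  rw [lintegral_lintegral_swap]
  · refine lintegral_congr fun x => ?_
    have hηx : Measurable fun E => splitWeight s (M x) E :=
      hη.comp (measurable_id.prodMk measurable_const)
    simp_rw [ENNReal.ofReal_mul' (hρ0 x)]
    rw [lintegral_mul_const _ (by fun_prop), lintegral_one_sub_splitWeight hs (hM0 x)]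
  · exact ((measurable_const.sub hη).mul (hρ.comp measurable_snd)).ennreal_ofReal.aemeasurable

theorem measurable_rpow_mul_inv_splitWeight_sub_one {M : X → ℝ} (hM : Measurable M) (s : ℝ) :
    Measurable fun p : ℝ × X =>
      ENNReal.ofReal (p.1 ^ (2 * s) * (1 / splitWeight s (M p.2) p.1 - 1)) :=
  ((measurable_fst.pow_const _).mul
    ((measurable_const.div (measurable_splitWeight hM s)).sub measurable_const)).ennreal_ofReal

theorem lintegral_lintegral_rpow_mul_inv_splitWeight_sub_one [SFinite μ] {s : ℝ} (hs : 0 < s)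
    {M : X → ℝ} (hM : Measurable M) (hM0 : ∀ x, 0 ≤ M x) :
    ∫⁻ E in Set.Ioi (0 : ℝ),
        ∫⁻ x, ENNReal.ofReal (E ^ (2 * s) * (1 / splitWeight s (M x) E - 1)) ∂μ =
      ∫⁻ x, ENNReal.ofReal (M x ^ (1 + 2 * s) * (1 / (1 + s) - 1 / (1 + 2 * s))) ∂μ := by
  rw [lintegral_lintegral_swap (measurable_rpow_mul_inv_splitWeight_sub_one hM s).aemeasurable]
  exact lintegral_congr fun x => lintegral_rpow_mul_inv_splitWeight_sub_one hs (hM0 x)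

variable {w : ℝ → ℝ} {a A : ℝ} {κ : K → ℝ} {S : Set K}

theorem lintegral_sum_tsum_high_energy_le [Countable K] [Fintype ι] (hw : IsCutoffProfile w a A)
    (hκ : ∀ k ∈ S, 0 < κ k) {c : ι → K → 𝕜} (hc : ∀ n, ∀ k ∉ S, c n k = 0) :
    ∫⁻ E in Set.Ioi (0 : ℝ),
        ∑ n, ∑' k, ENNReal.ofReal ((1 - w (κ k / E)) ^ 2 * ‖c n k‖ ^ 2) ≤
      ∑ n, ∑' k, ENNReal.ofReal (A * κ k * ‖c n k‖ ^ 2) := by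
  have hmeas (n : ι) (k : K) :
      Measurable fun E => ENNReal.ofReal ((1 - w (κ k / E)) ^ 2 * ‖c n k‖ ^ 2) := by
    have := hw.measurable
    fun_prop
  rw [lintegral_finsetSum _ fun n _ => Measurable.tsum (hmeas n)]
  refine Finset.sum_le_sum fun n _ => ?_
  rw [lintegral_tsum fun k => (hmeas n k).aemeasurable]
  refine ENNReal.tsum_le_tsum fun k => ?_
  by_cases hk : k ∈ S
  · simp_rw [ENNReal.ofReal_mul' (sq_nonneg ‖c n k‖)]
    rw [lintegral_mul_const' _ _ ENNReal.ofReal_ne_top]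
    gcongr
    exact hw.lintegral_le (κ k) (hκ k hk)
  · simp [hc n k hk]

variable [Fintype ι] {b : HilbertBasis K 𝕜 (Lp 𝕜 2 μ)} {e : K → X → 𝕜} {U : ι → Lp 𝕜 2 μ}

theorem lintegral_one_sub_splitWeight_mul_le (he : ∀ k, b k =ᵐ[μ] e k)
    (he1 : ∀ k x, ‖e k x‖ = 1) (hU : Orthonormal 𝕜 U) (hUS : ∀ n, ∀ k ∉ S, ⟪b k, U n⟫_𝕜 = 0)
    (hw : ∀ u, a ≤ u → w u = 0) {E s C : ℝ} (hE : 0 < E) (hs : 0 ≤ s)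
    (hfin : {k ∈ S | κ k < a * E}.Finite)
    (hC : ∀ F : Finset K, ↑F ⊆ S → ∑ k ∈ F, w (κ k / E) ^ 2 ≤ C * E ^ (2 * s))
    {M : X → ℝ} (hM : Measurable M) :
    ∫⁻ x, ENNReal.ofReal ((1 - splitWeight s (M x) E) * ∑ n, ‖U n x‖ ^ 2) ∂μ ≤
      ∑ n, ∑' k, ENNReal.ofReal ((1 - w (κ k / E)) ^ 2 * ‖⟪b k, U n⟫_𝕜‖ ^ 2) +
        ENNReal.ofReal C *
          ∫⁻ x, ENNReal.ofReal (E ^ (2 * s) * (1 / splitWeight s (M x) E - 1)) ∂μ := by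
  have hηm : Measurable fun x => splitWeight s (M x) E :=
    (measurable_splitWeight hM s).comp (measurable_const.prodMk measurable_id)
  have inactive_or_high (n : ι) (k : K) (hk : k ∉ hfin.toFinset) :
      (w (κ k / E) : 𝕜) * ⟪b k, U n⟫_𝕜 = 0 := by
    by_cases hkS : k ∈ S
    · have : a ≤ κ k / E := by
        rw [le_div_iff₀ hE]
        by_contra! hlow
        exact hk (hfin.mem_toFinset.2 ⟨hkS, hlow⟩)
      rw [hw _ this, RCLike.ofReal_zero, zero_mul]
    · rw [hUS n k hkS, mul_zero]
  refine (lintegral_one_sub_mul_sum_norm_sq_le he he1 hU inactive_or_high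
    (fun x => splitWeight_pos hE) (fun x => splitWeight_le_one hs hE.le) hηm).trans ?_
  simp_rw [ENNReal.ofReal_mul (rpow_nonneg hE.le (2 * s))]
  rw [lintegral_const_mul _ (by fun_prop), ← mul_assoc, ← ENNReal.ofReal_mul' (by positivity)]
  gcongr
  exact hC _ fun k hk => (hfin.mem_toFinset.1 hk).1

theorem lintegral_mul_sum_norm_sq_le_kinetic [Countable K] [SFinite μ]
    (he : ∀ k, b k =ᵐ[μ] e k) (he1 : ∀ k x, ‖e k x‖ = 1) (hU : Orthonormal 𝕜 U)
    (hUS : ∀ n, ∀ k ∉ S, ⟪b k, U n⟫_𝕜 = 0) (hw : IsCutoffProfile w a A) (hκ : ∀ k ∈ S, 0 < κ k)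
    {s C : ℝ} (hs : 0 < s) (hfin : ∀ E > 0, {k ∈ S | κ k < a * E}.Finite)
    (hC : ∀ E > 0, ∀ F : Finset K, ↑F ⊆ S → ∑ k ∈ F, w (κ k / E) ^ 2 ≤ C * E ^ (2 * s))
    {M : X → ℝ} (hM : Measurable M) (hM0 : ∀ x, 0 ≤ M x) :
    ∫⁻ x, ENNReal.ofReal (M x * s / (1 + s) * ∑ n, ‖U n x‖ ^ 2) ∂μ ≤
      ∑ n, ∑' k, ENNReal.ofReal (A * κ k * ‖⟪b k, U n⟫_𝕜‖ ^ 2) +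
        ENNReal.ofReal C *
          ∫⁻ x, ENNReal.ofReal (M x ^ (1 + 2 * s) * (1 / (1 + s) - 1 / (1 + 2 * s))) ∂μ := by
  have hρ : Measurable fun x => ∑ n, ‖U n x‖ ^ 2 := Finset.measurable_sum _ fun n _ =>
    (Lp.stronglyMeasurable (U n)).measurable.norm.pow_const 2
  have low_measurable := (measurable_rpow_mul_inv_splitWeight_sub_one hM s).lintegral_prod_right'
    (ν := μ)
  rw [← lintegral_lintegral_one_sub_splitWeight_mul hs hM hM0 hρ fun x =>
      Finset.sum_nonneg fun _ _ => by positivity,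
    ← lintegral_lintegral_rpow_mul_inv_splitWeight_sub_one hs hM hM0]
  refine (setLIntegral_mono' measurableSet_Ioi fun E hE =>
    lintegral_one_sub_splitWeight_mul_le he he1 hU hUS hw.eq_zero hE hs.le (hfin E hE) (hC E hE)
      hM).trans ?_
  rw [lintegral_add_right _ (low_measurable.const_mul _),
    lintegral_const_mul' _ _ ENNReal.ofReal_ne_top]
  gcongr
  exact lintegral_sum_tsum_high_energy_le hw hκ hUS

end EnergyIntegration

section LatticeSum

/-- The Jacobi theta series `∑ exp (-π q n²)` over the integers, for real `q`. -/
noncomputable def theta (q : ℝ) : ℝ := ∑' n : ℤ, exp (-π * q * (n : ℝ) ^ 2)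

theorem exp_neg_mul_nat_sq_le {q : ℝ} (hq : 0 ≤ q) (n : ℕ) :
    exp (-π * q * (n : ℝ) ^ 2) ≤ exp (-π * q) ^ n := by
  have le_sq : (n : ℝ) ≤ (n : ℝ) ^ 2 := mod_cast Nat.le_self_pow two_ne_zero n
  rw [← exp_nat_mul, mul_comm (n : ℝ), neg_mul]
  exact exp_le_exp.2 (mul_le_mul_of_nonpos_left le_sq (neg_nonpos.2 (by positivity)))

theorem exp_neg_pi_mul_lt_one {q : ℝ} (hq : 0 < q) : exp (-π * q) < 1 := by
  rw [exp_lt_one_iff, neg_mul, neg_lt_zero]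
  positivity

theorem summable_exp_neg_mul_nat_sq {q : ℝ} (hq : 0 < q) :
    Summable fun n : ℕ => exp (-π * q * (n : ℝ) ^ 2) :=
  .of_nonneg_of_le (fun _ => (exp_pos _).le) (exp_neg_mul_nat_sq_le hq.le)
    (summable_geometric_of_lt_one (exp_pos _).le (exp_neg_pi_mul_lt_one hq))

theorem summable_exp_neg_mul_int_sq {q : ℝ} (hq : 0 < q) :
    Summable fun n : ℤ => exp (-π * q * (n : ℝ) ^ 2) :=
  .of_nat_of_neg (by simpa using summable_exp_neg_mul_nat_sq hq)
    (by simpa using summable_exp_neg_mul_nat_sq hq)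

theorem theta_le_geometric {q : ℝ} (hq : 0 < q) :
    theta q ≤ 1 + 2 * (exp (-π * q) / (1 - exp (-π * q))) := by
  have hx := exp_neg_pi_mul_lt_one hq
  have hgeom := summable_geometric_of_lt_one (exp_pos (-π * q)).le hx
  have positive_half : ∑' n : ℕ+, exp (-π * q * (((n : ℕ) : ℤ) : ℝ) ^ 2) ≤
      exp (-π * q) / (1 - exp (-π * q)) :=
    calc _ = ∑' n : ℕ, exp (-π * q * (((n + 1 : ℕ) : ℤ) : ℝ) ^ 2) :=
          tsum_pnat_eq_tsum_succ (f := fun n : ℕ => exp (-π * q * ((n : ℤ) : ℝ) ^ 2))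
      _ ≤ ∑' n : ℕ, exp (-π * q) ^ (n + 1) := by
          refine Summable.tsum_le_tsum (fun n => ?_) ?_ ((summable_nat_add_iff 1).2 hgeom)
          · simpa using exp_neg_mul_nat_sq_le hq.le (n + 1)
          · simpa using (summable_nat_add_iff 1).2 (summable_exp_neg_mul_nat_sq hq)
      _ = _ := by
          simp_rw [pow_succ]
          rw [tsum_mul_right, tsum_geometric_of_lt_one (exp_pos _).le hx, inv_mul_eq_div]
  rw [theta, tsum_int_eq_zero_add_two_mul_tsum_pnat (by intro n; simp)
    (summable_exp_neg_mul_int_sq hq)]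
  simp only [Int.cast_zero, ne_eq, OfNat.ofNat_ne_zero, not_false_eq_true, zero_pow, mul_zero,
    exp_zero, nsmul_eq_mul, Nat.cast_ofNat]
  gcongr

theorem theta_anti {p q : ℝ} (hp : 0 < p) (hpq : p ≤ q) : theta q ≤ theta p := by
  refine Summable.tsum_le_tsum (fun n => exp_le_exp.2 ?_)
    (summable_exp_neg_mul_int_sq (hp.trans_le hpq)) (summable_exp_neg_mul_int_sq hp)
  simp only [neg_mul]
  gcongr

theorem one_le_theta {q : ℝ} (hq : 0 < q) : 1 ≤ theta q := by
  simpa [theta] using (summable_exp_neg_mul_int_sq hq).le_tsum 0 fun _ _ => (exp_pos _).le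

theorem theta_eq_inv_sqrt_mul_theta_inv {q : ℝ} (hq : 0 < q) :
    theta q = (√q)⁻¹ * theta q⁻¹ := by
  rw [theta, Real.tsum_exp_neg_mul_int_sq hq, sqrt_eq_rpow, one_div]
  rfl

theorem exp_neg_nat_le_inv_pow (m : ℕ) : exp (-m) ≤ (2.718 ^ m)⁻¹ := by
  rw [exp_neg, ← exp_one_pow]
  gcongr
  linarith [exp_one_gt_d9]

theorem exp_neg_pi_mul_le {r : ℝ} (hr : 1 ≤ r) : exp (-π * r) ≤ 1 / 20 :=
  calc exp (-π * r) ≤ exp (-(3 : ℕ)) := exp_le_exp.2 (by push_cast; nlinarith [pi_gt_three])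
    _ ≤ (2.718 ^ 3)⁻¹ := exp_neg_nat_le_inv_pow 3
    _ ≤ 1 / 20 := by norm_num

theorem theta_sub_one_le {r : ℝ} (hr : 1 ≤ r) : theta r - 1 ≤ 40 / 19 * exp (-π * r) := by
  have hx := exp_neg_pi_mul_le hr
  have : exp (-π * r) / (1 - exp (-π * r)) ≤ 20 / 19 * exp (-π * r) := by
    rw [div_le_iff₀ (by linarith)]
    nlinarith [exp_pos (-π * r)]
  linarith [theta_le_geometric (by linarith : 0 < r)]

theorem theta_le_of_one_le {r : ℝ} (hr : 1 ≤ r) : theta r ≤ 21 / 19 := by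
  linarith [theta_sub_one_le hr, exp_neg_pi_mul_le hr]

theorem pow_mul_exp_neg_mul_le {m : ℕ} (hm : m ≠ 0) {β r : ℝ} (hβ : 0 < β) (hr : 0 ≤ r) :
    r ^ m * exp (-β * r) ≤ (m / β) ^ m * exp (-m) := by
  have tangent : r ≤ m / β * exp (β * r / m - 1) :=
    calc r = m / β * (β * r / m - 1 + 1) := by field_simp; ring
      _ ≤ _ := by gcongr; exact add_one_le_exp _
  calc r ^ m * exp (-β * r) ≤ (m / β * exp (β * r / m - 1)) ^ m * exp (-β * r) := by gcongr
    _ = (m / β) ^ m * exp (-m) := by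
        rw [mul_pow, ← exp_nat_mul, mul_assoc, ← exp_add]
        congr 2
        field_simp
        ring

theorem sqrt_pow_mul_exp_neg_pi_mul_le {d m : ℕ} (hm : m ≠ 0) (hdm : d ≤ 2 * m) {r : ℝ}
    (hr : 1 ≤ r) : √r ^ d * exp (-π * r) ≤ (m / 3) ^ m * (2.718 ^ m)⁻¹ :=
  calc √r ^ d * exp (-π * r) ≤ √r ^ (2 * m) * exp (-3 * r) := by
        gcongr
        · exact one_le_sqrt.2 hr
        · exact pi_gt_three.le
    _ = r ^ m * exp (-3 * r) := by rw [pow_mul, sq_sqrt (by linarith)]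
    _ ≤ (m / 3) ^ m * exp (-m) := pow_mul_exp_neg_mul_le hm three_pos (by linarith)
    _ ≤ _ := by gcongr; exact exp_neg_nat_le_inv_pow m

/-- A constant for which, if `d ≤ 19`, Gaussian sums over `d`-dimensional lattices, with one
coordinate restricted to be nonzero, are at most `latticeConst d` times the corresponding Gaussian
integral. The two cases reflect the growth in `d` of the maximum of `r ^ (d / 2) * exp (-π r)`. -/
noncomputable def latticeConst (d : ℕ) : ℝ := (21 / 19) ^ (d - 1) * (if d ≤ 14 then 1 else 17)

theorem sqrt_pow_mul_theta_tail_le {d : ℕ} (hd : d ≤ 19) {r : ℝ} (hr : 1 ≤ r) :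
    √r ^ d * (40 / 19 * exp (-π * r)) ≤ if d ≤ 14 then 1 else 17 := by
  rw [mul_left_comm]
  split_ifs with hd14
  · have := sqrt_pow_mul_exp_neg_pi_mul_le (d := d) (m := 7) (by norm_num) hd14 hr
    norm_num at this ⊢
    linarith
  · have := sqrt_pow_mul_exp_neg_pi_mul_le (d := d) (m := 10) (by norm_num) (by omega) hr
    norm_num at this ⊢
    linarith

theorem sqrt_mul_theta_sub_one_le {q : ℝ} (hq : 1 ≤ q) : √q * theta q - 1 ≤ √q := by
  have hexp := sqrt_pow_mul_exp_neg_pi_mul_le (d := 1) (m := 1) one_ne_zero (by norm_num) hq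
  have htheta := mul_le_mul_of_nonneg_left (theta_sub_one_le hq) (sqrt_nonneg q)
  norm_num at hexp
  simp only [neg_mul] at htheta
  linarith

theorem sqrt_mul_theta_pow_mul_sub_one_le {d : ℕ} (hd0 : d ≠ 0) (hd : d ≤ 19) {q : ℝ}
    (hq : 0 < q) :
    (√q * theta q) ^ (d - 1) * (√q * theta q - 1) ≤ latticeConst d * √q ^ d := by
  obtain ⟨m, rfl⟩ := Nat.exists_eq_succ_of_ne_zero hd0
  simp only [Nat.succ_eq_add_one, Nat.add_sub_cancel, latticeConst]
  have hsq : 0 < √q := sqrt_pos.2 hq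
  have hθ := one_le_theta hq
  rcases le_total 1 q with hq1 | hq1
  · have one_le_sqrt_q : 1 ≤ √q := one_le_sqrt.2 hq1
    calc _ ≤ (√q * (21 / 19)) ^ m * √q := by
          gcongr
          · exact sub_nonneg.2 (one_le_mul_of_one_le_of_one_le one_le_sqrt_q hθ)
          · exact theta_le_of_one_le hq1
          · exact sqrt_mul_theta_sub_one_le hq1
      _ = (21 / 19) ^ m * 1 * √q ^ (m + 1) := by rw [mul_pow]; ring
      _ ≤ _ := by gcongr; split_ifs <;> norm_num
  · have hr : 1 ≤ q⁻¹ := (one_le_inv₀ hq).2 hq1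
    have one_le_theta_inv := one_le_theta (inv_pos.2 hq)
    have modular : √q * theta q = theta q⁻¹ := by
      rw [theta_eq_inv_sqrt_mul_theta_inv hq, mul_inv_cancel_left₀ hsq.ne']
    rw [modular]
    calc _ ≤ (21 / 19) ^ m * (40 / 19 * exp (-π * q⁻¹)) := by
          gcongr
          · exact theta_le_of_one_le hr
          · exact theta_sub_one_le hr
      _ = (21 / 19) ^ m * (√q⁻¹ ^ (m + 1) * (40 / 19 * exp (-π * q⁻¹))) * √q ^ (m + 1) := by
          rw [sqrt_inv, inv_pow]; field_simp
      _ ≤ _ := by gcongr; exact sqrt_pow_mul_theta_tail_le hd hr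

theorem sum_exp_neg_mul_int_sq_le {α t : ℝ} (hα : 0 < α) (hα1 : α ≤ 1) (ht : 0 < t)
    (F : Finset ℤ) :
    ∑ k ∈ F, exp (-t * (α ^ 2 * (k : ℝ) ^ 2)) ≤ √(π / t) * theta (π / t) / α := by
  have hq : 0 < t * α ^ 2 / π := by positivity
  have inv_sqrt : (√(t * α ^ 2 / π))⁻¹ = √(π / t) / α := by
    rw [← sqrt_inv, inv_div, ← div_div, sqrt_div' _ (by positivity), sqrt_sq hα.le]
  have inv_ge : π / t ≤ (t * α ^ 2 / π)⁻¹ := by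
    rw [inv_div]
    gcongr
    exact mul_le_of_le_one_right ht.le (pow_le_one₀ hα.le hα1)
  calc _ = ∑ k ∈ F, exp (-π * (t * α ^ 2 / π) * (k : ℝ) ^ 2) :=
        Finset.sum_congr rfl fun k _ => by congr 1; field_simp
    _ ≤ theta (t * α ^ 2 / π) :=
        (summable_exp_neg_mul_int_sq hq).sum_le_tsum F fun _ _ => (exp_pos _).le
    _ = √(π / t) / α * theta (t * α ^ 2 / π)⁻¹ := by
        rw [theta_eq_inv_sqrt_mul_theta_inv hq, inv_sqrt]
    _ ≤ √(π / t) / α * theta (π / t) := by gcongr; exact theta_anti (by positivity) inv_ge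
    _ = _ := by ring

theorem sum_exp_neg_mul_int_sq_le_of_zero_notMem {t : ℝ} (ht : 0 < t) {F : Finset ℤ}
    (hF : 0 ∉ F) :
    ∑ k ∈ F, exp (-t * (k : ℝ) ^ 2) ≤ √(π / t) * theta (π / t) - 1 := by
  have h := sum_exp_neg_mul_int_sq_le one_pos le_rfl ht (insert 0 F)
  rw [Finset.sum_insert hF] at h
  simp only [one_pow, one_mul, Int.cast_zero, ne_eq, OfNat.ofNat_ne_zero, not_false_eq_true,
    zero_pow, mul_zero, exp_zero, div_one] at h
  linarith

theorem sum_exp_neg_mul_sum_sq_le_prod {ι : Type*} [Fintype ι] (α : ι → ℝ) (t : ℝ)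
    (F : Finset (ι → ℤ)) :
    ∑ k ∈ F, exp (-t * ∑ i, α i ^ 2 * (k i : ℝ) ^ 2) ≤
      ∏ i, ∑ m ∈ (F.image (· i) : Finset ℤ), exp (-t * (α i ^ 2 * (m : ℝ) ^ 2)) := by
  classical
  have subset_box : F ⊆ Fintype.piFinset fun i => F.image (· i) := fun k hk =>
    Fintype.mem_piFinset.2 fun i => Finset.mem_image_of_mem _ hk
  rw [Finset.prod_univ_sum]
  refine (Finset.sum_le_sum_of_subset_of_nonneg subset_box fun _ _ _ => (exp_pos _).le).trans_eq ?_
  exact Finset.sum_congr rfl fun k _ => by rw [Finset.mul_sum, exp_sum]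

theorem sum_exp_neg_mul_sum_sq_le {d : ℕ} (hd : d ≤ 19) {α : Fin d → ℝ} (hα : ∀ i, 0 < α i)
    (hα1 : ∀ i, α i ≤ 1) {j : Fin d} (hj : α j = 1) {t : ℝ} (ht : 0 < t)
    {F : Finset (Fin d → ℤ)} (hF : ∀ k ∈ F, k j ≠ 0) :
    ∑ k ∈ F, exp (-t * ∑ i, α i ^ 2 * (k i : ℝ) ^ 2) ≤
      latticeConst d * √(π / t) ^ d / ∏ i, α i := by
  set factor : Fin d → ℝ := fun i =>
    ∑ m ∈ (F.image (· i) : Finset ℤ), exp (-t * (α i ^ 2 * (m : ℝ) ^ 2))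
  have factor_nonneg (i : Fin d) : 0 ≤ factor i := Finset.sum_nonneg fun _ _ => (exp_pos _).le
  have factor_le (i : Fin d) : factor i ≤ √(π / t) * theta (π / t) / α i :=
    sum_exp_neg_mul_int_sq_le (hα i) (hα1 i) ht _
  have factor_j_le : factor j ≤ √(π / t) * theta (π / t) - 1 := by
    simp only [factor, hj, one_pow, one_mul]
    exact sum_exp_neg_mul_int_sq_le_of_zero_notMem ht (by simpa using hF)
  have hprod : 0 < ∏ i, α i := Finset.prod_pos fun i _ => hα i
  calc _ ≤ ∏ i, factor i := sum_exp_neg_mul_sum_sq_le_prod α t F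
    _ = factor j * ∏ i ∈ Finset.univ.erase j, factor i :=
        (Finset.mul_prod_erase _ _ (Finset.mem_univ j)).symm
    _ ≤ (√(π / t) * theta (π / t) - 1) *
        ∏ i ∈ Finset.univ.erase j, (√(π / t) * theta (π / t) / α i) :=
        mul_le_mul factor_j_le (Finset.prod_le_prod (fun i _ => factor_nonneg i) fun i _ =>
          factor_le i) (Finset.prod_nonneg fun i _ => factor_nonneg i)
          ((factor_nonneg j).trans factor_j_le)
    _ = (√(π / t) * theta (π / t)) ^ (d - 1) * (√(π / t) * theta (π / t) - 1) / ∏ i, α i := by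
        rw [Finset.prod_div_distrib, Finset.prod_const,
          Finset.card_erase_of_mem (Finset.mem_univ j), Finset.card_univ, Fintype.card_fin,
          ← Finset.mul_prod_erase Finset.univ α (Finset.mem_univ j), hj]
        ring
    _ ≤ _ := div_le_div_of_nonneg_right
        (sqrt_mul_theta_pow_mul_sub_one_le j.pos.ne' hd (div_pos pi_pos ht)) hprod.le

end LatticeSum

section Box

variable {d : ℕ} {E : Type*} [NormedAddCommGroup E]

/-- The box `∏ (0, l i]` with side lengths `l`. -/
def box (l : Fin d → ℝ) : Set (Fin d → ℝ) :=
  Set.univ.pi fun i => Set.Ioc 0 (l i)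

theorem measurableSet_box (l : Fin d → ℝ) : MeasurableSet (box l) :=
  MeasurableSet.univ_pi fun _ => measurableSet_Ioc

theorem integrableOn_box {G : (Fin d → ℝ) → E} (hG : Continuous G) (l : Fin d → ℝ) :
    IntegrableOn G (box l) :=
  (hG.continuousOn.integrableOn_compact (isCompact_univ_pi fun _ => isCompact_Icc)).mono_set
    (Set.pi_mono fun _ _ => Set.Ioc_subset_Icc_self)

variable [NormedSpace ℝ E] {l : Fin d → ℝ} {j : Fin d}

theorem setIntegral_box_eq_zero_of_line {G : (Fin d → ℝ) → E} (hG : Continuous G) (hl : 0 ≤ l j)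
    (hline : ∀ x, ∫ t in (0 : ℝ)..l j, G (Function.update x j t) = 0) :
    ∫ x in box l, G x = 0 := by
  obtain _ | n := d
  · exact j.elim0
  set e : ℝ × (Fin n → ℝ) ≃ᵐ (Fin (n + 1) → ℝ) :=
    (MeasurableEquiv.piFinSuccAbove (fun _ => ℝ) j).symm
  have he : MeasurePreserving e :=
    (volume_preserving_piFinSuccAbove (fun _ : Fin (n + 1) => ℝ) j).symm _
  have e_apply (p : ℝ × (Fin n → ℝ)) : e p = j.insertNth p.1 p.2 := rfl
  have preimage_box : e ⁻¹' box l = Set.Ioc 0 (l j) ×ˢ box fun i => l (j.succAbove i) := by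
    ext p
    simp only [Set.mem_preimage, e_apply, box, Set.mem_univ_pi, Set.mem_prod,
      j.forall_iff_succAbove, Fin.insertNth_apply_same, Fin.insertNth_apply_succAbove]
  have hint := integrableOn_box hG l
  rw [← he.integrableOn_comp_preimage e.measurableEmbedding, preimage_box,
    Measure.volume_eq_prod] at hint
  have inner_eq_zero (y : Fin n → ℝ) :
      ∫ s in Set.Ioc 0 (l j), G (e (Prod.swap (y, s))) = 0 := by
    rw [← intervalIntegral.integral_of_le hl]
    simpa only [e_apply, Prod.swap_prod_mk, Fin.update_insertNth] using hline (j.insertNth 0 y)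
  rw [← he.map_eq, setIntegral_map_equiv, preimage_box, Measure.volume_eq_prod,
    ← setIntegral_prod_swap]
  refine (setIntegral_prod _ hint.swap).trans ?_
  simp only [Function.comp_apply, inner_eq_zero, integral_zero]

theorem setIntegral_box_congr_of_line {F G : (Fin d → ℝ) → E} (hF : Continuous F)
    (hG : Continuous G) (hl : 0 ≤ l j)
    (hline : ∀ x, ∫ t in (0 : ℝ)..l j, F (Function.update x j t) =
      ∫ t in (0 : ℝ)..l j, G (Function.update x j t)) :
    ∫ x in box l, F x = ∫ x in box l, G x := by
  rw [← sub_eq_zero, ← integral_sub (integrableOn_box hF l) (integrableOn_box hG l)]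
  refine setIntegral_box_eq_zero_of_line (hF.sub hG) hl fun x => ?_
  rw [intervalIntegral.integral_sub, hline x, sub_self] <;>
    exact Continuous.intervalIntegrable (by fun_prop) _ _

end Box

section LineAverage

variable {d : ℕ} {j : Fin d} {ψ : (Fin d → ℝ) → ℝ}

/-- The average of `ψ` over `(0, 2π)` in the `j`-th coordinate, i.e. `ψ - projP j ψ`. -/
noncomputable def lineAverage (j : Fin d) (ψ : (Fin d → ℝ) → ℝ) (x : Fin d → ℝ) : ℝ :=
  1 / (2 * π) * ∫ t in (0 : ℝ)..2 * π, ψ (Function.update x j t)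

theorem projP_eq_sub_lineAverage (j : Fin d) (ψ : (Fin d → ℝ) → ℝ) (x : Fin d → ℝ) :
    projP j ψ x = ψ x - lineAverage j ψ x := rfl

theorem continuous_lineAverage (hψ : Continuous ψ) : Continuous (lineAverage j ψ) := by
  refine continuous_const.mul ?_
  refine intervalIntegral.continuous_parametric_intervalIntegral_of_continuous'
    (f := fun x t => ψ (Function.update x j t)) ?_ _ _
  simp only [Function.uncurry_def]
  fun_prop

theorem continuous_projP (hψ : Continuous ψ) : Continuous (projP j ψ) :=
  hψ.sub (continuous_lineAverage hψ)

theorem lineAverage_update (j : Fin d) (ψ : (Fin d → ℝ) → ℝ) (x : Fin d → ℝ) (t : ℝ) :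
    lineAverage j ψ (Function.update x j t) = lineAverage j ψ x := by
  simp only [lineAverage, Function.update_idem]

theorem integral_projP_update (hψ : Continuous ψ) (x : Fin d → ℝ) :
    ∫ t in (0 : ℝ)..2 * π, projP j ψ (Function.update x j t) = 0 := by
  simp only [projP_eq_sub_lineAverage, lineAverage_update]
  rw [intervalIntegral.integral_sub (Continuous.intervalIntegrable (by fun_prop) _ _) (by simp)]
  simp only [intervalIntegral.integral_const, smul_eq_mul, lineAverage]
  field_simp
  ring

end LineAverage

section IntegrationByParts

variable {T : ℝ}

theorem contDiff_one_deriv {E : Type*} [NormedAddCommGroup E] [NormedSpace ℝ E] {f : ℝ → E}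
    (hf : ContDiff ℝ 2 f) : ContDiff ℝ 1 (deriv f) :=
  (contDiff_succ_iff_deriv.1 (by rwa [one_add_one_eq_two])).2.2

theorem periodic_deriv {f : ℝ → ℂ} (hf : Function.Periodic f T) :
    Function.Periodic (deriv f) T := fun t => by
  rw [← deriv_comp_add_const f T t, hf.funext]

theorem integral_mul_deriv_of_periodic {u v : ℝ → ℂ} (hu : ContDiff ℝ 1 u) (hv : ContDiff ℝ 1 v)
    (hu_per : Function.Periodic u T) (hv_per : Function.Periodic v T) :
    ∫ t in (0 : ℝ)..T, u t * deriv v t = -∫ t in (0 : ℝ)..T, deriv u t * v t := by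
  have hasDerivAt {f : ℝ → ℂ} (hf : ContDiff ℝ 1 f) (t : ℝ) : HasDerivAt f (deriv f t) t :=
    (hf.differentiable one_ne_zero t).hasDerivAt
  rw [intervalIntegral.integral_mul_deriv_eq_deriv_mul (fun t _ => hasDerivAt hu t)
    (fun t _ => hasDerivAt hv t) ((hu.continuous_deriv le_rfl).intervalIntegrable _ _)
    ((hv.continuous_deriv le_rfl).intervalIntegrable _ _), hu_per.eq, hv_per.eq]
  ring

theorem integral_mul_deriv_deriv_of_periodic {u v : ℝ → ℂ} (hu : ContDiff ℝ 2 u)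
    (hv : ContDiff ℝ 2 v) (hu_per : Function.Periodic u T) (hv_per : Function.Periodic v T) :
    ∫ t in (0 : ℝ)..T, u t * deriv (deriv v) t = ∫ t in (0 : ℝ)..T, deriv (deriv u) t * v t := by
  rw [integral_mul_deriv_of_periodic (hu.of_le one_le_two) (contDiff_one_deriv hv) hu_per
      (periodic_deriv hv_per),
    integral_mul_deriv_of_periodic (contDiff_one_deriv hu) (hv.of_le one_le_two)
      (periodic_deriv hu_per) hv_per, neg_neg]

end IntegrationByParts

section FourierCoefficients

variable {d : ℕ} {α : Fin d → ℝ} {k : Fin d → ℤ} {j : Fin d}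

/-- A fundamental domain of the torus with periods `2π / α i`. -/
abbrev torusBox (α : Fin d → ℝ) : Set (Fin d → ℝ) :=
  box fun i => 2 * π / α i

/-- Periodicity with period `2π / α i` in the `i`-th variable. -/
def IsTorusPeriodic (α : Fin d → ℝ) (f : (Fin d → ℝ) → ℝ) : Prop :=
  ∀ (i : Fin d) (x : Fin d → ℝ), f (Function.update x i (x i + 2 * π / α i)) = f x

/-- The complex conjugate `exp (-i ∑ i, α i * k i * x i)` of the torus character of frequency
`k`. -/
noncomputable def character (α : Fin d → ℝ) (k : Fin d → ℤ) (x : Fin d → ℝ) : ℂ :=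
  Complex.exp (-((∑ i, α i * k i * x i : ℝ) : ℂ) * Complex.I)

theorem continuous_character (α : Fin d → ℝ) (k : Fin d → ℤ) : Continuous (character α k) := by
  unfold character
  fun_prop

theorem norm_character (α : Fin d → ℝ) (k : Fin d → ℤ) (x : Fin d → ℝ) :
    ‖character α k x‖ = 1 := by
  rw [character, ← Complex.ofReal_neg, Complex.norm_exp_ofReal_mul_I]

/-- The conjugate character `exp (-i a m t)` of a circle of length `2π / a`. -/
noncomputable def circleCharacter (a : ℝ) (m : ℤ) (t : ℝ) : ℂ :=
  Complex.exp (-(a * m : ℂ) * Complex.I * t)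

theorem character_update (α : Fin d → ℝ) (k : Fin d → ℤ) (x : Fin d → ℝ) (j : Fin d) (t : ℝ) :
    character α k (Function.update x j t) =
      character α k (Function.update x j 0) * circleCharacter (α j) (k j) t := by
  have phase_update (s : ℝ) : ∑ i, α i * k i * Function.update x j s i =
      α j * k j * s + ∑ i ∈ Finset.univ.erase j, α i * k i * x i := by
    rw [← Finset.add_sum_erase _ _ (Finset.mem_univ j), Function.update_self]
    congr 1
    refine Finset.sum_congr rfl fun i hi => ?_
    rw [Function.update_of_ne (Finset.ne_of_mem_erase hi)]
  rw [character, character, circleCharacter, phase_update t, phase_update 0, ← Complex.exp_add]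
  push_cast
  ring_nf

theorem contDiff_circleCharacter (a : ℝ) (m : ℤ) {n : WithTop ℕ∞} :
    ContDiff ℝ n (circleCharacter a m) :=
  (contDiff_const.mul Complex.ofRealCLM.contDiff).cexp

theorem periodic_circleCharacter {a : ℝ} (ha : a ≠ 0) (m : ℤ) :
    Function.Periodic (circleCharacter a m) (2 * π / a) := by
  have ha' : (a : ℂ) ≠ 0 := by exact_mod_cast ha
  intro t
  rw [circleCharacter, circleCharacter, Complex.exp_eq_exp_iff_exists_int]
  refine ⟨-m, ?_⟩
  push_cast
  field_simp
  ring

theorem deriv_circleCharacter (a : ℝ) (m : ℤ) :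
    deriv (circleCharacter a m) = fun t => -(a * m : ℂ) * Complex.I * circleCharacter a m t := by
  funext t
  have := ((Complex.ofRealCLM.hasDerivAt (x := t)).const_mul (-(a * m : ℂ) * Complex.I)).cexp.deriv
  rw [Complex.ofRealCLM_apply 1, Complex.ofReal_one, mul_one] at this
  exact this.trans (mul_comm _ _)

theorem deriv_deriv_circleCharacter (a : ℝ) (m : ℤ) :
    deriv (deriv (circleCharacter a m)) = fun t => -(a * m : ℂ) ^ 2 * circleCharacter a m t := by
  funext t
  have differentiable : Differentiable ℝ (circleCharacter a m) :=
    (contDiff_circleCharacter a m).differentiable one_ne_zero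
  rw [deriv_circleCharacter, deriv_const_mul _ (differentiable t), deriv_circleCharacter]
  linear_combination (a * m : ℂ) ^ 2 * circleCharacter a m t * Complex.I_sq

theorem integral_circleCharacter {a : ℝ} (ha : a ≠ 0) {m : ℤ} (hm : m ≠ 0) :
    ∫ t in (0 : ℝ)..2 * π / a, circleCharacter a m t = 0 := by
  have freq_ne_zero : -(a * m : ℂ) * Complex.I ≠ 0 := by
    simp [ha, hm, Complex.I_ne_zero]
  have hper := (periodic_circleCharacter ha m).eq
  simp only [circleCharacter] at hper ⊢
  rw [integral_exp_mul_complex freq_ne_zero, hper, sub_self, zero_div]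

theorem integral_circleCharacter_mul_deriv_deriv {f : ℝ → ℝ} (hf : ContDiff ℝ 2 f) {a : ℝ}
    (ha : a ≠ 0) (m : ℤ) (hper : Function.Periodic f (2 * π / a)) :
    ∫ t in (0 : ℝ)..2 * π / a, circleCharacter a m t * ((deriv (deriv f) t : ℝ) : ℂ) =
      ∫ t in (0 : ℝ)..2 * π / a, -(a * m : ℂ) ^ 2 * (circleCharacter a m t * f t) := by
  have deriv_ofReal {g : ℝ → ℝ} (hg : Differentiable ℝ g) :
      deriv (fun t => (g t : ℂ)) = fun t => ((deriv g t : ℝ) : ℂ) :=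
    funext fun t => (hg t).hasDerivAt.ofReal_comp.deriv
  have parts := integral_mul_deriv_deriv_of_periodic (contDiff_circleCharacter a m)
    (Complex.ofRealCLM.contDiff.comp hf) (periodic_circleCharacter ha m)
    (hper.comp Complex.ofRealCLM)
  simpa only [Function.comp_def, Complex.ofRealCLM_apply,
    deriv_ofReal (hf.differentiable two_ne_zero),
    deriv_ofReal ((contDiff_one_deriv hf).differentiable one_ne_zero), deriv_deriv_circleCharacter,
    mul_assoc] using parts

/-- The unnormalised Fourier coefficient of `f` over one period. -/
noncomputable def boxFourierCoeff (α : Fin d → ℝ) (f : (Fin d → ℝ) → ℝ) (k : Fin d → ℤ) : ℂ :=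
  ∫ x in torusBox α, character α k x * f x

end FourierCoefficients

section Laplacian

variable {d : ℕ} {α : Fin d → ℝ} {φ : (Fin d → ℝ) → ℝ} {i : Fin d}

theorem deriv_comp_update {ψ : (Fin d → ℝ) → ℝ} (hψ : Differentiable ℝ ψ) (x : Fin d → ℝ)
    (i : Fin d) (s : ℝ) :
    deriv (fun t => ψ (Function.update x i t)) s =
      fderiv ℝ ψ (Function.update x i s) (Pi.single i 1) :=
  ((hψ _).hasFDerivAt.comp_hasDerivAt s (hasDerivAt_update x i s)).deriv

theorem continuous_pd2 (hφ : ContDiff ℝ 2 φ) : Continuous (pd2 i φ) := by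
  have partial_contDiff : ContDiff ℝ 1 fun y => fderiv ℝ φ y (Pi.single i 1) :=
    (hφ.fderiv_right (by rw [one_add_one_eq_two])).clm_apply contDiff_const
  have pd2_eq : pd2 i φ = fun x =>
      fderiv ℝ (fun y => fderiv ℝ φ y (Pi.single i 1)) x (Pi.single i 1) := by
    funext x
    simp only [pd2, deriv_comp_update (hφ.differentiable two_ne_zero)]
    rw [deriv_comp_update (partial_contDiff.differentiable one_ne_zero), Function.update_eq_self]
  rw [pd2_eq]
  exact (partial_contDiff.continuous_fderiv one_ne_zero).clm_apply continuous_const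

theorem pd2_update (i : Fin d) (φ : (Fin d → ℝ) → ℝ) (x : Fin d → ℝ) (t : ℝ) :
    pd2 i φ (Function.update x i t) = deriv (deriv fun s => φ (Function.update x i s)) t := by
  simp only [pd2, Function.update_idem, Function.update_self]

theorem boxFourierCoeff_pd2 (hα : 0 < α i) (hφ : ContDiff ℝ 2 φ) (hper : IsTorusPeriodic α φ)
    (k : Fin d → ℤ) :
    boxFourierCoeff α (pd2 i φ) k = -(α i * k i : ℂ) ^ 2 * boxFourierCoeff α φ k := by
  have hchar := continuous_character α k
  have hpd2 := continuous_pd2 hφ (i := i)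
  have hφc := hφ.continuous
  rw [boxFourierCoeff, boxFourierCoeff, ← integral_const_mul]
  refine setIntegral_box_congr_of_line (j := i) (by fun_prop) (by fun_prop) (by positivity)
    fun x => ?_
  have line_parts := integral_circleCharacter_mul_deriv_deriv
    (hφ.comp (contDiff_update 2 x i)) hα.ne' (k i) fun t => by
      simpa only [Function.comp_apply, Function.update_self, Function.update_idem] using
        hper i (Function.update x i t)
  calc _ = ∫ t in (0 : ℝ)..2 * π / α i, character α k (Function.update x i 0) *
        (circleCharacter (α i) (k i) t *
          ((deriv (deriv (φ ∘ Function.update x i)) t : ℝ) : ℂ)) := by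
        refine intervalIntegral.integral_congr fun t _ => ?_
        rw [character_update, pd2_update, mul_assoc]
        rfl
    _ = _ := by
        rw [intervalIntegral.integral_const_mul, line_parts,
          ← intervalIntegral.integral_const_mul]
        refine intervalIntegral.integral_congr fun t _ => ?_
        dsimp only [Function.comp_apply]
        rw [character_update α k x i t]
        ring

/-- The operator `-Δ`. -/
noncomputable def negLaplacian (φ : (Fin d → ℝ) → ℝ) (x : Fin d → ℝ) : ℝ :=
  -∑ i, pd2 i φ x

/-- The eigenvalue of `-Δ` on the character of frequency `k`. -/
def laplaceSymbol (α : Fin d → ℝ) (k : Fin d → ℤ) : ℝ :=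
  ∑ i, α i ^ 2 * (k i : ℝ) ^ 2

theorem continuous_negLaplacian (hφ : ContDiff ℝ 2 φ) : Continuous (negLaplacian φ) :=
  (continuous_finsetSum _ fun _ _ => continuous_pd2 hφ).neg

theorem laplaceSymbol_nonneg (α : Fin d → ℝ) (k : Fin d → ℤ) : 0 ≤ laplaceSymbol α k :=
  Finset.sum_nonneg fun _ _ => by positivity

theorem boxFourierCoeff_negLaplacian (hα : ∀ i, 0 < α i) (hφ : ContDiff ℝ 2 φ)
    (hper : IsTorusPeriodic α φ) (k : Fin d → ℤ) :
    boxFourierCoeff α (negLaplacian φ) k = laplaceSymbol α k * boxFourierCoeff α φ k := by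
  have hint (i : Fin d) :
      IntegrableOn (fun x => character α k x * (pd2 i φ x : ℂ)) (torusBox α) :=
    integrableOn_box ((continuous_character α k).mul
      (Complex.continuous_ofReal.comp (continuous_pd2 hφ))) _
  calc boxFourierCoeff α (negLaplacian φ) k
      = -∑ i, boxFourierCoeff α (pd2 i φ) k := by
        simp only [boxFourierCoeff, negLaplacian]
        rw [← integral_finsetSum _ fun i _ => hint i, ← integral_neg]
        refine integral_congr_ae (Filter.Eventually.of_forall fun x => ?_)
        simp only [Complex.ofReal_neg, Complex.ofReal_sum, Finset.mul_sum, mul_neg]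
    _ = laplaceSymbol α k * boxFourierCoeff α φ k := by
        simp only [boxFourierCoeff_pd2 (hα _) hφ hper, laplaceSymbol, neg_mul,
          Finset.sum_neg_distrib, neg_neg, ← Finset.sum_mul, Complex.ofReal_sum, mul_pow]
        push_cast
        rfl

end Laplacian

section UnitTorus

noncomputable local instance : MeasureSpace UnitAddCircle := ⟨AddCircle.haarAddCircle⟩

local instance : Measure.IsAddHaarMeasure (volume : Measure UnitAddCircle) :=
  inferInstanceAs (Measure.IsAddHaarMeasure AddCircle.haarAddCircle)

local instance : IsProbabilityMeasure (volume : Measure UnitAddCircle) :=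
  inferInstanceAs (IsProbabilityMeasure AddCircle.haarAddCircle)

variable {d : ℕ} {l : Fin d → ℝ}

/-- The bijection from the unit torus onto the box with side lengths `l`, through which functions
on the box are transplanted to Mathlib's `UnitAddTorus`. -/
noncomputable def torusCoord (l : Fin d → ℝ) (θ : UnitAddTorus (Fin d)) (i : Fin d) : ℝ :=
  l i * (AddCircle.equivIoc 1 0 (θ i)).1

theorem measurePreserving_coe_equivIoc :
    MeasurePreserving (fun (θ : UnitAddTorus (Fin d)) i => (AddCircle.equivIoc 1 0 (θ i)).1)
      volume (volume.restrict (box 1)) := by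
  have box_one : {x : Fin d → ℝ | ∀ i, x i ∈ Set.Ioc (0 : ℝ) (0 + 1)} = box 1 := by
    ext x
    simp only [box, Set.mem_univ_pi, zero_add, Pi.one_apply, Set.mem_ofPred_eq]
  rw [← box_one]
  exact (measurePreserving_subtype_coe (MeasurableSet.univ_pi' fun _ => measurableSet_Ioc)).comp
    (UnitAddTorus.measurePreserving_equivPiIoc fun _ => 0)

theorem preimage_mul_box (hl : ∀ i, 0 < l i) : (fun x => l * x) ⁻¹' box l = box 1 := by
  ext x
  simp only [Set.mem_preimage, box, Set.mem_univ_pi, Pi.mul_apply, Pi.one_apply, Set.mem_Ioc,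
    mul_pos_iff_of_pos_left (hl _), mul_le_iff_le_one_right (hl _)]

theorem map_mul_volume_restrict_box (hl : ∀ i, 0 < l i) :
    Measure.map (fun x => l * x) (volume.restrict (box 1)) =
      ENNReal.ofReal (∏ i, l i)⁻¹ • volume.restrict (box l) := by
  have prod_pos : 0 < ∏ i, l i := Finset.prod_pos fun i _ => hl i
  have diagonal_apply : ⇑(Matrix.toLin' (Matrix.diagonal l)) = fun x => l * x := by
    ext x i
    rw [Matrix.toLin'_apply, Matrix.mulVec_diagonal, Pi.mul_apply]
  have map_volume := Real.map_matrix_volume_pi_eq_smul_volume_pi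
    (M := Matrix.diagonal l) (by rw [Matrix.det_diagonal]; exact prod_pos.ne')
  rw [diagonal_apply, Matrix.det_diagonal, abs_of_pos (inv_pos.2 prod_pos)] at map_volume
  rw [← preimage_mul_box hl, ← Measure.restrict_map (by fun_prop) (measurableSet_box l),
    map_volume, Measure.restrict_smul]

theorem measurable_torusCoord (l : Fin d → ℝ) : Measurable (torusCoord l) :=
  measurePreserving_coe_equivIoc.measurable.const_mul l

theorem map_torusCoord (hl : ∀ i, 0 < l i) :
    Measure.map (torusCoord l) volume =
      ENNReal.ofReal (∏ i, l i)⁻¹ • volume.restrict (box l) := by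
  rw [← map_mul_volume_restrict_box hl, ← measurePreserving_coe_equivIoc.map_eq,
    Measure.map_map (by fun_prop) measurePreserving_coe_equivIoc.measurable]
  rfl

theorem integral_comp_torusCoord (hl : ∀ i, 0 < l i) {E : Type*} [NormedAddCommGroup E]
    [NormedSpace ℝ E] {F : (Fin d → ℝ) → E} (hF : Continuous F) :
    ∫ θ, F (torusCoord l θ) = (∏ i, l i)⁻¹ • ∫ x in box l, F x := by
  have prod_pos : 0 < ∏ i, l i := Finset.prod_pos fun i _ => hl i
  rw [← integral_map (measurable_torusCoord l).aemeasurable, map_torusCoord hl,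
    integral_smul_measure, ENNReal.toReal_ofReal (inv_pos.2 prod_pos).le]
  rw [map_torusCoord hl]
  exact (integrableOn_box hF l).aestronglyMeasurable.smul_measure _

theorem lintegral_ofReal_comp_torusCoord (hl : ∀ i, 0 < l i) {F : (Fin d → ℝ) → ℝ}
    (hF : Continuous F) (hF0 : ∀ x, 0 ≤ F x) :
    ∫⁻ θ, ENNReal.ofReal (F (torusCoord l θ)) =
      ENNReal.ofReal ((∏ i, l i)⁻¹ * ∫ x in box l, F x) := by
  have prod_pos : 0 < ∏ i, l i := Finset.prod_pos fun i _ => hl i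
  rw [← lintegral_map (f := fun x => ENNReal.ofReal (F x)) (by fun_prop)
      (measurable_torusCoord l),
    map_torusCoord hl, lintegral_smul_measure, ENNReal.ofReal_mul (inv_pos.2 prod_pos).le,
    ofReal_integral_eq_lintegral_ofReal (integrableOn_box hF l) (Filter.Eventually.of_forall hF0),
    smul_eq_mul]

theorem torusCoord_mem_uIcc (l : Fin d → ℝ) (θ : UnitAddTorus (Fin d)) :
    torusCoord l θ ∈ Set.univ.pi fun i => Set.uIcc 0 (l i) := by
  intro i _
  obtain ⟨h0, h1⟩ := (AddCircle.equivIoc 1 0 (θ i)).2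
  have := Set.mem_image_of_mem (l i * ·)
    (Set.Icc_subset_uIcc ⟨h0.le, h1.trans_eq (zero_add 1)⟩)
  rwa [Set.image_const_mul_uIcc, mul_zero, mul_one] at this

theorem conj_mFourier {α : Fin d → ℝ} (hα : ∀ i, α i ≠ 0) (k : Fin d → ℤ)
    (θ : UnitAddTorus (Fin d)) :
    starRingEnd ℂ (UnitAddTorus.mFourier k θ) =
      character α k (torusCoord (fun i => 2 * π / α i) θ) := by
  have factor_eq (i : Fin d) : fourier ((-k) i) (θ i) = Complex.exp
      (-((α i * k i * torusCoord (fun i => 2 * π / α i) θ i : ℝ) : ℂ) * Complex.I) := by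
    have hαi : (α i : ℂ) ≠ 0 := by exact_mod_cast hα i
    have coe_equivIoc : (((AddCircle.equivIoc 1 0 (θ i)).1 : ℝ) : UnitAddCircle) = θ i :=
      (AddCircle.equivIoc (1 : ℝ) 0).symm_apply_apply (θ i)
    rw [← coe_equivIoc, fourier_coe_apply, torusCoord, Pi.neg_apply]
    congr 1
    push_cast
    field_simp
  rw [← UnitAddTorus.mFourier_neg, UnitAddTorus.mFourier, ContinuousMap.coe_mk,
    Finset.prod_congr rfl fun i _ => factor_eq i, ← Complex.exp_sum, character]
  push_cast
  rw [← Finset.sum_mul, Finset.sum_neg_distrib]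

theorem norm_mFourier (k : Fin d → ℤ) (θ : UnitAddTorus (Fin d)) :
    ‖UnitAddTorus.mFourier k θ‖ = 1 := by
  rw [← RCLike.norm_conj, conj_mFourier (α := 1) fun _ => one_ne_zero, norm_character]

/-- The transplant of `f` to the unit torus; the factor makes it unitary from `L²(box l)`. -/
noncomputable def toTorus (l : Fin d → ℝ) (f : (Fin d → ℝ) → ℝ) (θ : UnitAddTorus (Fin d)) : ℂ :=
  (√(∏ i, l i) * f (torusCoord l θ) : ℝ)

theorem memLp_toTorus (l : Fin d → ℝ) {f : (Fin d → ℝ) → ℝ} (hf : Continuous f) :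
    MemLp (toTorus l f) 2 := by
  obtain ⟨B, hB⟩ := (isCompact_univ_pi fun i => isCompact_uIcc (a := 0) (b := l i))
    |>.exists_bound_of_continuousOn hf.continuousOn
  have hmeas : Measurable (toTorus l f) := Complex.measurable_ofReal.comp
    ((hf.measurable.comp (measurable_torusCoord l)).const_mul _)
  refine MemLp.of_bound hmeas.aestronglyMeasurable (√(∏ i, l i) * B)
    (Filter.Eventually.of_forall fun θ => ?_)
  rw [toTorus, Complex.norm_real, norm_mul, norm_of_nonneg (sqrt_nonneg _)]
  gcongr
  exact hB _ (torusCoord_mem_uIcc l θ)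

/-- `toTorus l f` as an element of `L²` of the unit torus. -/
noncomputable def toTorusL2 (l : Fin d → ℝ) {f : (Fin d → ℝ) → ℝ} (hf : Continuous f) :
    Lp ℂ 2 (volume : Measure (UnitAddTorus (Fin d))) :=
  (memLp_toTorus l hf).toLp _

theorem coeFn_toTorusL2 (l : Fin d → ℝ) {f : (Fin d → ℝ) → ℝ} (hf : Continuous f) :
    toTorusL2 l hf =ᵐ[volume] toTorus l f :=
  MemLp.coeFn_toLp _

theorem inner_toTorusL2 (hl : ∀ i, 0 < l i) {f g : (Fin d → ℝ) → ℝ} (hf : Continuous f)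
    (hg : Continuous g) :
    ⟪toTorusL2 l hf, toTorusL2 l hg⟫_ℂ = ((∫ x in box l, f x * g x : ℝ) : ℂ) := by
  have prod_pos : 0 < ∏ i, l i := Finset.prod_pos fun i _ => hl i
  have inner_ae : ∀ᵐ θ : UnitAddTorus (Fin d), ⟪toTorusL2 l hf θ, toTorusL2 l hg θ⟫_ℂ =
      (((∏ i, l i) * (f (torusCoord l θ) * g (torusCoord l θ)) : ℝ) : ℂ) := by
    filter_upwards [coeFn_toTorusL2 l hf, coeFn_toTorusL2 l hg] with θ hθf hθg
    rw [hθf, hθg, toTorus, toTorus, RCLike.inner_apply, Complex.conj_ofReal, ← Complex.ofReal_mul]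
    congr 1
    linear_combination f (torusCoord l θ) * g (torusCoord l θ) * mul_self_sqrt prod_pos.le
  rw [L2.inner_def, integral_congr_ae inner_ae, integral_complex_ofReal,
    integral_comp_torusCoord hl (F := fun x => (∏ i, l i) * (f x * g x)) (by fun_prop),
    integral_const_mul, smul_eq_mul, inv_mul_cancel_left₀ prod_pos.ne']

variable {α : Fin d → ℝ}

theorem inner_mFourierBasis_toTorusL2 (hα : ∀ i, 0 < α i) {f : (Fin d → ℝ) → ℝ}
    (hf : Continuous f) (k : Fin d → ℤ) :
    ⟪UnitAddTorus.mFourierBasis k, toTorusL2 (fun i => 2 * π / α i) hf⟫_ℂ =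
      (√(∏ i, 2 * π / α i) * (∏ i, 2 * π / α i)⁻¹ : ℝ) * boxFourierCoeff α f k := by
  have hchar := continuous_character α k
  have inner_ae : ∀ᵐ θ : UnitAddTorus (Fin d),
      ⟪UnitAddTorus.mFourierLp 2 k θ, toTorusL2 (fun i => 2 * π / α i) hf θ⟫_ℂ =
        (fun x => (√(∏ i, 2 * π / α i) : ℂ) * (character α k x * f x))
          (torusCoord (fun i => 2 * π / α i) θ) := by
    filter_upwards [coeFn_toTorusL2 _ hf, UnitAddTorus.coeFn_mFourierLp 2 k] with θ hθf hθk
    rw [hθf, hθk, toTorus, RCLike.inner_apply, conj_mFourier fun i => (hα i).ne']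
    push_cast
    ring
  rw [L2.inner_def, UnitAddTorus.coe_mFourierBasis, integral_congr_ae inner_ae,
    integral_comp_torusCoord (fun i => div_pos two_pi_pos (hα i))
      (F := fun x => (√(∏ i, 2 * π / α i) : ℂ) * (character α k x * f x)) (by fun_prop),
    integral_const_mul, Complex.real_smul, boxFourierCoeff]
  push_cast
  ring

theorem integral_mul_self_eq_zero_of_boxFourierCoeff_eq_zero (hα : ∀ i, 0 < α i)
    {f : (Fin d → ℝ) → ℝ} (hf : Continuous f) (h : ∀ k, boxFourierCoeff α f k = 0) :
    ∫ x in torusBox α, f x * f x = 0 := by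
  have toTorusL2_eq_zero : toTorusL2 (fun i => 2 * π / α i) hf = 0 := by
    rw [← UnitAddTorus.mFourierBasis.repr.map_eq_zero_iff]
    ext k
    rw [HilbertBasis.repr_apply_apply, inner_mFourierBasis_toTorusL2 hα, h k, mul_zero]
    rfl
  have inner_self := inner_toTorusL2 (fun i => div_pos two_pi_pos (hα i)) hf hf
  rw [toTorusL2_eq_zero, inner_zero_left] at inner_self
  exact_mod_cast inner_self.symm

theorem hasSum_laplaceSymbol_mul_norm_inner_sq (hα : ∀ i, 0 < α i) {φ : (Fin d → ℝ) → ℝ}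
    (hφ : ContDiff ℝ 2 φ) (hper : IsTorusPeriodic α φ) :
    HasSum (fun k => laplaceSymbol α k *
        ‖⟪UnitAddTorus.mFourierBasis k, toTorusL2 (fun i => 2 * π / α i) hφ.continuous⟫_ℂ‖ ^ 2)
      (∫ x in torusBox α, φ x * negLaplacian φ x) := by
  set u := toTorusL2 (fun i => 2 * π / α i) hφ.continuous
  set v := toTorusL2 (fun i => 2 * π / α i) (continuous_negLaplacian hφ)
  have inner_v (k : Fin d → ℤ) : ⟪UnitAddTorus.mFourierBasis k, v⟫_ℂ =
      laplaceSymbol α k * ⟪UnitAddTorus.mFourierBasis k, u⟫_ℂ := by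
    rw [inner_mFourierBasis_toTorusL2 hα, inner_mFourierBasis_toTorusL2 hα,
      boxFourierCoeff_negLaplacian hα hφ hper]
    ring
  have parseval := UnitAddTorus.mFourierBasis.hasSum_inner_mul_inner u v
  rw [inner_toTorusL2 fun i => div_pos two_pi_pos (hα i)] at parseval
  rw [← Complex.hasSum_ofReal]
  refine parseval.congr_fun fun k => ?_
  rw [inner_v, ← inner_conj_symm u, mul_left_comm, Complex.conj_mul']
  push_cast
  rfl

theorem integral_mul_negLaplacian_nonneg (hα : ∀ i, 0 < α i) {φ : (Fin d → ℝ) → ℝ}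
    (hφ : ContDiff ℝ 2 φ) (hper : IsTorusPeriodic α φ) :
    0 ≤ ∫ x in torusBox α, φ x * negLaplacian φ x :=
  (hasSum_laplaceSymbol_mul_norm_inner_sq hα hφ hper).nonneg fun k =>
    mul_nonneg (laplaceSymbol_nonneg α k) (sq_nonneg _)

theorem tsum_ofReal_mul_laplaceSymbol_mul_norm_inner_sq (hα : ∀ i, 0 < α i)
    {φ : (Fin d → ℝ) → ℝ} (hφ : ContDiff ℝ 2 φ) (hper : IsTorusPeriodic α φ) {A : ℝ}
    (hA : 0 ≤ A) :
    ∑' k, ENNReal.ofReal (A * laplaceSymbol α k *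
        ‖⟪UnitAddTorus.mFourierBasis k, toTorusL2 (fun i => 2 * π / α i) hφ.continuous⟫_ℂ‖ ^ 2) =
      ENNReal.ofReal (A * ∫ x in torusBox α, φ x * negLaplacian φ x) := by
  have hsum := (hasSum_laplaceSymbol_mul_norm_inner_sq hα hφ hper).mul_left A
  simp only [← mul_assoc] at hsum
  rw [← hsum.tsum_eq, ENNReal.ofReal_tsum_of_nonneg _ hsum.summable]
  exact fun k => mul_nonneg (mul_nonneg hA (laplaceSymbol_nonneg α k)) (sq_nonneg _)

section

variable {ι : Type*} {φ : ι → (Fin d → ℝ) → ℝ} {W : (Fin d → ℝ) → ℝ} {A s : ℝ}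

theorem orthonormal_toTorusL2 [DecidableEq ι] (hl : ∀ i, 0 < l i)
    (hφ : ∀ n, Continuous (φ n))
    (hortho : ∀ n m, ∫ x in box l, φ n x * φ m x = if n = m then 1 else 0) :
    Orthonormal ℂ fun n => toTorusL2 l (hφ n) :=
  orthonormal_iff_ite.2 fun n m => by
    rw [inner_toTorusL2 hl, hortho]
    split_ifs <;> simp

variable [Fintype ι]

theorem lintegral_mul_sum_norm_sq_toTorusL2 (hl : ∀ i, 0 < l i) (hφ : ∀ n, Continuous (φ n))
    (hW : Continuous W) (hW0 : ∀ x, 0 ≤ W x) (hA : 0 ≤ A) :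
    ∫⁻ θ, ENNReal.ofReal (A * W (torusCoord l θ) * ∑ n, ‖toTorusL2 l (hφ n) θ‖ ^ 2) =
      ENNReal.ofReal (A * ∑ n, ∫ x in box l, W x * φ n x ^ 2) := by
  have prod_pos : 0 < ∏ i, l i := Finset.prod_pos fun i _ => hl i
  have coe_ae : ∀ᵐ θ : UnitAddTorus (Fin d), ∀ n, toTorusL2 l (hφ n) θ = toTorus l (φ n) θ :=
    ae_all_iff.2 fun n => coeFn_toTorusL2 l (hφ n)
  calc _ = ∫⁻ θ, ENNReal.ofReal ((fun x => (∏ i, l i) * (A * ∑ n, W x * φ n x ^ 2))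
          (torusCoord l θ)) := by
        refine lintegral_congr_ae (coe_ae.mono fun θ hθ => ?_)
        simp only [hθ, toTorus, Complex.norm_real, norm_eq_abs, sq_abs, mul_pow,
          sq_sqrt prod_pos.le, ← Finset.mul_sum]
        ring_nf
    _ = _ := by
        rw [lintegral_ofReal_comp_torusCoord hl
            (F := fun x => (∏ i, l i) * (A * ∑ n, W x * φ n x ^ 2)) (by fun_prop)
            fun x => mul_nonneg prod_pos.le (mul_nonneg hA
              (Finset.sum_nonneg fun n _ => mul_nonneg (hW0 x) (sq_nonneg _))),
          integral_const_mul, inv_mul_cancel_left₀ prod_pos.ne', integral_const_mul,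
          integral_finsetSum]
        exact fun n _ => integrableOn_box (hW.mul ((hφ n).pow 2)) l

/-- The constant of the potential term in `sum_integral_mul_sq_le_kinetic`; it arises from the
choice `M = A * W * (1 + s) / s` in `lintegral_mul_sum_norm_sq_le_kinetic`. -/
noncomputable def kineticConst (A s : ℝ) : ℝ :=
  A ^ (2 * s) * ((1 + s) / s) ^ (1 + 2 * s) * (1 / (1 + s) - 1 / (1 + 2 * s))

theorem one_div_sub_one_div_nonneg (hs : 0 ≤ s) : 0 ≤ 1 / (1 + s) - 1 / (1 + 2 * s) :=
  sub_nonneg.2 (one_div_le_one_div_of_le (by positivity) (by linarith))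

theorem kineticConst_nonneg (hA : 0 ≤ A) (hs : 0 ≤ s) : 0 ≤ kineticConst A s :=
  mul_nonneg (by positivity) (one_div_sub_one_div_nonneg hs)

theorem lintegral_rpow_comp_torusCoord (hl : ∀ i, 0 < l i) (hW : Continuous W)
    (hW0 : ∀ x, 0 ≤ W x) (hA : 0 < A) (hs : 0 < s) :
    ∫⁻ θ, ENNReal.ofReal ((A * W (torusCoord l θ) * ((1 + s) / s)) ^ (1 + 2 * s) *
        (1 / (1 + s) - 1 / (1 + 2 * s))) =
      ENNReal.ofReal ((∏ i, l i)⁻¹ *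
        (A * kineticConst A s * ∫ x in box l, W x ^ (1 + 2 * s))) := by
  have integrand_eq (x : Fin d → ℝ) : (A * W x * ((1 + s) / s)) ^ (1 + 2 * s) *
      (1 / (1 + s) - 1 / (1 + 2 * s)) = A * kineticConst A s * W x ^ (1 + 2 * s) := by
    rw [mul_rpow (mul_nonneg hA.le (hW0 x)) (by positivity), mul_rpow hA.le (hW0 x),
      rpow_add hA, rpow_one, kineticConst]
    ring
  simp only [integrand_eq]
  rw [lintegral_ofReal_comp_torusCoord hl (F := fun x => A * kineticConst A s * W x ^ (1 + 2 * s))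
      (continuous_const.mul (hW.rpow_const fun x => Or.inr (by positivity))) fun x =>
        mul_nonneg (mul_nonneg hA.le (kineticConst_nonneg hA.le hs.le)) (rpow_nonneg (hW0 x) _),
    integral_const_mul]

theorem sum_integral_mul_sq_le_kinetic [DecidableEq ι] (hα : ∀ i, 0 < α i)
    (hφ : ∀ n, ContDiff ℝ 2 (φ n)) (hper : ∀ n, IsTorusPeriodic α (φ n))
    (hortho : ∀ n m, ∫ x in torusBox α, φ n x * φ m x = if n = m then 1 else 0)
    {S : Set (Fin d → ℤ)} (hS : ∀ k ∈ S, 0 < laplaceSymbol α k)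
    (hφS : ∀ n, ∀ k ∉ S, boxFourierCoeff α (φ n) k = 0) {w : ℝ → ℝ} {a : ℝ}
    (hw : IsCutoffProfile w a A) {C : ℝ} (hs : 0 < s)
    (hfin : ∀ E > 0, {k ∈ S | laplaceSymbol α k < a * E}.Finite)
    (hC : ∀ E > 0, ∀ F : Finset (Fin d → ℤ), ↑F ⊆ S →
      ∑ k ∈ F, w (laplaceSymbol α k / E) ^ 2 ≤ C * E ^ (2 * s))
    (hW : Continuous W) (hW0 : ∀ x, 0 ≤ W x) :
    ∑ n, ∫ x in torusBox α, W x * φ n x ^ 2 ≤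
      (∑ n, ∫ x in torusBox α, φ n x * negLaplacian (φ n) x) +
        C * (∏ i, 2 * π / α i)⁻¹ * kineticConst A s *
          ∫ x in torusBox α, W x ^ (1 + 2 * s) := by
  have hl (i : Fin d) : 0 < 2 * π / α i := div_pos two_pi_pos (hα i)
  set U : ι → Lp ℂ 2 (volume : Measure (UnitAddTorus (Fin d))) :=
    fun n => toTorusL2 (fun i => 2 * π / α i) (hφ n).continuous
  have hU : Orthonormal ℂ U := orthonormal_toTorusL2 hl _ hortho
  have hUS (n : ι) (k : Fin d → ℤ) (hk : k ∉ S) : ⟪UnitAddTorus.mFourierBasis k, U n⟫_ℂ = 0 := by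
    rw [inner_mFourierBasis_toTorusL2 hα, hφS n k hk, mul_zero]
  have bound := lintegral_mul_sum_norm_sq_le_kinetic
    (fun k => by
      rw [UnitAddTorus.coe_mFourierBasis]
      exact UnitAddTorus.coeFn_mFourierLp 2 k)
    norm_mFourier hU hUS hw hS hs hfin hC
    (M := fun θ => A * W (torusCoord (fun i => 2 * π / α i) θ) * ((1 + s) / s))
    (((hW.measurable.comp (measurable_torusCoord _)).const_mul A).mul_const _)
    (fun θ => mul_nonneg (mul_nonneg hw.cost_pos.le (hW0 _)) (by positivity))
  have cancel (c : ℝ) : c * ((1 + s) / s) * s / (1 + s) = c := by field_simp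
  have kinetic_nonneg : 0 ≤ A * ∑ n, ∫ x in torusBox α, φ n x * negLaplacian (φ n) x :=
    mul_nonneg hw.cost_pos.le (Finset.sum_nonneg fun n _ =>
      integral_mul_negLaplacian_nonneg hα (hφ n) (hper n))
  have hC0 : 0 ≤ C := by simpa using hC 1 one_pos ∅ (by simp)
  have potential_nonneg : 0 ≤ (∏ i, 2 * π / α i)⁻¹ *
      (A * kineticConst A s * ∫ x in torusBox α, W x ^ (1 + 2 * s)) :=
    mul_nonneg (inv_nonneg.2 (Finset.prod_nonneg fun i _ => (hl i).le))
      (mul_nonneg (mul_nonneg hw.cost_pos.le (kineticConst_nonneg hw.cost_pos.le hs.le))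
        (integral_nonneg fun x => rpow_nonneg (hW0 x) _))
  simp only [cancel, U, tsum_ofReal_mul_laplaceSymbol_mul_norm_inner_sq hα (hφ _) (hper _)
    hw.cost_pos.le] at bound
  rw [lintegral_mul_sum_norm_sq_toTorusL2 hl (fun n => (hφ n).continuous) hW hW0 hw.cost_pos.le,
    lintegral_rpow_comp_torusCoord hl hW hW0 hw.cost_pos hs,
    ← ENNReal.ofReal_sum_of_nonneg fun n _ => mul_nonneg hw.cost_pos.le
      (integral_mul_negLaplacian_nonneg hα (hφ n) (hper n)), ← Finset.mul_sum,
    ← ENNReal.ofReal_mul hC0, ← ENNReal.ofReal_add kinetic_nonneg (mul_nonneg hC0 potential_nonneg),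
    ENNReal.ofReal_le_ofReal_iff (add_nonneg kinetic_nonneg (mul_nonneg hC0 potential_nonneg))]
    at bound
  refine le_of_mul_le_mul_left (bound.trans_eq ?_) hw.cost_pos
  ring

end

end UnitTorus

section BoundState

variable {d : ℕ} {α : Fin d → ℝ} {j : Fin d} {k : Fin d → ℤ} {V φ : (Fin d → ℝ) → ℝ} {lam : ℝ}

theorem boxFourierCoeff_sub {f g : (Fin d → ℝ) → ℝ} (hf : Continuous f) (hg : Continuous g)
    (k : Fin d → ℤ) :
    boxFourierCoeff α (fun x => f x - g x) k =
      boxFourierCoeff α f k - boxFourierCoeff α g k := by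
  have hchar := continuous_character α k
  simp only [boxFourierCoeff, Complex.ofReal_sub, mul_sub]
  exact integral_sub (integrableOn_box (by fun_prop) _) (integrableOn_box (by fun_prop) _)

theorem boxFourierCoeff_const_mul (c : ℝ) (f : (Fin d → ℝ) → ℝ) (k : Fin d → ℤ) :
    boxFourierCoeff α (fun x => c * f x) k = c * boxFourierCoeff α f k := by
  simp only [boxFourierCoeff, Complex.ofReal_mul, mul_left_comm (character α k _)]
  exact integral_const_mul _ _

theorem boxFourierCoeff_projP_eq_zero (hj : α j = 1) (hk : k j = 0) (hφ : Continuous φ) :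
    boxFourierCoeff α (projP j φ) k = 0 := by
  have hchar := continuous_character α k
  have hproj := continuous_projP (j := j) hφ
  refine setIntegral_box_eq_zero_of_line (j := j) (by fun_prop) (by rw [hj]; positivity)
    fun x => ?_
  have character_const (t : ℝ) :
      character α k (Function.update x j t) = character α k (Function.update x j 0) := by
    rw [character_update α k x j t, hk]
    simp [circleCharacter]
  simp_rw [character_const]
  rw [intervalIntegral.integral_const_mul, hj, div_one, intervalIntegral.integral_ofReal,
    integral_projP_update hφ, Complex.ofReal_zero, mul_zero]

theorem boxFourierCoeff_lineAverage_eq_zero (hj : 0 < α j) (hk : k j ≠ 0) (hφ : Continuous φ) :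
    boxFourierCoeff α (lineAverage j φ) k = 0 := by
  have hchar := continuous_character α k
  have haverage := continuous_lineAverage (j := j) hφ
  refine setIntegral_box_eq_zero_of_line (j := j) (by fun_prop)
    (div_nonneg two_pi_pos.le hj.le) fun x => ?_
  have integral_character :
      ∫ t in (0 : ℝ)..2 * π / α j, character α k (Function.update x j t) = 0 := by
    rw [funext (character_update α k x j), intervalIntegral.integral_const_mul,
      integral_circleCharacter hj.ne' hk, mul_zero]
  simp only [lineAverage_update]
  rw [intervalIntegral.integral_mul_const, integral_character, zero_mul]

theorem integral_projP_mul_lineAverage {χ : (Fin d → ℝ) → ℝ} (hj : α j = 1) (hφ : Continuous φ)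
    (hχ : Continuous χ) :
    ∫ x in torusBox α, projP j φ x * lineAverage j χ x = 0 := by
  refine setIntegral_box_eq_zero_of_line (j := j)
    ((continuous_projP hφ).mul (continuous_lineAverage hχ)) (by rw [hj]; positivity) fun x => ?_
  simp only [lineAverage_update]
  rw [intervalIntegral.integral_mul_const, hj, div_one, integral_projP_update hφ, zero_mul]

/-- `φ` is a classical eigenfunction, with eigenvalue `-lam < 0`, of the Schrödinger operator
`-Δ - P V P` on the torus with periods `2π / α i`, where `P = projP j`. -/
structure IsBoundState (α : Fin d → ℝ) (j : Fin d) (V φ : (Fin d → ℝ) → ℝ) (lam : ℝ) : Prop where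
  contDiff : ContDiff ℝ 2 φ
  periodic : IsTorusPeriodic α φ
  pos : 0 < lam
  eigen : ∀ x, negLaplacian φ x - projP j (fun y => V y * projP j φ y) x = -lam * φ x

namespace IsBoundState

theorem negLaplacian_eq (h : IsBoundState α j V φ lam) (x : Fin d → ℝ) :
    negLaplacian φ x = projP j (fun y => V y * projP j φ y) x - lam * φ x := by
  linarith [h.eigen x]

theorem boxFourierCoeff_eq_zero (h : IsBoundState α j V φ lam) (hα : ∀ i, 0 < α i) (hj : α j = 1)
    (hV : Continuous V) (hk : k j = 0) : boxFourierCoeff α φ k = 0 := by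
  have hφ := h.contDiff.continuous
  have hVP : Continuous fun y => V y * projP j φ y := hV.mul (continuous_projP hφ)
  have eigen_coeff := boxFourierCoeff_negLaplacian hα h.contDiff h.periodic k
  rw [funext h.negLaplacian_eq, boxFourierCoeff_sub (continuous_projP hVP) (hφ.const_mul lam),
    boxFourierCoeff_projP_eq_zero hj hk hVP, boxFourierCoeff_const_mul] at eigen_coeff
  have symbol_add_pos : 0 < laplaceSymbol α k + lam :=
    add_pos_of_nonneg_of_pos (laplaceSymbol_nonneg α k) h.pos
  have symbol_add_mul : ((laplaceSymbol α k + lam : ℝ) : ℂ) * boxFourierCoeff α φ k = 0 := by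
    push_cast
    linear_combination -eigen_coeff
  exact (mul_eq_zero.1 symbol_add_mul).resolve_left (Complex.ofReal_ne_zero.2 symbol_add_pos.ne')

theorem lineAverage_ae_eq_zero (h : IsBoundState α j V φ lam) (hα : ∀ i, 0 < α i) (hj : α j = 1)
    (hV : Continuous V) : ∀ᵐ x ∂volume.restrict (torusBox α), lineAverage j φ x = 0 := by
  have hφ := h.contDiff.continuous
  have haverage := continuous_lineAverage (j := j) hφ
  have coeff_eq_zero (k : Fin d → ℤ) : boxFourierCoeff α (lineAverage j φ) k = 0 := by
    by_cases hk : k j = 0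
    · have hproj := boxFourierCoeff_projP_eq_zero hj hk hφ
      rw [funext (projP_eq_sub_lineAverage j φ), boxFourierCoeff_sub hφ haverage,
        h.boxFourierCoeff_eq_zero hα hj hV hk, zero_sub, neg_eq_zero] at hproj
      exact hproj
    · exact boxFourierCoeff_lineAverage_eq_zero (hα j) hk hφ
  have integral_eq_zero :=
    integral_mul_self_eq_zero_of_boxFourierCoeff_eq_zero hα haverage coeff_eq_zero
  rw [integral_eq_zero_iff_of_nonneg (fun x => mul_self_nonneg _)
    (integrableOn_box (haverage.mul haverage) _)] at integral_eq_zero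
  exact integral_eq_zero.mono fun x hx => mul_self_eq_zero.1 hx

theorem integral_mul_negLaplacian (h : IsBoundState α j V φ lam) (hα : ∀ i, 0 < α i)
    (hj : α j = 1) (hV : Continuous V) :
    ∫ x in torusBox α, φ x * negLaplacian φ x =
      (∫ x in torusBox α, V x * φ x ^ 2) - lam * ∫ x in torusBox α, φ x * φ x := by
  have hφ := h.contDiff.continuous
  have hproj := continuous_projP (j := j) hφ
  have haverage : Continuous (lineAverage j fun y => V y * projP j φ y) :=
    continuous_lineAverage (hV.mul hproj)
  calc ∫ x in torusBox α, φ x * negLaplacian φ x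
      = ∫ x in torusBox α, (V x * φ x ^ 2 - lam * (φ x * φ x) -
          projP j φ x * lineAverage j (fun y => V y * projP j φ y) x) := by
        refine integral_congr_ae ((h.lineAverage_ae_eq_zero hα hj hV).mono fun x hx => ?_)
        simp only [h.negLaplacian_eq, projP_eq_sub_lineAverage j φ, hx,
          projP_eq_sub_lineAverage j fun y => V y * (φ y - lineAverage j φ y)]
        ring
    _ = _ := by
        rw [integral_sub (integrableOn_box (by fun_prop) _) (integrableOn_box (by fun_prop) _),
          integral_sub (integrableOn_box (by fun_prop) _) (integrableOn_box (by fun_prop) _),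
          integral_projP_mul_lineAverage hj hφ (χ := fun y => V y * projP j φ y) (hV.mul hproj),
          integral_const_mul, sub_zero]

end IsBoundState

end BoundState

section FirstMoment

variable {d : ℕ} {α : Fin d → ℝ} {j : Fin d}

theorem laplaceSymbol_pos (hj : α j ≠ 0) {k : Fin d → ℤ} (hk : k j ≠ 0) :
    0 < laplaceSymbol α k :=
  Finset.sum_pos' (fun i _ => by positivity) ⟨j, Finset.mem_univ j, by positivity⟩

theorem finite_laplaceSymbol_le (hα : ∀ i, 0 < α i) (R : ℝ) :
    {k : Fin d → ℤ | laplaceSymbol α k ≤ R}.Finite := by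
  refine (Set.Finite.pi' fun i => Set.finite_Icc (-⌈R / α i ^ 2⌉) ⌈R / α i ^ 2⌉).subset
    fun k (hk : laplaceSymbol α k ≤ R) i => ?_
  have coord_le : α i ^ 2 * (k i : ℝ) ^ 2 ≤ R :=
    (Finset.single_le_sum (f := fun i => α i ^ 2 * (k i : ℝ) ^ 2) (fun i _ => by positivity)
      (Finset.mem_univ i)).trans hk
  have sq_le : k i ^ 2 ≤ ⌈R / α i ^ 2⌉ := by
    have := ((le_div_iff₀' (pow_pos (hα i) 2)).2 coord_le).trans (Int.le_ceil _)
    exact_mod_cast this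
  exact ⟨by linarith [Int.le_self_sq (-k i), neg_sq (k i)], (Int.le_self_sq _).trans sq_le⟩

theorem rpow_natCast_div_two {x : ℝ} (hx : 0 ≤ x) (d : ℕ) : x ^ ((d : ℝ) / 2) = √x ^ d := by
  rw [sqrt_eq_rpow, ← rpow_natCast, ← rpow_mul hx]
  congr 1
  ring

theorem kineticConst_natCast_div_four {A : ℝ} (hA : 0 ≤ A) (hd : d ≠ 0) :
    kineticConst A (d / 4) = √(A * (1 + 4 / d)) ^ d / (1 + d / 2) := by
  have exponent : 2 * ((d : ℝ) / 4) = d / 2 := by ring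
  have ratio : (1 + (d : ℝ) / 4) / (d / 4) = 1 + 4 / d := by field_simp; ring
  have difference : 1 / (1 + (d : ℝ) / 4) - 1 / (1 + d / 2) = (1 + 4 / d : ℝ)⁻¹ / (1 + d / 2) := by
    field_simp
    ring
  rw [kineticConst, exponent, ratio, difference, rpow_add (by positivity), rpow_one,
    rpow_natCast_div_two hA, rpow_natCast_div_two (by positivity), sqrt_mul hA, mul_pow]
  field_simp

/-- The semiclassical Lieb–Thirring constant `L^cl_{γ,d}`. -/
noncomputable def semiclassicalConst (γ : ℝ) (d : ℕ) : ℝ :=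
  Gamma (γ + 1) / (2 ^ d * π ^ ((d : ℝ) / 2) * Gamma (γ + d / 2 + 1))

theorem semiclassicalConst_one (d : ℕ) :
    semiclassicalConst 1 d = ((2 * √π) ^ d * ((1 + d / 2) * Gamma (1 + d / 2)))⁻¹ := by
  rw [semiclassicalConst, Gamma_add_one (by positivity : 1 + (d : ℝ) / 2 ≠ 0),
    Gamma_add_one one_ne_zero, Gamma_one, rpow_natCast_div_two pi_pos.le, mul_pow, mul_one, one_div]

/-- A cutoff profile `w` dominated by an exponential, for which the constant resulting from the
cutoff argument in dimension `d` is at most `(π / √3) ^ d` times the semiclassical one. -/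
structure IsLiebThirringProfile (d : ℕ) (w : ℝ → ℝ) (a A B β : ℝ) : Prop
    extends IsCutoffProfile w a A where
  decay_pos : 0 < β
  sq_le : ∀ u, 0 ≤ u → w u ^ 2 ≤ B * exp (-β * u)
  const_le : B * latticeConst d * Gamma (1 + d / 2) * √(A * (1 + 4 / d) / β) ^ d ≤ (π / √3) ^ d

namespace IsLiebThirringProfile

variable {w : ℝ → ℝ} {a A B β : ℝ}

theorem amplitude_nonneg (hw : IsLiebThirringProfile d w a A B β) : 0 ≤ B := by
  simpa using (sq_nonneg _).trans (hw.sq_le 0 le_rfl)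

theorem sum_sq_le (hw : IsLiebThirringProfile d w a A B β) (hd : d ≤ 19) (hα : ∀ i, 0 < α i)
    (hα1 : ∀ i, α i ≤ 1) (hj : α j = 1) {E : ℝ} (hE : 0 < E) {F : Finset (Fin d → ℤ)}
    (hF : ∀ k ∈ F, k j ≠ 0) :
    ∑ k ∈ F, w (laplaceSymbol α k / E) ^ 2 ≤
      B * latticeConst d * √(π / β) ^ d / (∏ i, α i) * E ^ (2 * ((d : ℝ) / 4)) := by
  have hβ := hw.decay_pos
  have term_le (k : Fin d → ℤ) : w (laplaceSymbol α k / E) ^ 2 ≤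
      B * exp (-(β / E) * ∑ i, α i ^ 2 * (k i : ℝ) ^ 2) := by
    refine (hw.sq_le _ (div_nonneg (laplaceSymbol_nonneg α k) hE.le)).trans_eq ?_
    rw [laplaceSymbol, mul_div_left_comm, neg_div, mul_comm (∑ _, _)]
  have scaling : √(π / (β / E)) ^ d = √(π / β) ^ d * E ^ (2 * ((d : ℝ) / 4)) := by
    rw [div_div_eq_mul_div, mul_div_right_comm, sqrt_mul (by positivity), mul_pow,
      ← rpow_natCast_div_two hE.le]
    ring_nf
  calc ∑ k ∈ F, w (laplaceSymbol α k / E) ^ 2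
      ≤ B * ∑ k ∈ F, exp (-(β / E) * ∑ i, α i ^ 2 * (k i : ℝ) ^ 2) := by
        rw [Finset.mul_sum]
        exact Finset.sum_le_sum fun k _ => term_le k
    _ ≤ B * (latticeConst d * √(π / (β / E)) ^ d / ∏ i, α i) :=
        mul_le_mul_of_nonneg_left (sum_exp_neg_mul_sum_sq_le hd hα hα1 hj (by positivity) hF)
          hw.amplitude_nonneg
    _ = _ := by
        rw [scaling]
        ring

theorem kinetic_const_le (hw : IsLiebThirringProfile d w a A B β) (hα : ∀ i, 0 < α i)
    (hd : d ≠ 0) :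
    B * latticeConst d * √(π / β) ^ d / (∏ i, α i) * (∏ i, 2 * π / α i)⁻¹ *
      kineticConst A (d / 4) ≤ (π / √3) ^ d * semiclassicalConst 1 d := by
  have hβ := hw.decay_pos
  have hA := hw.cost_pos
  have prod_pos : 0 < ∏ i, α i := Finset.prod_pos fun i _ => hα i
  have prod_periods : ∏ i, 2 * π / α i = (2 * π) ^ d / ∏ i, α i := by
    simp [Finset.prod_div_distrib]
  have pi_pow : π ^ d = √π ^ d * √π ^ d := by rw [← mul_pow, mul_self_sqrt pi_pos.le]
  have semiclassical_nonneg : 0 ≤ semiclassicalConst 1 d := by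
    rw [semiclassicalConst_one]
    positivity
  refine (le_of_eq ?_).trans (mul_le_mul_of_nonneg_right hw.const_le semiclassical_nonneg)
  rw [kineticConst_natCast_div_four hA.le hd, semiclassicalConst_one, prod_periods,
    sqrt_div pi_pos.le, sqrt_div (by positivity), mul_pow, mul_pow, pi_pow, div_pow, div_pow]
  field_simp

variable {ι : Type*} [Fintype ι] [DecidableEq ι] {V : (Fin d → ℝ) → ℝ}
  {φ : ι → (Fin d → ℝ) → ℝ} {lam : ι → ℝ}

theorem sum_integral_mul_sq_le (hw : IsLiebThirringProfile d w a A B β) (hd : d ≤ 19)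
    (hα : ∀ i, 0 < α i) (hα1 : ∀ i, α i ≤ 1) (hj : α j = 1) (hV : Continuous V)
    (hφ : ∀ n, IsBoundState α j V (φ n) (lam n))
    (hortho : ∀ n m, ∫ x in torusBox α, φ n x * φ m x = if n = m then 1 else 0)
    {W : (Fin d → ℝ) → ℝ} (hW : Continuous W) (hW0 : ∀ x, 0 ≤ W x) :
    ∑ n, ∫ x in torusBox α, W x * φ n x ^ 2 ≤
      (∑ n, ∫ x in torusBox α, φ n x * negLaplacian (φ n) x) +
        (π / √3) ^ d * semiclassicalConst 1 d *
          ∫ x in torusBox α, W x ^ (1 + (d : ℝ) / 2) := by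
  have hd0 : 0 < d := j.pos
  have kinetic := sum_integral_mul_sq_le_kinetic hα (fun n => (hφ n).contDiff)
    (fun n => (hφ n).periodic) hortho (S := {k | k j ≠ 0})
    (fun k hk => laplaceSymbol_pos (hα j).ne' hk)
    (fun n k hk => (hφ n).boxFourierCoeff_eq_zero hα hj hV (not_not.1 hk)) hw.toIsCutoffProfile
    (s := (d : ℝ) / 4) (by positivity)
    (fun E _ => (finite_laplaceSymbol_le hα (a * E)).subset fun k hk => hk.2.le)
    (fun E hE F hF => hw.sum_sq_le hd hα hα1 hj hE hF) hW hW0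
  have exponent : 1 + 2 * ((d : ℝ) / 4) = 1 + d / 2 := by ring
  rw [exponent] at kinetic
  refine kinetic.trans (add_le_add_right (mul_le_mul_of_nonneg_right
    (hw.kinetic_const_le hα hd0.ne') (integral_nonneg fun x => rpow_nonneg (hW0 x) _)) _)

theorem sum_sub_le (hw : IsLiebThirringProfile d w a A B β) (hd : d ≤ 19)
    (hα : ∀ i, 0 < α i) (hα1 : ∀ i, α i ≤ 1) (hj : α j = 1) (hV : Continuous V)
    (hφ : ∀ n, IsBoundState α j V (φ n) (lam n))
    (hortho : ∀ n m, ∫ x in torusBox α, φ n x * φ m x = if n = m then 1 else 0) (t : ℝ) :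
    ∑ n, (lam n - t) ≤ (π / √3) ^ d * semiclassicalConst 1 d *
      ∫ x in torusBox α, max (V x - t) 0 ^ (1 + (d : ℝ) / 2) := by
  have norm_eq_one (n : ι) : ∫ x in torusBox α, φ n x * φ n x = 1 := by rw [hortho, if_pos rfl]
  have potential_le (n : ι) : (∫ x in torusBox α, V x * φ n x ^ 2) - t ≤
      ∫ x in torusBox α, max (V x - t) 0 * φ n x ^ 2 := by
    have hφn := (hφ n).contDiff.continuous
    have integral_eq : (∫ x in torusBox α, V x * φ n x ^ 2) - t =
        ∫ x in torusBox α, (V x * φ n x ^ 2 - t * (φ n x * φ n x)) := by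
      rw [integral_sub (integrableOn_box (by fun_prop) _) (integrableOn_box (by fun_prop) _),
        integral_const_mul, norm_eq_one, mul_one]
    rw [integral_eq]
    refine integral_mono (integrableOn_box (by fun_prop) _) (integrableOn_box (by fun_prop) _)
      fun x => ?_
    have := mul_le_mul_of_nonneg_right (le_max_left (V x - t) 0) (sq_nonneg (φ n x))
    linarith
  have energy (n : ι) : ∫ x in torusBox α, φ n x * negLaplacian (φ n) x =
      (∫ x in torusBox α, V x * φ n x ^ 2) - lam n := by
    rw [(hφ n).integral_mul_negLaplacian hα hj hV, norm_eq_one, mul_one]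
  have kinetic := hw.sum_integral_mul_sq_le hd hα hα1 hj hV hφ hortho
    (W := fun x => max (V x - t) 0) (by fun_prop) fun x => le_max_right _ _
  have potential := Finset.sum_le_sum fun n (_ : n ∈ Finset.univ) => potential_le n
  simp only [energy, Finset.sum_sub_distrib] at kinetic potential ⊢
  linarith

theorem sum_max_sub_zero_le (hw : IsLiebThirringProfile d w a A B β) (hd : d ≤ 19)
    (hα : ∀ i, 0 < α i) (hα1 : ∀ i, α i ≤ 1) (hj : α j = 1) (hV : Continuous V)
    (hφ : ∀ n, IsBoundState α j V (φ n) (lam n))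
    (hortho : ∀ n m, ∫ x in torusBox α, φ n x * φ m x = if n = m then 1 else 0) (t : ℝ) :
    ∑ n, max (lam n - t) 0 ≤ (π / √3) ^ d * semiclassicalConst 1 d *
      ∫ x in torusBox α, max (V x - t) 0 ^ (1 + (d : ℝ) / 2) := by
  classical
  calc ∑ n, max (lam n - t) 0 = ∑ n : {n // t < lam n}, (lam n - t) := by
        rw [← Finset.sum_subtype {n | t < lam n} (by simp) fun n => lam n - t, Finset.sum_filter]
        refine Finset.sum_congr rfl fun n _ => ?_
        split_ifs with hn
        · exact max_eq_left (sub_pos.2 hn).le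
        · exact max_eq_right (sub_nonpos.2 (not_lt.1 hn))
    _ ≤ _ := hw.sum_sub_le (φ := fun n : {n // t < lam n} => φ n) hd hα hα1 hj hV (fun n => hφ n)
        (fun n m => by simp only [hortho, Subtype.ext_iff]) t

end IsLiebThirringProfile

end FirstMoment

section Numerics

/-- A rational upper bound for `Γ(1 + d / 2) ^ 2`, obtained from `Γ(x + 1) = x Γ(x)` and
`Γ(3 / 2) ^ 2 = π / 4`. -/
noncomputable def gammaSqBound : ℕ → ℝ
  | 0 => 1
  | 1 => 3.1416 / 4
  | d + 2 => (1 + d / 2) ^ 2 * gammaSqBound d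

theorem Gamma_sq_le_gammaSqBound (d : ℕ) : Gamma (1 + d / 2) ^ 2 ≤ gammaSqBound d := by
  induction d using Nat.twoStepInduction with
  | zero => simp [gammaSqBound]
  | one =>
    rw [Nat.cast_one, add_comm, Gamma_add_one (by norm_num), Gamma_one_half_eq, mul_pow,
      sq_sqrt pi_pos.le, gammaSqBound]
    linarith [pi_lt_d4]
  | more d ih _ =>
    have shift : 1 + ((d + 2 : ℕ) : ℝ) / 2 = 1 + d / 2 + 1 := by push_cast; ring
    rw [shift, Gamma_add_one (by positivity), mul_pow, gammaSqBound]
    gcongr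

theorem mul_Gamma_mul_sqrt_pow_le {d : ℕ} {x B Bsq : ℝ} (hx : 0 ≤ x) (hB : B ^ 2 ≤ Bsq)
    (h : Bsq * latticeConst d ^ 2 * gammaSqBound d * x ^ d ≤ (3.1415 ^ 2 / 3) ^ d) :
    B * latticeConst d * Gamma (1 + d / 2) * √x ^ d ≤ (π / √3) ^ d := by
  refine le_of_sq_le_sq ?_ (by positivity)
  calc (B * latticeConst d * Gamma (1 + d / 2) * √x ^ d) ^ 2
      = B ^ 2 * latticeConst d ^ 2 * Gamma (1 + d / 2) ^ 2 * (√x ^ 2) ^ d := by ring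
    _ ≤ Bsq * latticeConst d ^ 2 * gammaSqBound d * x ^ d := by
        rw [sq_sqrt hx]
        gcongr
        · exact mul_nonneg ((sq_nonneg B).trans hB) (sq_nonneg _)
        · exact Gamma_sq_le_gammaSqBound d
    _ ≤ (3.1415 ^ 2 / 3) ^ d := h
    _ ≤ (π ^ 2 / 3) ^ d := by
        have := pi_gt_d4
        gcongr
    _ = ((π / √3) ^ d) ^ 2 := by
        rw [← pow_mul, mul_comm d 2, pow_mul, div_pow π, sq_sqrt (by norm_num)]

theorem one_sub_add_sq_le_exp_neg {u : ℝ} (hu : u ≤ 1.3) :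
    1 - u + 0.28 * u ^ 2 ≤ exp (-u) := by
  calc 1 - u + 0.28 * u ^ 2 ≤ (1 - u / 4) ^ 4 := by
        have : 0 ≤ u ^ 2 * (0.095 - u / 16 + u ^ 2 / 256) :=
          mul_nonneg (sq_nonneg u) (by nlinarith)
        linarith
    _ ≤ exp (-u) := one_sub_div_pow_le_exp_neg (n := 4) (by norm_num; linarith)

theorem truncatedQuadratic_sq_le_exp (u : ℝ) :
    truncatedQuadratic 1.3 1 0.28 u ^ 2 ≤ 1 * exp (-2 * u) := by
  rw [truncatedQuadratic, one_mul (exp _)]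
  split_ifs with hu'
  · have quadratic_nonneg : 0 ≤ 1 - 1 * u + 0.28 * u ^ 2 := by nlinarith [sq_nonneg (u - 25 / 14)]
    have exp_sq : exp (-2 * u) = exp (-u) ^ 2 := by
      rw [← exp_nat_mul]
      ring_nf
    rw [exp_sq]
    exact pow_le_pow_left₀ quadratic_nonneg
      (by simpa only [one_mul] using one_sub_add_sq_le_exp_neg hu'.le) 2
  · rw [zero_pow two_ne_zero]
    positivity

theorem indicator_sq_le_exp {β : ℝ} (hβ : 0 ≤ β) (u : ℝ) :
    truncatedQuadratic 1 0 0 u ^ 2 ≤ exp β * exp (-β * u) := by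
  rw [truncatedQuadratic]
  split_ifs with hu
  · rw [← exp_add, zero_mul, zero_mul, sub_zero, add_zero, one_pow]
    exact one_le_exp (by nlinarith)
  · rw [zero_pow two_ne_zero]
    positivity

theorem exp_natCast_div_two_sq_le (d : ℕ) : exp (d / 2) ^ 2 ≤ 2.71829 ^ d := by
  calc exp (d / 2) ^ 2 = exp 1 ^ d := by
        rw [← exp_nat_mul, ← exp_nat_mul, Nat.cast_ofNat, mul_div_cancel₀ _ two_ne_zero, mul_one]
    _ ≤ 2.71829 ^ d := by
        gcongr
        linarith [exp_one_lt_d9]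

theorem isLiebThirringProfile_truncatedQuadratic {d : ℕ} (hd0 : d ≠ 0) (hd : d ≤ 6) :
    IsLiebThirringProfile d (truncatedQuadratic 1.3 1 0.28) 1.3
      (truncatedQuadraticCost 1.3 1 0.28) 1 2 where
  toIsCutoffProfile := isCutoffProfile_truncatedQuadratic (by norm_num) 1 0.28
  decay_pos := two_pos
  sq_le u _ := truncatedQuadratic_sq_le_exp u
  const_le := by
    have cost_pos := truncatedQuadraticCost_pos (a := 1.3) (by norm_num) 1 0.28
    refine mul_Gamma_mul_sqrt_pow_le (Bsq := 1) (by positivity) (by norm_num) ?_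
    have d_pos := Nat.pos_of_ne_zero hd0
    interval_cases d <;> norm_num [latticeConst, gammaSqBound, truncatedQuadraticCost]

theorem isLiebThirringProfile_indicator {d : ℕ} (hd6 : 6 < d) (hd : d ≤ 19) :
    IsLiebThirringProfile d (truncatedQuadratic 1 0 0) 1
      (truncatedQuadraticCost 1 0 0) (exp (d / 2)) (d / 2) where
  toIsCutoffProfile := isCutoffProfile_truncatedQuadratic one_pos 0 0
  decay_pos := by positivity
  sq_le u _ := indicator_sq_le_exp (by positivity) u
  const_le := by
    have cost_pos := truncatedQuadraticCost_pos one_pos 0 0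
    refine mul_Gamma_mul_sqrt_pow_le (by positivity) (exp_natCast_div_two_sq_le d) ?_
    interval_cases d <;> norm_num [latticeConst, gammaSqBound, truncatedQuadraticCost]

theorem exists_isLiebThirringProfile {d : ℕ} (hd0 : d ≠ 0) (hd : d ≤ 19) :
    ∃ w a A B β, IsLiebThirringProfile d w a A B β := by
  rcases le_or_gt d 6 with hd6 | hd6
  · exact ⟨_, _, _, _, _, isLiebThirringProfile_truncatedQuadratic hd0 hd6⟩
  · exact ⟨_, _, _, _, _, isLiebThirringProfile_indicator hd6 hd⟩

end Numerics

section AizenmanLieb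

theorem indicator_rpow_mul_max_sub_rpow_eq_betaPDF {p q x : ℝ} (hp : 0 < p) (hq : 0 < q)
    (hx : 0 < x) (u : ℝ) :
    (Set.Ioi 0).indicator (fun t => ENNReal.ofReal (t ^ (p - 1) * max (x - t) 0 ^ q)) (x * u) =
      ENNReal.ofReal (x ^ (p - 1) * x ^ q * ProbabilityTheory.beta p (q + 1)) *
        ProbabilityTheory.betaPDF p (q + 1) u := by
  have beta_pos := ProbabilityTheory.beta_pos hp (add_pos hq one_pos)
  rcases le_or_gt u 0 with hu | hu
  · rw [ProbabilityTheory.betaPDF_eq_zero_of_nonpos hu, mul_zero, Set.indicator_of_notMem]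
    exact (mul_nonpos_of_nonneg_of_nonpos hx.le hu).not_gt
  rw [Set.indicator_of_mem (Set.mem_Ioi.2 (mul_pos hx hu))]
  rcases le_or_gt 1 u with hu1 | hu1
  · rw [ProbabilityTheory.betaPDF_eq_zero_of_one_le hu1, mul_zero, max_eq_right (by nlinarith),
      zero_rpow hq.ne', mul_zero, ENNReal.ofReal_zero]
  · rw [ProbabilityTheory.betaPDF_of_pos_lt_one hu hu1, ← ENNReal.ofReal_mul (by positivity),
      max_eq_left (by nlinarith), ← mul_one_sub, mul_rpow hx.le hu.le,
      mul_rpow hx.le (sub_pos.2 hu1).le, add_sub_cancel_right]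
    congr 1
    field_simp

theorem lintegral_rpow_mul_max_sub_rpow {p q x : ℝ} (hp : 0 < p) (hq : 0 < q) (hx : 0 ≤ x) :
    ∫⁻ t in Set.Ioi (0 : ℝ), ENNReal.ofReal (t ^ (p - 1) * max (x - t) 0 ^ q) =
      ENNReal.ofReal (Gamma p * Gamma (q + 1) / Gamma (p + q + 1) * x ^ (p + q)) := by
  rcases hx.eq_or_lt with rfl | hx
  · rw [zero_rpow (add_pos hp hq).ne', mul_zero, ENNReal.ofReal_zero]
    refine setLIntegral_eq_zero measurableSet_Ioi fun t (ht : 0 < t) => ?_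
    rw [zero_sub, max_eq_right (neg_nonpos.2 ht.le), zero_rpow hq.ne', mul_zero,
      ENNReal.ofReal_zero, Pi.zero_apply]
  have hmeas : Measurable ((Set.Ioi (0 : ℝ)).indicator fun t =>
      ENNReal.ofReal (t ^ (p - 1) * max (x - t) 0 ^ q)) :=
    Measurable.indicator (by fun_prop) measurableSet_Ioi
  have rpow_split : x ^ (p + q) = x * (x ^ (p - 1) * x ^ q) := by
    rw [← rpow_add hx, ← rpow_one_add' hx.le (by linarith)]
    ring_nf
  rw [← lintegral_indicator measurableSet_Ioi, ← smul_map_volume_mul_left hx.ne',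
    lintegral_smul_measure, lintegral_map hmeas (by fun_prop)]
  simp only [indicator_rpow_mul_max_sub_rpow_eq_betaPDF hp hq hx]
  rw [lintegral_const_mul' _ _ ENNReal.ofReal_ne_top,
    ProbabilityTheory.lintegral_betaPDF_eq_one hp (add_pos hq one_pos), mul_one, abs_of_pos hx,
    smul_eq_mul, ← ENNReal.ofReal_mul hx.le, ProbabilityTheory.beta, rpow_split]
  ring_nf

variable {X ι : Type*} [MeasurableSpace X] {μ : Measure X} [SFinite μ] [Fintype ι] {V : X → ℝ}
  {lam : ι → ℝ} {L p q : ℝ}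

theorem lintegral_rpow_mul_sum_max_sub_le (hV : Measurable V) (hL : 0 ≤ L)
    (hint : ∀ t > 0, Integrable (fun x => max (V x - t) 0 ^ q) μ)
    (h : ∀ t > 0, ∑ n, max (lam n - t) 0 ≤ L * ∫ x, max (V x - t) 0 ^ q ∂μ) :
    ∑ n, ∫⁻ t in Set.Ioi (0 : ℝ), ENNReal.ofReal (t ^ (p - 1) * max (lam n - t) 0 ^ (1 : ℝ)) ≤
      ENNReal.ofReal L * ∫⁻ x, (∫⁻ t in Set.Ioi (0 : ℝ),
        ENNReal.ofReal (t ^ (p - 1) * max (V x - t) 0 ^ q)) ∂μ := by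
  rw [← lintegral_finsetSum' _ fun n _ => by fun_prop]
  calc _ ≤ ∫⁻ t in Set.Ioi (0 : ℝ), ENNReal.ofReal L *
        ∫⁻ x, ENNReal.ofReal (t ^ (p - 1) * max (V x - t) 0 ^ q) ∂μ := by
        refine setLIntegral_mono' measurableSet_Ioi fun t (ht : 0 < t) => ?_
        rw [← ENNReal.ofReal_sum_of_nonneg fun n _ => by positivity,
          ← ofReal_integral_eq_lintegral_ofReal ((hint t ht).const_mul _)
            (ae_of_all _ fun x => by positivity), ← ENNReal.ofReal_mul hL]
        refine ENNReal.ofReal_le_ofReal ?_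
        simp only [rpow_one]
        rw [integral_const_mul, ← Finset.mul_sum, mul_left_comm]
        exact mul_le_mul_of_nonneg_left (h t ht) (rpow_nonneg ht.le _)
    _ = _ := by
        rw [lintegral_const_mul' _ _ ENNReal.ofReal_ne_top, lintegral_lintegral_swap]
        refine Measurable.aemeasurable ?_
        simp only [Function.uncurry_def]
        fun_prop

-- Aizenman–Lieb: powers are positive superpositions of the functions `x ↦ max (x - t) 0`.
theorem sum_rpow_le_of_sum_max_sub_le (hV : Measurable V) (hV0 : ∀ x, 0 ≤ V x)
    (hlam : ∀ n, 0 ≤ lam n) (hL : 0 ≤ L) (hp : 0 < p) (hq : 0 < q)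
    (hint : ∀ t > 0, Integrable (fun x => max (V x - t) 0 ^ q) μ)
    (hint' : Integrable (fun x => V x ^ (p + q)) μ)
    (h : ∀ t > 0, ∑ n, max (lam n - t) 0 ≤ L * ∫ x, max (V x - t) 0 ^ q ∂μ) :
    ∑ n, lam n ^ (p + 1) ≤
      L * (Gamma (p + 2) * Gamma (q + 1) / Gamma (p + q + 1)) * ∫ x, V x ^ (p + q) ∂μ := by
  have integral_V_nonneg : 0 ≤ ∫ x, V x ^ (p + q) ∂μ :=
    integral_nonneg fun x => rpow_nonneg (hV0 x) _
  have superposition := lintegral_rpow_mul_sum_max_sub_le (p := p) hV hL hint h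
  simp only [lintegral_rpow_mul_max_sub_rpow hp one_pos (hlam _),
    lintegral_rpow_mul_max_sub_rpow hp hq (hV0 _)] at superposition
  rw [← ENNReal.ofReal_sum_of_nonneg fun n _ => by have := hlam n; positivity,
    ← ofReal_integral_eq_lintegral_ofReal (hint'.const_mul _)
      (ae_of_all _ fun x => by have := hV0 x; positivity),
    ← ENNReal.ofReal_mul hL, integral_const_mul, ← Finset.mul_sum,
    ENNReal.ofReal_le_ofReal_iff (by positivity), Gamma_add_one one_ne_zero, Gamma_one,
    mul_one, mul_one, add_assoc p 1 1, one_add_one_eq_two] at superposition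
  have Gamma_ratio_pos : 0 < Gamma p / Gamma (p + 2) := by positivity
  refine le_of_mul_le_mul_left (superposition.trans_eq ?_) Gamma_ratio_pos
  field_simp

end AizenmanLieb

theorem semiclassicalConst_one_mul {γ : ℝ} (d : ℕ) :
    semiclassicalConst 1 d * (Gamma (γ + 1) * Gamma (1 + d / 2 + 1) / Gamma (γ + d / 2 + 1)) =
      semiclassicalConst γ d := by
  have : 0 < Gamma (1 + (d : ℝ) / 2 + 1) := Gamma_pos_of_pos (by positivity)
  rw [semiclassicalConst, semiclassicalConst, Gamma_add_one one_ne_zero, Gamma_one]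
  field_simp

end LiebThirring

open LiebThirring in
theorem stmt_0_general {d : ℕ} (hd : d ≤ 19) {α : Fin d → ℝ} (hα : ∀ i, 0 < α i)
    (hα1 : ∀ i, α i ≤ 1) {j : Fin d} (hj : α j = 1) {V : (Fin d → ℝ) → ℝ} (hV : Continuous V)
    {γ : ℝ} (hγ : 1 ≤ γ) {ι : Type*} [Fintype ι] [DecidableEq ι] {φ : ι → (Fin d → ℝ) → ℝ}
    {lam : ι → ℝ} (hφ : ∀ n, IsBoundState α j V (φ n) (lam n))
    (hortho : ∀ n m, ∫ x in torusBox α, φ n x * φ m x = if n = m then 1 else 0) :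
    ∑ n, lam n ^ γ ≤ (π / √3) ^ d * semiclassicalConst γ d *
      ∫ x in torusBox α, max (V x) 0 ^ (γ + d / 2) := by
  obtain ⟨w, a, A, B, β, hw⟩ := exists_isLiebThirringProfile j.pos.ne' hd
  have first_moment := hw.sum_max_sub_zero_le hd hα hα1 hj hV hφ hortho
  rcases hγ.eq_or_lt with rfl | hγ
  · simpa only [sub_zero, rpow_one, max_eq_left (hφ _).pos.le] using first_moment 0
  have max_max_sub (x : Fin d → ℝ) {t : ℝ} (ht : 0 < t) :
      max (max (V x) 0 - t) 0 = max (V x - t) 0 := by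
    rw [← max_sub_sub_right, max_assoc, max_eq_right (by linarith : 0 - t ≤ 0)]
  have aizenman_lieb := sum_rpow_le_of_sum_max_sub_le (V := fun x => max (V x) 0)
    (μ := volume.restrict (torusBox α)) (p := γ - 1) (q := 1 + (d : ℝ) / 2)
    (L := (π / √3) ^ d * semiclassicalConst 1 d)
    (by fun_prop) (fun x => le_max_right _ _) (fun n => (hφ n).pos.le)
    (by rw [semiclassicalConst_one]; positivity) (sub_pos.2 hγ) (by positivity)
    (fun t _ => integrableOn_box (.rpow_const (by fun_prop) fun x => .inr (by positivity)) _)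
    (integrableOn_box (.rpow_const (by fun_prop) fun x =>
      .inr (add_nonneg (sub_pos.2 hγ).le (by positivity))) _)
    (fun t ht => by simpa only [max_max_sub _ ht] using first_moment t)
  have exponent : γ - 1 + (1 + (d : ℝ) / 2) = γ + d / 2 := by ring
  rwa [sub_add_cancel, exponent, (by ring : γ - 1 + 2 = γ + 1), mul_assoc ((π / √3) ^ d),
    semiclassicalConst_one_mul] at aizenman_lieb

theorem stmt_0 (d : ℕ) (hd1 : 1 ≤ d) (hd19 : d ≤ 19)
    (α : Fin d → ℝ) (hαpos : ∀ i, 0 < α i) (hαmono : Monotone α)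
    (hαlast : α ⟨d - 1, by omega⟩ = 1)
    (V : (Fin d → ℝ) → ℝ) (hVc : Continuous V) (hV0 : ∀ x, 0 ≤ V x)
    (hVper : ∀ (j : Fin d) (x : Fin d → ℝ),
      V (Function.update x j (x j + 2 * π / α j)) = V x)
    (γ : ℝ) (hγ : 1 ≤ γ)
    (N : ℕ) (φ : Fin N → (Fin d → ℝ) → ℝ)
    (hφ : ∀ n, ContDiff ℝ (⊤ : ℕ∞) (φ n))
    (hφper : ∀ n (j : Fin d) (x : Fin d → ℝ),
      φ n (Function.update x j (x j + 2 * π / α j)) = φ n x)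
    (hortho : ∀ n m, (∫ x in Set.univ.pi fun j => Set.Ioc (0:ℝ) (2 * π / α j),
        φ n x * φ m x) = if n = m then 1 else 0)
    (lam : Fin N → ℝ) (hlam : ∀ n, 0 < lam n)
    (heig : ∀ n x, -(∑ i, pd2 i (φ n) x) -
        projP ⟨d - 1, by omega⟩
          (fun y => V y * projP ⟨d - 1, by omega⟩ (φ n) y) x = -(lam n) * φ n x) :
    ∑ n, lam n ^ γ ≤ (π / Real.sqrt 3) ^ d *
      (Real.Gamma (γ + 1) / (2 ^ d * π ^ ((d : ℝ) / 2) * Real.Gamma (γ + d / 2 + 1))) *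
      ∫ x in Set.univ.pi fun j => Set.Ioc (0:ℝ) (2 * π / α j),
        V x ^ (γ + d / 2) := by
  have hα1 (i : Fin d) : α i ≤ 1 := hαlast ▸ hαmono (Nat.le_sub_one_of_lt i.isLt)
  simpa only [LiebThirring.semiclassicalConst, LiebThirring.box, max_eq_left (hV0 _)] using
    stmt_0_general hd19 hαpos hα1 hαlast hVc hγ
      (fun n => ⟨contDiff_infty.1 (hφ n) 2, hφper n, hlam n, heig n⟩) hortho
end

section
/- Let α > 0, β > 0 and set L = 2π/α. For every real-valued C¹ function u on ℝ that is L-periodic, one has max_x u(x)² ≤ K₁(β) · ( ∫_0^L ( u'(x)² + α² β u(x)² ) dx )^{1/2} · ( ∫_0^L u(x)² dx )^{1/2}. -/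
open Real MeasureTheory

/-- The sharp constant `K₁(β) = sup_{λ>0} √λ · coth(π√(β+λ)) / √(β+λ)`. -/
noncomputable def K1 (β : ℝ) : ℝ :=
  ⨆ l : Set.Ioi (0 : ℝ),
    Real.sqrt l * (Real.cosh (π * Real.sqrt (β + l)) / Real.sinh (π * Real.sqrt (β + l))) /
      Real.sqrt (β + l)

/-!
If `w` solves the Riccati equation `w' + w² = m²`, then `(w ‖u‖²)' ≤ ‖u'‖² + m² ‖u‖²`, the
difference being `‖u' - w u‖²`. Integrating over the period that starts at `x`, with
`w t = m tanh (m (t - x - L / 2))`, gives `2 m tanh (m L / 2) ‖u x‖² ≤ ∫ ‖u'‖² + m² ‖u‖²`.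
For `m² = α² (β + r²)` the term `λ = r²` of the supremum `K₁(β)` turns this into
`2 α r ‖u x‖² ≤ K₁(β) (G + (α r)² N)`, where `G` and `N` are the two integrals of the theorem.
It holds for every `r > 0`, so the discriminant in `α r` of the difference of the two sides is
nonpositive.
-/

theorem hasDerivAt_tanh (x : ℝ) : HasDerivAt Real.tanh (1 - Real.tanh x ^ 2) x := by
  have hcosh : Real.cosh x ≠ 0 := (Real.cosh_pos x).ne'
  have hquot := (Real.hasDerivAt_sinh x).div (Real.hasDerivAt_cosh x) hcosh
  have htanh : Real.tanh = Real.sinh / Real.cosh := funext Real.tanh_eq_sinh_div_cosh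
  rw [htanh, Pi.div_apply]
  exact hquot.congr_deriv (by field_simp)

theorem antitoneOn_cosh_div_sinh :
    AntitoneOn (fun t => Real.cosh t / Real.sinh t) (Set.Ioi 0) := by
  intro s (hs : 0 < s) t (ht : 0 < t) hst
  have hsub : 0 ≤ Real.sinh (t - s) := Real.sinh_nonneg_iff.2 (sub_nonneg.2 hst)
  rw [Real.sinh_sub] at hsub
  rw [div_le_div_iff₀ (Real.sinh_pos_iff.2 ht) (Real.sinh_pos_iff.2 hs)]
  linarith

theorem K1_nonneg (β : ℝ) : 0 ≤ K1 β :=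
  Real.iSup_nonneg fun _ => by positivity

theorem bddAbove_range_K1 {β : ℝ} (hβ : 0 < β) :
    BddAbove (Set.range fun l : Set.Ioi (0 : ℝ) =>
      √l * (Real.cosh (π * √(β + l)) / Real.sinh (π * √(β + l))) / √(β + l)) := by
  refine ⟨Real.cosh (π * √β) / Real.sinh (π * √β), ?_⟩
  rintro _ ⟨⟨l, hl : 0 < l⟩, rfl⟩
  have hcoth : Real.cosh (π * √(β + l)) / Real.sinh (π * √(β + l)) ≤
      Real.cosh (π * √β) / Real.sinh (π * √β) :=
    antitoneOn_cosh_div_sinh (Set.mem_Ioi.2 (by positivity)) (Set.mem_Ioi.2 (by positivity))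
      (by gcongr; linarith)
  have hsqrt : √l ≤ √(β + l) := Real.sqrt_le_sqrt (by linarith)
  rw [div_le_iff₀ (by positivity), mul_comm]
  gcongr

theorem le_K1_mul_sqrt_mul_tanh {β r : ℝ} (hβ : 0 < β) (hr : 0 < r) :
    r ≤ K1 β * (√(β + r ^ 2) * Real.tanh (π * √(β + r ^ 2))) := by
  have hterm : √(r ^ 2) * (Real.cosh (π * √(β + r ^ 2)) / Real.sinh (π * √(β + r ^ 2))) /
      √(β + r ^ 2) ≤ K1 β :=
    le_ciSup (bddAbove_range_K1 hβ) ⟨r ^ 2, Set.mem_Ioi.2 (by positivity)⟩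
  rw [Real.sqrt_sq hr.le] at hterm
  rw [Real.tanh_eq_sinh_div_cosh, ← div_le_iff₀ (by positivity)]
  refine le_of_eq_of_le ?_ hterm
  field_simp

theorem le_mul_sqrt_mul_sqrt_of_forall_pos {y K G N : ℝ} (hK : 0 ≤ K) (hG : 0 ≤ G) (hN : 0 ≤ N)
    (h : ∀ s > 0, 2 * s * y ≤ K * (G + s ^ 2 * N)) : y ≤ K * √G * √N := by
  rcases le_total y 0 with hy | hy
  · exact hy.trans (by positivity)
  have hquad : ∀ s : ℝ, 0 ≤ K * N * (s * s) + -2 * y * s + K * G := by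
    intro s
    rcases le_or_gt s 0 with hs | hs
    · have hlin : 0 ≤ y * -s := mul_nonneg hy (neg_nonneg.2 hs)
      have hsq : 0 ≤ K * N * (s * s) := mul_nonneg (by positivity) (mul_self_nonneg s)
      have hconst : 0 ≤ K * G := by positivity
      linarith
    · linarith [h s hs]
  have hdiscrim := discrim_le_zero hquad
  rw [discrim] at hdiscrim
  refine le_of_sq_le_sq ?_ (by positivity)
  rw [mul_pow, mul_pow, Real.sq_sqrt hG, Real.sq_sqrt hN]
  linarith

theorem periodic_deriv {𝕜 F : Type*} [NontriviallyNormedField 𝕜] [NormedAddCommGroup F]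
    [NormedSpace 𝕜 F] {f : 𝕜 → F} {c : 𝕜} (hf : Function.Periodic f c) :
    Function.Periodic (deriv f) c := fun t => by
  rw [← deriv_comp_add_const, hf.funext]

section Energy

variable {E : Type*} [NormedAddCommGroup E] [InnerProductSpace ℝ E] {u : ℝ → E}

theorem riccati_boundary_le_integral {w w' : ℝ → ℝ} {a b : ℝ} (hab : a ≤ b)
    (hu : ContDiff ℝ 1 u) (hw : ∀ t, HasDerivAt w (w' t) t) (hw' : Continuous w') :
    w b * ‖u b‖ ^ 2 - w a * ‖u a‖ ^ 2 ≤
      ∫ t in a..b, (‖deriv u t‖ ^ 2 + (w' t + w t ^ 2) * ‖u t‖ ^ 2) := by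
  have hw_cont : Continuous w := continuous_iff_continuousAt.2 fun t => (hw t).continuousAt
  have hderiv : ∀ t, HasDerivAt (fun t => w t * ‖u t‖ ^ 2)
      (w' t * ‖u t‖ ^ 2 + w t * (2 * inner ℝ (u t) (deriv u t))) t := fun t =>
    (hw t).mul (hu.differentiable one_ne_zero t).hasDerivAt.norm_sq
  rw [← intervalIntegral.integral_eq_sub_of_hasDerivAt (fun t _ => hderiv t)
    (Continuous.intervalIntegrable (by fun_prop) _ _)]
  refine intervalIntegral.integral_mono_on hab (Continuous.intervalIntegrable (by fun_prop) _ _)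
    (Continuous.intervalIntegrable (by fun_prop) _ _) fun t _ => ?_
  have hsq : 0 ≤ ‖deriv u t - w t • u t‖ ^ 2 := sq_nonneg _
  rw [norm_sub_sq_real, inner_smul_right, real_inner_comm, norm_smul, mul_pow, Real.norm_eq_abs,
    sq_abs] at hsq
  linarith

theorem mul_tanh_mul_norm_sq_add_norm_sq_le_integral {a b : ℝ} (hab : a ≤ b)
    (hu : ContDiff ℝ 1 u) (m : ℝ) :
    m * Real.tanh (m * ((b - a) / 2)) * (‖u a‖ ^ 2 + ‖u b‖ ^ 2) ≤
      ∫ t in a..b, (‖deriv u t‖ ^ 2 + m ^ 2 * ‖u t‖ ^ 2) := by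
  set w : ℝ → ℝ := fun t => m * Real.tanh (m * (t - (a + b) / 2)) with hw_def
  have hw : ∀ t, HasDerivAt w (m ^ 2 - w t ^ 2) t := fun t => by
    have harg : HasDerivAt (fun t => m * (t - (a + b) / 2)) (m * 1) t :=
      ((hasDerivAt_id t).sub_const _).const_mul m
    refine (((hasDerivAt_tanh _).comp t harg).const_mul m).congr_deriv ?_
    ring
  have hw_cont : Continuous w := continuous_iff_continuousAt.2 fun t => (hw t).continuousAt
  have hwa : w a = -(m * Real.tanh (m * ((b - a) / 2))) := by
    rw [hw_def, ← mul_neg, ← Real.tanh_neg]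
    ring_nf
  have hwb : w b = m * Real.tanh (m * ((b - a) / 2)) := by
    rw [hw_def]
    ring_nf
  have hriccati := riccati_boundary_le_integral hab hu hw (by fun_prop)
  simp only [sub_add_cancel, hwa, hwb] at hriccati
  linarith

theorem two_mul_tanh_mul_norm_sq_le_integral_of_periodic {L : ℝ} (hL : 0 ≤ L)
    (hu : ContDiff ℝ 1 u) (hper : Function.Periodic u L) (m x : ℝ) :
    2 * (m * Real.tanh (m * (L / 2))) * ‖u x‖ ^ 2 ≤
      ∫ t in (0 : ℝ)..L, (‖deriv u t‖ ^ 2 + m ^ 2 * ‖u t‖ ^ 2) := by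
  have hper_energy : Function.Periodic (fun t => ‖deriv u t‖ ^ 2 + m ^ 2 * ‖u t‖ ^ 2) L := fun t =>
    by simp only [periodic_deriv hper t, hper t]
  have hshift := hper_energy.intervalIntegral_add_eq 0 x
  have hends := mul_tanh_mul_norm_sq_add_norm_sq_le_integral (le_add_of_nonneg_right hL) hu m
    (a := x)
  rw [hper x, add_sub_cancel_left] at hends
  rw [zero_add] at hshift
  rw [hshift]
  linarith

theorem two_mul_norm_sq_le_K1_mul_of_periodic {α β L r : ℝ} (hα : 0 < α) (hβ : 0 < β)
    (hL : L = 2 * π / α) (hu : ContDiff ℝ 1 u) (hper : Function.Periodic u L) (hr : 0 < r)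
    (x : ℝ) :
    2 * (α * r) * ‖u x‖ ^ 2 ≤ K1 β *
      ((∫ t in (0 : ℝ)..L, (‖deriv u t‖ ^ 2 + α ^ 2 * β * ‖u t‖ ^ 2)) +
        (α * r) ^ 2 * ∫ t in (0 : ℝ)..L, ‖u t‖ ^ 2) := by
  have hL_nonneg : 0 ≤ L := by rw [hL]; positivity
  have hsplit : ∫ t in (0 : ℝ)..L, (‖deriv u t‖ ^ 2 + (α * √(β + r ^ 2)) ^ 2 * ‖u t‖ ^ 2) =
      (∫ t in (0 : ℝ)..L, (‖deriv u t‖ ^ 2 + α ^ 2 * β * ‖u t‖ ^ 2)) +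
        (α * r) ^ 2 * ∫ t in (0 : ℝ)..L, ‖u t‖ ^ 2 := by
    rw [← intervalIntegral.integral_const_mul, ← intervalIntegral.integral_add
      (Continuous.intervalIntegrable (by fun_prop) _ _)
      (Continuous.intervalIntegrable (by fun_prop) _ _)]
    refine intervalIntegral.integral_congr fun t _ => ?_
    simp only [mul_pow, Real.sq_sqrt (by positivity : 0 ≤ β + r ^ 2)]
    ring
  have harg : α * √(β + r ^ 2) * (L / 2) = π * √(β + r ^ 2) := by
    rw [hL]
    field_simp
  calc 2 * (α * r) * ‖u x‖ ^ 2
      ≤ 2 * (α * (K1 β * (√(β + r ^ 2) * Real.tanh (π * √(β + r ^ 2))))) * ‖u x‖ ^ 2 := by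
        gcongr
        exact le_K1_mul_sqrt_mul_tanh hβ hr
    _ = K1 β * (2 * (α * √(β + r ^ 2) * Real.tanh (α * √(β + r ^ 2) * (L / 2))) * ‖u x‖ ^ 2) := by
        rw [harg]
        ring
    _ ≤ _ := by
        rw [← hsplit]
        exact mul_le_mul_of_nonneg_left
          (two_mul_tanh_mul_norm_sq_le_integral_of_periodic hL_nonneg hu hper _ x) (K1_nonneg β)

theorem stmt_3_general {α β L : ℝ} (hα : 0 < α) (hβ : 0 < β) (hL : L = 2 * π / α)
    (hu : ContDiff ℝ 1 u) (hper : Function.Periodic u L) (x : ℝ) :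
    ‖u x‖ ^ 2 ≤ K1 β *
      √(∫ t in (0 : ℝ)..L, (‖deriv u t‖ ^ 2 + α ^ 2 * β * ‖u t‖ ^ 2)) *
      √(∫ t in (0 : ℝ)..L, ‖u t‖ ^ 2) := by
  have hL_nonneg : 0 ≤ L := by rw [hL]; positivity
  refine le_mul_sqrt_mul_sqrt_of_forall_pos (K1_nonneg β)
    (intervalIntegral.integral_nonneg hL_nonneg fun t _ => by positivity)
    (intervalIntegral.integral_nonneg hL_nonneg fun t _ => by positivity) fun s hs => ?_
  have hbound := two_mul_norm_sq_le_K1_mul_of_periodic hα hβ hL hu hper (div_pos hs hα) x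
  rwa [mul_div_cancel₀ s hα.ne'] at hbound

end Energy

theorem stmt_3 (α β : ℝ) (hα : 0 < α) (hβ : 0 < β) (L : ℝ) (hL : L = 2 * π / α)
    (u : ℝ → ℝ) (hu : ContDiff ℝ 1 u) (hper : Function.Periodic u L) (x : ℝ) :
    u x ^ 2 ≤ K1 β *
      Real.sqrt (∫ t in (0:ℝ)..L, ((deriv u t) ^ 2 + α ^ 2 * β * (u t) ^ 2)) *
      Real.sqrt (∫ t in (0:ℝ)..L, (u t) ^ 2) := by
  simpa only [Real.norm_eq_abs, sq_abs] using stmt_3_general hα hβ hL hu hper x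
end

section
/- Let α > 0 and β > 0, and set L = 2π/α. The constant K₁(β) is sharp in the interpolation inequality: for every K < K₁(β) there exists a real-valued C¹ L-periodic function u on ℝ with max_x u(x)² > K · ( ∫_0^L ( u'(x)² + α² β u(x)² ) dx )^{1/2} · ( ∫_0^L u(x)² dx )^{1/2}. -/
open Real MeasureTheory

/-!
By the Mittag-Leffler expansion of the cotangent, `∑ n : ℤ, 1 / (n² + m²) = π coth (π m) / m`. For
`m² = β + λ` the expression under the supremum in `K1 β` is therefore `√λ / π` times the value at
`0` of the periodic Green function `∑ n : ℤ, cos (n α x) / (n² + m²)` of `-d²/dx² + α² m²`. A finite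
partial sum `u` of this series satisfies `∫ u'² + α² (β + λ) u² = 2 π α u(0)`, and AM-GM applied to
the two summands `∫ u'² + α² β u²` and `α² λ ∫ u²` gives
`√λ · √(∫ u'² + α² β u²) · √(∫ u²) ≤ π u(0)`. Once `√λ / π · u(0) > K`, multiplying by `u(0)`
yields the claim.

The functions `cos (n α x) + sin (n α x)`, `n : ℤ`, replace the cosines: they are orthogonal with
the same norm for every `n`, including `n = 0`, and over symmetric sets of `n` the sines cancel.
-/

section CothSeries

theorem hasSum_int_one_div_sq_sub_sq {z : ℂ} (hz : z ∈ Complex.integerComplement) :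
    HasSum (fun n : ℤ ↦ 1 / (z ^ 2 - n ^ 2)) (π * Complex.cot (π * z) / z) := by
  have z_ne_zero : z ≠ 0 := Complex.integerComplement.ne_zero hz
  have hasSum_cotTerm : HasSum (cotTerm z) (π * Complex.cot (π * z) - 1 / z) :=
    (summable_cotTerm hz).hasSum_iff_tendsto_nat.mpr (tendsto_logDeriv_euler_cot_sub hz)
  have cotTerm_div (n : ℕ) : cotTerm z n / (2 * z) = 1 / (z ^ 2 - (n + 1) ^ 2) := by
    rw [cotTerm_identity hz, sq_sub_sq]
    field_simp
  have hasSum_succ : HasSum (fun n : ℕ ↦ 1 / (z ^ 2 - ((n : ℂ) + 1) ^ 2))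
      ((π * Complex.cot (π * z) - 1 / z) / (2 * z)) := by
    simpa only [cotTerm_div] using hasSum_cotTerm.div_const (2 * z)
  convert HasSum.of_add_one_of_neg_add_one (f := fun n : ℤ ↦ 1 / (z ^ 2 - (n : ℂ) ^ 2))
    (by simpa using hasSum_succ) (by simpa [← neg_add_rev, add_comm] using hasSum_succ) using 1
  push_cast
  field_simp
  ring

theorem hasSum_int_one_div_sq_add_sq {m : ℝ} (hm : m ≠ 0) :
    HasSum (fun n : ℤ ↦ 1 / ((n : ℝ) ^ 2 + m ^ 2)) (π * (cosh (π * m) / sinh (π * m)) / m) := by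
  have mem_integerComplement : (m * Complex.I : ℂ) ∈ Complex.integerComplement := by
    rintro ⟨n, hn⟩
    exact hm (by simpa using (congrArg Complex.im hn).symm)
  have sinh_ne_zero : Complex.sinh (π * m) ≠ 0 := by
    exact_mod_cast (sinh_eq_zero.not.mpr (mul_ne_zero pi_ne_zero hm))
  have term_eq (n : ℤ) :
      -(1 / ((m * Complex.I) ^ 2 - n ^ 2)) = ((1 / ((n : ℝ) ^ 2 + m ^ 2) : ℝ) : ℂ) := by
    push_cast
    rw [mul_pow, Complex.I_sq, ← one_div_neg_eq_neg_one_div]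
    ring_nf
  have sum_eq : -(π * Complex.cot (π * (m * Complex.I)) / (m * Complex.I)) =
      ((π * (cosh (π * m) / sinh (π * m)) / m : ℝ) : ℂ) := by
    push_cast
    rw [Complex.cot_eq_cos_div_sin, ← mul_assoc, Complex.cos_mul_I, Complex.sin_mul_I]
    field_simp
    simp [neg_div]
  have hasSum_neg := (hasSum_int_one_div_sq_sub_sq mem_integerComplement).neg
  simp_rw [term_eq, sum_eq] at hasSum_neg
  exact Complex.hasSum_ofReal.mp hasSum_neg

end CothSeries

section Cas

/-- The function `cas x = cos x + sin x`, the kernel of the Hartley transform. Its integer dilates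
form an orthogonal system of real functions spanning all trigonometric polynomials. -/
noncomputable def cas (x : ℝ) : ℝ := cos x + sin x

theorem cas_zero : cas 0 = 1 := by simp [cas]

theorem contDiff_cas {n : WithTop ℕ∞} : ContDiff ℝ n cas :=
  contDiff_cos.add contDiff_sin

theorem continuous_cas : Continuous cas :=
  contDiff_cas.continuous (n := 0)

theorem hasDerivAt_cas (x : ℝ) : HasDerivAt cas (cas (-x)) x :=
  ((hasDerivAt_cos x).add (hasDerivAt_sin x)).congr_deriv (by simp [cas, add_comm])

theorem cas_add_int_mul_two_pi (x : ℝ) (n : ℤ) : cas (x + n * (2 * π)) = cas x := by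
  simp only [cas, cos_add_int_mul_two_pi, sin_add_int_mul_two_pi]

theorem cas_mul_cas (x y : ℝ) : cas x * cas y = cos (x - y) + sin (x + y) := by
  rw [cas, cas, cos_sub, sin_add]
  ring

end Cas

section Orthogonality

variable {α : ℝ}

theorem integral_cos_int_mul (hα : α ≠ 0) (n : ℤ) :
    ∫ t in (0 : ℝ)..2 * π / α, cos (n * (α * t)) = if n = 0 then 2 * π / α else 0 := by
  split_ifs with hn
  · simp [hn]
  · have freq_ne_zero : (n : ℝ) * α ≠ 0 := mul_ne_zero (Int.cast_ne_zero.mpr hn) hα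
    have freq_mul_period : n * α * (2 * π / α) = (2 * n : ℤ) * π := by
      push_cast
      field_simp
    simp_rw [← mul_assoc]
    rw [intervalIntegral.integral_comp_mul_left cos freq_ne_zero, integral_cos, freq_mul_period,
      sin_int_mul_pi]
    simp

theorem integral_sin_int_mul (hα : α ≠ 0) (n : ℤ) :
    ∫ t in (0 : ℝ)..2 * π / α, sin (n * (α * t)) = 0 := by
  rcases eq_or_ne n 0 with rfl | hn
  · simp
  · have freq_ne_zero : (n : ℝ) * α ≠ 0 := mul_ne_zero (Int.cast_ne_zero.mpr hn) hα
    have freq_mul_period : n * α * (2 * π / α) = n * (2 * π) := by field_simp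
    simp_rw [← mul_assoc]
    rw [intervalIntegral.integral_comp_mul_left sin freq_ne_zero, integral_sin, freq_mul_period,
      cos_int_mul_two_pi]
    simp

theorem integral_cas_mul_cas (hα : α ≠ 0) (j k : ℤ) :
    ∫ t in (0 : ℝ)..2 * π / α, cas (j * (α * t)) * cas (k * (α * t)) =
      if j = k then 2 * π / α else 0 := by
  have cas_mul_cas_eq (t : ℝ) : cas (j * (α * t)) * cas (k * (α * t)) =
      cos ((j - k : ℤ) * (α * t)) + sin ((j + k : ℤ) * (α * t)) := by
    rw [cas_mul_cas, Int.cast_sub, Int.cast_add, sub_mul, add_mul]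
  simp_rw [cas_mul_cas_eq]
  rw [intervalIntegral.integral_add (Continuous.intervalIntegrable (by fun_prop) _ _)
    (Continuous.intervalIntegrable (by fun_prop) _ _), integral_cos_int_mul hα,
    integral_sin_int_mul hα, add_zero]
  simp only [sub_eq_zero]

theorem integral_sum_mul_sq_of_orthogonal {ι : Type*} [DecidableEq ι] {f : ι → ℝ → ℝ} {a b w : ℝ}
    (hf : ∀ i, Continuous (f i))
    (horth : ∀ i j, ∫ t in a..b, f i t * f j t = if i = j then w else 0)
    (s : Finset ι) (c : ι → ℝ) :
    ∫ t in a..b, (∑ i ∈ s, c i * f i t) ^ 2 = w * ∑ i ∈ s, c i ^ 2 := by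
  have sq_sum (t : ℝ) : (∑ i ∈ s, c i * f i t) ^ 2 =
      ∑ i ∈ s, ∑ j ∈ s, c i * c j * (f i t * f j t) := by
    rw [sq, Finset.sum_mul_sum]
    exact Finset.sum_congr rfl fun i _ ↦ Finset.sum_congr rfl fun j _ ↦ by ring
  calc ∫ t in a..b, (∑ i ∈ s, c i * f i t) ^ 2
      = ∑ i ∈ s, ∑ j ∈ s, c i * c j * ∫ t in a..b, f i t * f j t := by
        simp_rw [sq_sum]
        rw [intervalIntegral.integral_finsetSum
          fun i _ ↦ Continuous.intervalIntegrable (by fun_prop) _ _]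
        refine Finset.sum_congr rfl fun i _ ↦ ?_
        rw [intervalIntegral.integral_finsetSum
          fun j _ ↦ Continuous.intervalIntegrable (by fun_prop) _ _]
        simp_rw [intervalIntegral.integral_const_mul]
    _ = ∑ i ∈ s, w * c i ^ 2 := by
        refine Finset.sum_congr rfl fun i hi ↦ ?_
        simp only [horth, mul_ite, mul_zero, Finset.sum_ite_eq, if_pos hi]
        ring
    _ = w * ∑ i ∈ s, c i ^ 2 := (Finset.mul_sum ..).symm

end Orthogonality

section CasPoly

/-- The real trigonometric polynomial of period `2π / α` with frequencies in `s` and Hartley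
coefficients `c`. -/
noncomputable def casPoly (α : ℝ) (s : Finset ℤ) (c : ℤ → ℝ) (x : ℝ) : ℝ :=
  ∑ k ∈ s, c k * cas (k * (α * x))

variable {α : ℝ} (s : Finset ℤ) (c : ℤ → ℝ)

theorem casPoly_zero : casPoly α s c 0 = ∑ k ∈ s, c k := by
  simp [casPoly, cas_zero]

theorem contDiff_casPoly {n : WithTop ℕ∞} : ContDiff ℝ n (casPoly α s c) :=
  ContDiff.sum fun _ _ ↦ contDiff_const.mul (contDiff_cas.comp (by fun_prop))

theorem periodic_casPoly (hα : α ≠ 0) : Function.Periodic (casPoly α s c) (2 * π / α) := by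
  intro x
  refine Finset.sum_congr rfl fun k _ ↦ ?_
  have shift_arg : (k : ℝ) * (α * (x + 2 * π / α)) = k * (α * x) + k * (2 * π) := by
    field_simp
  rw [shift_arg, cas_add_int_mul_two_pi]

theorem deriv_casPoly (x : ℝ) :
    deriv (casPoly α s c) x = ∑ k ∈ s, c k * (k * α) * cas ((-k : ℤ) * (α * x)) := by
  refine (HasDerivAt.fun_sum fun k _ ↦ ?_).deriv
  have hasDerivAt_arg : HasDerivAt (fun y : ℝ ↦ k * (α * y)) (k * (α * 1)) x :=
    ((hasDerivAt_id x).const_mul α).const_mul (k : ℝ)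
  refine (((hasDerivAt_cas _).comp x hasDerivAt_arg).const_mul (c k)).congr_deriv ?_
  push_cast
  ring_nf

theorem integral_casPoly_sq (hα : α ≠ 0) :
    ∫ t in (0 : ℝ)..2 * π / α, casPoly α s c t ^ 2 = 2 * π / α * ∑ k ∈ s, c k ^ 2 :=
  integral_sum_mul_sq_of_orthogonal (fun _ ↦ continuous_cas.comp (by fun_prop))
    (integral_cas_mul_cas hα) s c

theorem integral_deriv_casPoly_sq (hα : α ≠ 0) :
    ∫ t in (0 : ℝ)..2 * π / α, deriv (casPoly α s c) t ^ 2 =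
      2 * π / α * ∑ k ∈ s, (c k * (k * α)) ^ 2 := by
  simp_rw [deriv_casPoly]
  refine integral_sum_mul_sq_of_orthogonal (f := fun (k : ℤ) t ↦ cas ((-k : ℤ) * (α * t)))
    (fun _ ↦ continuous_cas.comp (by fun_prop)) (fun j k ↦ ?_) s _
  simpa only [neg_inj] using integral_cas_mul_cas hα (-j) (-k)

theorem integral_deriv_casPoly_sq_add (hα : α ≠ 0) (b : ℝ) :
    ∫ t in (0 : ℝ)..2 * π / α, (deriv (casPoly α s c) t ^ 2 + α ^ 2 * b * casPoly α s c t ^ 2) =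
      2 * π * α * ∑ k ∈ s, (k ^ 2 + b) * c k ^ 2 := by
  have continuous_deriv : Continuous (deriv (casPoly α s c)) :=
    (contDiff_casPoly s c (n := 1)).continuous_deriv le_rfl
  have continuous_self : Continuous (casPoly α s c) :=
    (contDiff_casPoly s c (n := 0)).continuous
  rw [intervalIntegral.integral_add (Continuous.intervalIntegrable (by fun_prop) _ _)
    (Continuous.intervalIntegrable (by fun_prop) _ _), intervalIntegral.integral_const_mul,
    integral_deriv_casPoly_sq s c hα, integral_casPoly_sq s c hα]
  simp only [Finset.mul_sum, ← Finset.sum_add_distrib]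
  refine Finset.sum_congr rfl fun k _ ↦ ?_
  field_simp

end CasPoly

theorem two_mul_mul_sqrt_mul_sqrt_le {a b : ℝ} (ha : 0 ≤ a) (hb : 0 ≤ b) (r : ℝ) :
    2 * r * (√a * √b) ≤ a + r ^ 2 * b := by
  calc 2 * r * (√a * √b) = 2 * √a * (r * √b) := by ring
    _ ≤ √a ^ 2 + (r * √b) ^ 2 := two_mul_le_add_sq _ _
    _ = a + r ^ 2 * b := by rw [mul_pow, sq_sqrt ha, sq_sqrt hb]

section GreenPoly

/-- The partial sum over `s` of the Hartley series of the `2π / α`-periodic Green function of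
`-d²/dx² + α² m²`, up to normalization. These are the near-extremal functions. -/
noncomputable def greenPoly (α m : ℝ) (s : Finset ℤ) : ℝ → ℝ :=
  casPoly α s fun k ↦ 1 / (k ^ 2 + m ^ 2)

variable {α β l m : ℝ} (s : Finset ℤ)

theorem greenPoly_zero : greenPoly α m s 0 = ∑ k ∈ s, 1 / ((k : ℝ) ^ 2 + m ^ 2) :=
  casPoly_zero s _

theorem integral_deriv_greenPoly_sq_add (hα : α ≠ 0) (hm : m ≠ 0) (hβl : m ^ 2 = β + l) :
    (∫ t in (0 : ℝ)..2 * π / α,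
        (deriv (greenPoly α m s) t ^ 2 + α ^ 2 * β * greenPoly α m s t ^ 2)) +
      α ^ 2 * l * ∫ t in (0 : ℝ)..2 * π / α, greenPoly α m s t ^ 2 =
      2 * π * α * greenPoly α m s 0 := by
  rw [greenPoly_zero, greenPoly, integral_deriv_casPoly_sq_add s _ hα, integral_casPoly_sq s _ hα]
  simp only [Finset.mul_sum, ← Finset.sum_add_distrib]
  refine Finset.sum_congr rfl fun k _ ↦ ?_
  have denom_ne_zero : (k : ℝ) ^ 2 + m ^ 2 ≠ 0 := by positivity
  field_simp
  rw [hβl]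
  ring

theorem greenPoly_zero_pos (hm : m ≠ 0) {s : Finset ℤ} (hs : s.Nonempty) :
    0 < greenPoly α m s 0 := by
  rw [greenPoly_zero]
  exact Finset.sum_pos (fun k _ ↦ by positivity) hs

theorem exists_nonempty_lt_greenPoly_zero (hm : m ≠ 0) {a : ℝ}
    (ha : a < π * (cosh (π * m) / sinh (π * m)) / m) :
    ∃ s : Finset ℤ, s.Nonempty ∧ a < greenPoly α m s 0 := by
  have eventually_lt := (hasSum_int_one_div_sq_add_sq hm).eventually_const_lt ha
  obtain ⟨s, lt_sum, zero_mem⟩ :=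
    (eventually_lt.and (Filter.eventually_ge_atTop {0})).exists
  exact ⟨s, ⟨0, by simpa using zero_mem⟩, lt_sum.trans_eq (greenPoly_zero s).symm⟩

theorem sqrt_mul_sqrt_integral_mul_sqrt_integral_greenPoly_le (hα : 0 < α) (hβ : 0 ≤ β)
    (hl : 0 ≤ l) (hm : m ≠ 0) (hβl : m ^ 2 = β + l) :
    √l * (√(∫ t in (0 : ℝ)..2 * π / α,
          (deriv (greenPoly α m s) t ^ 2 + α ^ 2 * β * greenPoly α m s t ^ 2)) *
        √(∫ t in (0 : ℝ)..2 * π / α, greenPoly α m s t ^ 2)) ≤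
      π * greenPoly α m s 0 := by
  have energy_eq := integral_deriv_greenPoly_sq_add s hα.ne' hm hβl
  set A := ∫ t in (0 : ℝ)..2 * π / α,
    (deriv (greenPoly α m s) t ^ 2 + α ^ 2 * β * greenPoly α m s t ^ 2)
  set B := ∫ t in (0 : ℝ)..2 * π / α, greenPoly α m s t ^ 2
  have period_nonneg : 0 ≤ 2 * π / α := by positivity
  have A_nonneg : 0 ≤ A := intervalIntegral.integral_nonneg period_nonneg fun _ _ ↦ by positivity
  have B_nonneg : 0 ≤ B := intervalIntegral.integral_nonneg period_nonneg fun _ _ ↦ by positivity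
  refine le_of_mul_le_mul_left ?_ (mul_pos two_pos hα)
  calc 2 * α * (√l * (√A * √B)) = 2 * (α * √l) * (√A * √B) := by ring
    _ ≤ A + (α * √l) ^ 2 * B := two_mul_mul_sqrt_mul_sqrt_le A_nonneg B_nonneg _
    _ = A + α ^ 2 * l * B := by rw [mul_pow, sq_sqrt hl]
    _ = 2 * α * (π * greenPoly α m s 0) := by rw [energy_eq]; ring

theorem exists_mul_sqrt_integral_mul_sqrt_integral_lt_greenPoly_zero_sq (hα : 0 < α) (hβ : 0 ≤ β)
    (hl : 0 < l) (hβl : m ^ 2 = β + l) {K : ℝ}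
    (hK : K < √l * (cosh (π * m) / sinh (π * m)) / m) :
    ∃ s : Finset ℤ, K *
        √(∫ t in (0 : ℝ)..2 * π / α,
          (deriv (greenPoly α m s) t ^ 2 + α ^ 2 * β * greenPoly α m s t ^ 2)) *
        √(∫ t in (0 : ℝ)..2 * π / α, greenPoly α m s t ^ 2) < greenPoly α m s 0 ^ 2 := by
  have hm : m ≠ 0 := by
    rintro rfl
    linarith
  have sqrt_l_pos : 0 < √l := sqrt_pos.mpr hl
  have lt_coth : K * π / √l < π * (cosh (π * m) / sinh (π * m)) / m := by
    rw [div_lt_iff₀ sqrt_l_pos]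
    calc K * π < √l * (cosh (π * m) / sinh (π * m)) / m * π := mul_lt_mul_of_pos_right hK pi_pos
      _ = π * (cosh (π * m) / sinh (π * m)) / m * √l := by ring
  obtain ⟨s, s_nonempty, lt_greenPoly⟩ := exists_nonempty_lt_greenPoly_zero (α := α) hm lt_coth
  have greenPoly_pos : 0 < greenPoly α m s 0 := greenPoly_zero_pos hm s_nonempty
  have am_gm := sqrt_mul_sqrt_integral_mul_sqrt_integral_greenPoly_le s hα hβ hl.le hm hβl
  refine ⟨s, ?_⟩
  rw [mul_assoc]
  set P := √(∫ t in (0 : ℝ)..2 * π / α,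
      (deriv (greenPoly α m s) t ^ 2 + α ^ 2 * β * greenPoly α m s t ^ 2)) *
    √(∫ t in (0 : ℝ)..2 * π / α, greenPoly α m s t ^ 2)
  have P_nonneg : 0 ≤ P := by positivity
  rcases P_nonneg.eq_or_lt with P_eq_zero | P_pos
  · rw [← P_eq_zero, mul_zero]
    positivity
  refine lt_of_mul_lt_mul_left ?_ pi_pos.le
  calc π * (K * P) = K * π * P := by ring
    _ < greenPoly α m s 0 * √l * P :=
        mul_lt_mul_of_pos_right ((div_lt_iff₀ sqrt_l_pos).mp lt_greenPoly) P_pos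
    _ = greenPoly α m s 0 * (√l * P) := by ring
    _ ≤ greenPoly α m s 0 * (π * greenPoly α m s 0) :=
        mul_le_mul_of_nonneg_left am_gm greenPoly_pos.le
    _ = π * greenPoly α m s 0 ^ 2 := by ring

end GreenPoly

theorem stmt_4 (α β : ℝ) (hα : 0 < α) (hβ : 0 < β) (L : ℝ) (hL : L = 2 * π / α)
    (K : ℝ) (hK : K < K1 β) :
    ∃ u : ℝ → ℝ, ContDiff ℝ 1 u ∧ Function.Periodic u L ∧
      ∃ x : ℝ, u x ^ 2 > K *
        Real.sqrt (∫ t in (0:ℝ)..L, ((deriv u t) ^ 2 + α ^ 2 * β * (u t) ^ 2)) *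
        Real.sqrt (∫ t in (0:ℝ)..L, (u t) ^ 2) := by
  have : Nonempty (Set.Ioi (0 : ℝ)) := ⟨⟨1, Set.mem_Ioi.mpr one_pos⟩⟩
  obtain ⟨⟨l, hl : 0 < l⟩, K_lt⟩ := exists_lt_of_lt_ciSup hK
  obtain ⟨s, lt_greenPoly⟩ := exists_mul_sqrt_integral_mul_sqrt_integral_lt_greenPoly_zero_sq
    hα hβ.le hl (sq_sqrt (add_pos hβ hl).le) K_lt
  subst hL
  exact ⟨greenPoly α √(β + l) s, contDiff_casPoly s _, periodic_casPoly s _ hα.ne', 0,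
    lt_greenPoly⟩
end

section
/- For every β ≥ 0.046 one has sup_{λ>0} √λ · coth(π√(β+λ)) / √(β+λ) = 1; that is, K₁(β) = 1 for all β ≥ 0.046 (the paper shows this for all β ≥ β_* = 0.045…). -/
open Real MeasureTheory

/-!
Put `s = √(β + λ)`. Squaring and using `cosh² - sinh² = 1` and `s² - λ = β`, the inequality
`√λ · coth (π s) / s ≤ 1` becomes `(s / cosh (π s))² ≤ β`. As the quotient tends to `1` when
`λ → ∞`, its supremum equals `1` exactly when `β` is at least `β_* = sup_s (s / cosh (π s))²`.
A line through the origin lying below the graph of `cosh` bounds `β_*` from above.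
-/

open Filter Topology Nat

section CoshBounds

theorem sum_range_le_cosh (n : ℕ) (x : ℝ) :
    ∑ i ∈ Finset.range n, x ^ (2 * i) / (2 * i)! ≤ cosh x :=
  sum_le_hasSum _ (fun i _ ↦ div_nonneg ((even_two_mul i).pow_nonneg x) (cast_nonneg _))
    (hasSum_cosh x)

theorem mul_le_cosh (x : ℝ) : 1.485 * x ≤ cosh x := by
  have taylor : 1 + x ^ 2 / 2 + x ^ 4 / 24 ≤ cosh x := by
    simpa [Finset.sum_range_succ, factorial] using sum_range_le_cosh 3 x
  -- The minimum of `cosh x / x` on the positive axis is attained near `x = 1.2`.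
  nlinarith [sq_nonneg (x ^ 2 - 1.2 ^ 2), sq_nonneg (x - 1.2)]

theorem cosh_mul_abs (a s : ℝ) : cosh (a * |s|) = cosh (a * s) := by
  rw [← cosh_abs (a * |s|), ← cosh_abs (a * s), abs_mul, abs_mul, abs_abs]

theorem div_cosh_sq_le_of_forall_mul_le_cosh {a c : ℝ} (ha : 0 < a) (hc : 0 < c)
    (h : ∀ x, c * x ≤ cosh x) (s : ℝ) : (s / cosh (a * s)) ^ 2 ≤ 1 / (c * a) ^ 2 := by
  have line_le : c * a * |s| ≤ cosh (a * s) := by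
    simpa only [cosh_mul_abs, mul_assoc] using h (a * |s|)
  have abs_le : |s / cosh (a * s)| ≤ 1 / (c * a) := by
    rw [abs_div, abs_of_pos (cosh_pos _), div_le_div_iff₀ (cosh_pos _) (by positivity)]
    linarith
  rw [← sq_abs, ← one_div_pow]
  gcongr

end CoshBounds

section CriticalBeta

/-- The threshold `β_* = sup_s (s / cosh (a s))²` in the parameter `β`, above which
`√λ · coth (a √(β+λ)) / √(β+λ)` stays below `1` for all `λ > 0`. The paper's case is `a = π`. -/
noncomputable def criticalBeta (a : ℝ) : ℝ :=
  ⨆ s : ℝ, (s / cosh (a * s)) ^ 2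

variable {a β : ℝ}

theorem bddAbove_range_div_cosh_sq (ha : 0 < a) :
    BddAbove (Set.range fun s : ℝ ↦ (s / cosh (a * s)) ^ 2) :=
  ⟨_, Set.forall_mem_range.2 <|
    div_cosh_sq_le_of_forall_mul_le_cosh ha (by norm_num) mul_le_cosh⟩

theorem criticalBeta_le_iff (ha : 0 < a) :
    criticalBeta a ≤ β ↔ ∀ s : ℝ, (s / cosh (a * s)) ^ 2 ≤ β :=
  ciSup_le_iff (bddAbove_range_div_cosh_sq ha)

theorem criticalBeta_pi_le : criticalBeta π ≤ 0.046 :=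
  (criticalBeta_le_iff pi_pos).2 fun s ↦ calc
    (s / cosh (π * s)) ^ 2 ≤ 1 / (1.485 * π) ^ 2 :=
      div_cosh_sq_le_of_forall_mul_le_cosh pi_pos (by norm_num) mul_le_cosh s
    _ ≤ 1 / (1.485 * 3.14) ^ 2 := by gcongr; exact pi_gt_d2.le
    _ ≤ 0.046 := by norm_num

end CriticalBeta

section CothRatio

/-- The quotient `√λ · coth (a √(β+λ)) / √(β+λ)`, with `λ` written `l`; `K1 β` is its supremum
over `l > 0` for `a = π`. -/
noncomputable def cothRatio (a β l : ℝ) : ℝ :=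
  √l * (cosh (a * √(β + l)) / sinh (a * √(β + l))) / √(β + l)

variable {a β l : ℝ}

theorem cothRatio_le_one_iff (ha : 0 < a) (hl : 0 ≤ l) (hβl : 0 < β + l) :
    cothRatio a β l ≤ 1 ↔ (√(β + l) / cosh (a * √(β + l))) ^ 2 ≤ β := by
  have sq_s : √(β + l) ^ 2 = β + l := sq_sqrt hβl.le
  have s_pos : 0 < √(β + l) := sqrt_pos.2 hβl
  have sinh_pos : 0 < sinh (a * √(β + l)) := sinh_pos_iff.2 (mul_pos ha s_pos)
  calc cothRatio a β l ≤ 1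
      ↔ √l * cosh (a * √(β + l)) ≤ √(β + l) * sinh (a * √(β + l)) := by
        rw [cothRatio, div_le_one s_pos, ← mul_div_assoc, div_le_iff₀ sinh_pos]
    _ ↔ l * cosh (a * √(β + l)) ^ 2 ≤ (β + l) * sinh (a * √(β + l)) ^ 2 := by
        rw [← sq_le_sq₀ (by positivity) (by positivity), mul_pow, mul_pow, sq_sqrt hl, sq_s]
    _ ↔ β + l ≤ β * cosh (a * √(β + l)) ^ 2 := by
        rw [sinh_sq]
        constructor <;> intro h <;> linarith
    _ ↔ (√(β + l) / cosh (a * √(β + l))) ^ 2 ≤ β := by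
        rw [div_pow, div_le_iff₀ (by positivity), sq_s]

theorem forall_cothRatio_le_one_iff_criticalBeta_le (ha : 0 < a) (hβ : 0 < β) :
    (∀ l > 0, cothRatio a β l ≤ 1) ↔ criticalBeta a ≤ β := by
  rw [criticalBeta_le_iff ha]
  refine ⟨fun ratio_le s ↦ ?_, fun h l hl ↦
    (cothRatio_le_one_iff ha hl.le (add_pos hβ hl)).2 (h _)⟩
  rcases le_or_gt (s ^ 2) β with small | large
  · calc (s / cosh (a * s)) ^ 2 = s ^ 2 / cosh (a * s) ^ 2 := div_pow ..
      _ ≤ s ^ 2 := div_le_self (sq_nonneg s) (one_le_pow₀ (one_le_cosh _))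
      _ ≤ β := small
  · have l_pos : 0 < s ^ 2 - β := sub_pos.2 large
    have sqrt_eq : √(β + (s ^ 2 - β)) = |s| := by rw [add_sub_cancel, sqrt_sq_eq_abs]
    simpa only [sqrt_eq, cosh_mul_abs, div_pow, sq_abs] using
      (cothRatio_le_one_iff ha l_pos.le (add_pos hβ l_pos)).1 (ratio_le _ l_pos)

theorem sqrt_div_add_le_cothRatio (ha : 0 < a) (hl : 0 ≤ l) (hβl : 0 < β + l) :
    √(l / (β + l)) ≤ cothRatio a β l := by
  have one_le_coth : 1 ≤ cosh (a * √(β + l)) / sinh (a * √(β + l)) :=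
    (one_le_div (sinh_pos_iff.2 (mul_pos ha (sqrt_pos.2 hβl)))).2 (sinh_lt_cosh _).le
  rw [sqrt_div hl, cothRatio]
  gcongr
  exact le_mul_of_one_le_right (sqrt_nonneg l) one_le_coth

theorem tendsto_sqrt_div_add_atTop (β : ℝ) :
    Tendsto (fun l : ℝ ↦ √(l / (β + l))) atTop (𝓝 1) := by
  have tendsto_quot : Tendsto (fun l : ℝ ↦ l / (β + l)) atTop (𝓝 1) := by
    have tendsto_sub : Tendsto (fun l : ℝ ↦ 1 - β / (β + l)) atTop (𝓝 (1 - 0)) :=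
      tendsto_const_nhds.sub
        (tendsto_const_nhds.div_atTop (tendsto_atTop_add_const_left _ β tendsto_id))
    rw [sub_zero] at tendsto_sub
    refine tendsto_sub.congr' ?_
    filter_upwards [eventually_gt_atTop (-β)] with l hl
    have : β + l ≠ 0 := by linarith
    field_simp
    ring
  simpa using tendsto_quot.sqrt

theorem one_le_of_forall_cothRatio_le {b : ℝ} (ha : 0 < a) (h : ∀ l > 0, cothRatio a β l ≤ b) :
    1 ≤ b := by
  refine le_of_tendsto (tendsto_sqrt_div_add_atTop β) ?_
  filter_upwards [eventually_gt_atTop 0, eventually_gt_atTop (-β)] with l hl hβl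
  exact (sqrt_div_add_le_cothRatio ha hl.le (by linarith)).trans (h l hl)

theorem iSup_cothRatio_eq_one_iff (ha : 0 < a) :
    ⨆ l : Set.Ioi (0 : ℝ), cothRatio a β l = 1 ↔ ∀ l > 0, cothRatio a β l ≤ 1 := by
  constructor
  · intro iSup_eq l hl
    -- The real supremum of an unbounded family is `0`.
    have bdd : BddAbove (Set.range fun l : Set.Ioi (0 : ℝ) ↦ cothRatio a β l) := by
      by_contra unbounded
      exact zero_ne_one ((Real.iSup_of_not_bddAbove unbounded).symm.trans iSup_eq)
    exact iSup_eq ▸ le_ciSup bdd ⟨l, hl⟩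
  · intro ratio_le
    refine IsLUB.ciSup_eq ⟨?_, fun b hb ↦ one_le_of_forall_cothRatio_le (β := β) ha ?_⟩
    · exact Set.forall_mem_range.2 fun l ↦ ratio_le l l.2
    · exact fun l hl ↦ hb ⟨⟨l, hl⟩, rfl⟩

end CothRatio

theorem stmt_5_general {β : ℝ} (hβ : 0 < β) : K1 β = 1 ↔ criticalBeta π ≤ β :=
  (iSup_cothRatio_eq_one_iff pi_pos).trans
    (forall_cothRatio_le_one_iff_criticalBeta_le pi_pos hβ)

theorem stmt_5 (β : ℝ) (hβ : 0.046 ≤ β) : K1 β = 1 :=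
  (stmt_5_general (by linarith)).2 (criticalBeta_pi_le.trans hβ)
end

section
/- Let 0 ≤ β < 1. For every real-valued C¹ function u on ℝ that is 2π-periodic and satisfies ∫_0^{2π} u(x) dx = 0, one has max_x u(x)² ≤ K₂(β) · ( ∫_0^{2π} ( u'(x)² − β u(x)² ) dx )^{1/2} · ( ∫_0^{2π} u(x)² dx )^{1/2}; in particular the first integral is nonnegative. -/
open Real MeasureTheory

/-- The sharp constant `K₂(β) = sup_{λ>0} (√λ/π) · ∑_{k ∈ ℤ, k ≠ 0} 1/(k² − β + λ)`. -/
noncomputable def K2 (β : ℝ) : ℝ :=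
  ⨆ l : Set.Ioi (0 : ℝ),
    Real.sqrt l / π * ∑' k : {k : ℤ // k ≠ 0}, 1 / ((k.1 : ℝ) ^ 2 - β + l)

/-!
Since `u` has mean zero, `|u(x)| ≤ ∑_{k ≠ 0} |û(k)|`. Cauchy–Schwarz with the weights
`k² - β + λ`, together with Parseval for `u` and `u'`, gives for every `λ > 0`
`u(x)² ≤ (2π)⁻¹ · ∑_{k ≠ 0} 1 / (k² - β + λ) · (A + λ B)`, where `A = ∫ (u'² - β u²)` and
`B = ∫ u²`. The sum is at most `π K₂(β) / √λ`, and `λ = A / B` optimises the bound.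
Wirtinger's inequality gives `A ≥ 0`. The supremum defining `K₂(β)` is finite because the sum
is comparable with `∑_{k ≠ 0} 1 / (k² + λ)`, which telescoping bounds by `4 / √λ`.
-/

lemma summable_and_sq_tsum_le_of_sq_le_mul {ι : Type*} {r f g : ι → ℝ} (hr : ∀ i, 0 ≤ r i)
    (hf : ∀ i, 0 ≤ f i) (hg : ∀ i, 0 ≤ g i) (hrfg : ∀ i, r i ^ 2 ≤ f i * g i)
    (hfs : Summable f) (hgs : Summable g) :
    Summable r ∧ (∑' i, r i) ^ 2 ≤ (∑' i, f i) * ∑' i, g i := by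
  have hfg : 0 ≤ (∑' i, f i) * ∑' i, g i := mul_nonneg (tsum_nonneg hf) (tsum_nonneg hg)
  have sum_le (s : Finset ι) : ∑ i ∈ s, r i ≤ √((∑' i, f i) * ∑' i, g i) := by
    refine Real.le_sqrt_of_sq_le ?_
    calc (∑ i ∈ s, r i) ^ 2 ≤ (∑ i ∈ s, f i) * ∑ i ∈ s, g i :=
          Finset.sum_sq_le_sum_mul_sum_of_sq_le_mul s (fun i _ ↦ hf i) (fun i _ ↦ hg i)
            (fun i _ ↦ hrfg i)
      _ ≤ (∑' i, f i) * ∑' i, g i :=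
          mul_le_mul (hfs.sum_le_tsum s fun i _ ↦ hf i) (hgs.sum_le_tsum s fun i _ ↦ hg i)
            (Finset.sum_nonneg fun i _ ↦ hg i) (tsum_nonneg hf)
  exact ⟨summable_of_sum_le hr sum_le,
    (Real.le_sqrt (tsum_nonneg hr) hfg).1 (Real.tsum_le_of_sum_le hr sum_le)⟩

lemma le_mul_sqrt_mul_sqrt_of_forall_pos_le {y c a b : ℝ} (hc : 0 ≤ c) (ha : 0 ≤ a) (hb : 0 ≤ b)
    (h : ∀ t > 0, y ≤ c * ((a / t + b * t) / 2)) : y ≤ c * √a * √b := by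
  -- The optimal `t = √a / √b` degenerates when `a` or `b` vanishes, so raise both by `ε` first.
  have le_perturbed (ε : ℝ) (hε : 0 < ε) : y ≤ c * √(a + ε) * √(b + ε) := by
    have : 0 < √(a + ε) := Real.sqrt_pos.2 (by positivity)
    have : 0 < √(b + ε) := Real.sqrt_pos.2 (by positivity)
    have ha_le : a ≤ √(a + ε) ^ 2 := by rw [Real.sq_sqrt (by positivity)]; linarith
    have hb_le : b ≤ √(b + ε) ^ 2 := by rw [Real.sq_sqrt (by positivity)]; linarith
    set t := √(a + ε) / √(b + ε) with ht
    calc y ≤ c * ((a / t + b * t) / 2) := h t (by positivity)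
      _ ≤ c * ((√(a + ε) ^ 2 / t + √(b + ε) ^ 2 * t) / 2) := by gcongr
      _ = c * √(a + ε) * √(b + ε) := by rw [ht]; field_simp; ring
  have tendsto_perturbed : Filter.Tendsto (fun ε ↦ c * √(a + ε) * √(b + ε))
      (nhdsWithin 0 (Set.Ioi 0)) (nhds (c * √a * √b)) := by
    have hcont : Continuous fun ε ↦ c * √(a + ε) * √(b + ε) := by fun_prop
    simpa using (hcont.tendsto 0).mono_left nhdsWithin_le_nhds
  exact ge_of_tendsto tendsto_perturbed (eventually_mem_nhdsWithin.mono le_perturbed)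

lemma hasSum_subtype_ne_iff {ι M : Type*} [AddCommMonoid M] [TopologicalSpace M] {f : ι → M}
    {i : ι} (hi : f i = 0) {m : M} :
    HasSum (fun j : {j // j ≠ i} ↦ f j) m ↔ HasSum f m := by
  refine Subtype.val_injective.hasSum_iff fun j hj ↦ ?_
  rw [Subtype.range_coe_subtype] at hj
  simp_all

lemma hasSum_int_ne_zero_of_even {M : Type*} [AddCommMonoid M] [TopologicalSpace M]
    [ContinuousAdd M] {f : ℤ → M} (hf : f.Even) {m : M}
    (h : HasSum (fun n : ℕ ↦ f (n + 1)) m) :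
    HasSum (fun k : {k : ℤ // k ≠ 0} ↦ f k) (m + m) := by
  have update_of_ne_zero {k : ℤ} (hk : k ≠ 0) : Function.update f 0 0 k = f k :=
    Function.update_of_ne hk _ _
  have hpos : HasSum (fun n : ℕ ↦ Function.update f 0 0 (n + 1)) m := by
    simpa only [update_of_ne_zero (Nat.cast_add_one_ne_zero _)] using h
  have hneg : HasSum (fun n : ℕ ↦ Function.update f 0 0 (-(n + 1))) m := by
    simpa only [update_of_ne_zero (neg_ne_zero.2 (Nat.cast_add_one_ne_zero _)), hf _] using h
  have hupdate : HasSum (Function.update f 0 0) (m + m) := by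
    simpa using HasSum.of_add_one_of_neg_add_one hpos hneg
  exact ((hasSum_subtype_ne_iff (Function.update_self 0 0 f)).2 hupdate).congr_fun
    fun k ↦ (update_of_ne_zero k.2).symm

lemma sum_range_one_div_succ_sq_add_sq_le {s : ℝ} (hs : 0 < s) (n : ℕ) :
    ∑ i ∈ Finset.range n, 1 / (((i : ℝ) + 1) ^ 2 + s ^ 2) ≤ 2 / s := by
  have term_le (i : ℕ) :
      1 / (((i : ℝ) + 1) ^ 2 + s ^ 2) ≤ 2 / (i + s) - 2 / ((i + 1 : ℕ) + s) := by
    push_cast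
    rw [div_sub_div _ _ (by positivity) (by positivity),
      div_le_div_iff₀ (by positivity) (by positivity)]
    nlinarith [sq_nonneg ((i : ℝ) + 1 - s)]
  calc ∑ i ∈ Finset.range n, 1 / (((i : ℝ) + 1) ^ 2 + s ^ 2)
      ≤ ∑ i ∈ Finset.range n, (2 / ((i : ℝ) + s) - 2 / ((i + 1 : ℕ) + s)) :=
        Finset.sum_le_sum fun i _ ↦ term_le i
    _ = 2 / s - 2 / (n + s) := by
        rw [Finset.sum_range_sub' fun i : ℕ ↦ 2 / ((i : ℝ) + s)]; simp
    _ ≤ 2 / s := sub_le_self _ (by positivity)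

lemma exists_hasSum_one_div_int_sq_add_sq {s : ℝ} (hs : 0 < s) :
    ∃ S ≤ 4 / s, HasSum (fun k : {k : ℤ // k ≠ 0} ↦ 1 / ((k.1 : ℝ) ^ 2 + s ^ 2)) S := by
  have term_nonneg (n : ℕ) : 0 ≤ 1 / (((n : ℝ) + 1) ^ 2 + s ^ 2) := by positivity
  have hsum := (summable_of_sum_range_le term_nonneg
    (sum_range_one_div_succ_sq_add_sq_le hs)).hasSum
  have hle := Real.tsum_le_of_sum_range_le term_nonneg (sum_range_one_div_succ_sq_add_sq_le hs)
  have heven : Function.Even fun k : ℤ ↦ 1 / ((k : ℝ) ^ 2 + s ^ 2) := fun k ↦ by simp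
  refine ⟨_, ?_, hasSum_int_ne_zero_of_even heven (by simpa using hsum)⟩
  calc _ ≤ 2 / s + 2 / s := by simpa using add_le_add hle hle
    _ = 4 / s := by ring

lemma one_le_sq_int_cast (k : {k : ℤ // k ≠ 0}) : 1 ≤ (k.1 : ℝ) ^ 2 := by
  rw [one_le_sq_iff_one_le_abs]
  exact_mod_cast Int.one_le_abs k.2

section Weights

variable {β l : ℝ}

lemma int_sq_sub_add_pos (hβ : β < 1) (hl : 0 ≤ l) (k : {k : ℤ // k ≠ 0}) :
    0 < (k.1 : ℝ) ^ 2 - β + l := by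
  linarith [one_le_sq_int_cast k]

lemma min_one_one_sub_mul_le (hl : 0 ≤ l) (k : {k : ℤ // k ≠ 0}) :
    min 1 (1 - β) * ((k.1 : ℝ) ^ 2 + l) ≤ (k.1 : ℝ) ^ 2 - β + l := by
  have hk := one_le_sq_int_cast k
  rcases le_total β 0 with hβ | hβ
  · rw [min_eq_left (by linarith)]
    linarith
  · rw [min_eq_right (by linarith)]
    nlinarith

lemma one_div_int_sq_sub_add_le (hβ : β < 1) (hl : 0 ≤ l) (k : {k : ℤ // k ≠ 0}) :
    1 / ((k.1 : ℝ) ^ 2 - β + l) ≤ (min 1 (1 - β))⁻¹ * (1 / ((k.1 : ℝ) ^ 2 + √l ^ 2)) := by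
  have : 0 < min 1 (1 - β) := lt_min one_pos (sub_pos.2 hβ)
  have hk := one_le_sq_int_cast k
  rw [Real.sq_sqrt hl, inv_eq_one_div, one_div_mul_one_div]
  exact one_div_le_one_div_of_le (by positivity) (min_one_one_sub_mul_le hl k)

lemma summable_one_div_int_sq_sub_add (hβ : β < 1) (hl : 0 < l) :
    Summable fun k : {k : ℤ // k ≠ 0} ↦ 1 / ((k.1 : ℝ) ^ 2 - β + l) := by
  obtain ⟨S, -, hS⟩ := exists_hasSum_one_div_int_sq_add_sq (Real.sqrt_pos.2 hl)
  exact .of_nonneg_of_le (fun k ↦ (one_div_pos.2 (int_sq_sub_add_pos hβ hl.le k)).le)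
    (one_div_int_sq_sub_add_le hβ hl.le) (hS.summable.mul_left _)

lemma sqrt_mul_tsum_one_div_int_sq_sub_add_le (hβ : β < 1) (hl : 0 < l) :
    √l * ∑' k : {k : ℤ // k ≠ 0}, 1 / ((k.1 : ℝ) ^ 2 - β + l) ≤ (min 1 (1 - β))⁻¹ * 4 := by
  have hsqrt : 0 < √l := Real.sqrt_pos.2 hl
  have : 0 < min 1 (1 - β) := lt_min one_pos (sub_pos.2 hβ)
  obtain ⟨S, hS_le, hS⟩ := exists_hasSum_one_div_int_sq_add_sq hsqrt
  calc √l * ∑' k : {k : ℤ // k ≠ 0}, 1 / ((k.1 : ℝ) ^ 2 - β + l)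
      ≤ √l * ((min 1 (1 - β))⁻¹ * S) := by
        gcongr
        exact hasSum_le (one_div_int_sq_sub_add_le hβ hl.le)
          (summable_one_div_int_sq_sub_add hβ hl).hasSum (hS.mul_left _)
    _ ≤ √l * ((min 1 (1 - β))⁻¹ * (4 / √l)) := by gcongr
    _ = (min 1 (1 - β))⁻¹ * 4 := by field_simp

lemma sqrt_div_pi_mul_tsum_le_K2 (hβ : β < 1) (hl : 0 < l) :
    √l / π * ∑' k : {k : ℤ // k ≠ 0}, 1 / ((k.1 : ℝ) ^ 2 - β + l) ≤ K2 β := by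
  have hbdd : BddAbove (Set.range fun l : Set.Ioi (0 : ℝ) ↦
      √l / π * ∑' k : {k : ℤ // k ≠ 0}, 1 / ((k.1 : ℝ) ^ 2 - β + l)) := by
    refine ⟨(min 1 (1 - β))⁻¹ * 4 / π, ?_⟩
    rintro _ ⟨l, rfl⟩
    simp only [div_mul_eq_mul_div]
    exact div_le_div_of_nonneg_right (sqrt_mul_tsum_one_div_int_sq_sub_add_le hβ l.2) pi_pos.le
  exact le_ciSup hbdd ⟨l, hl⟩

lemma K2_nonneg (hβ : β < 1) : 0 ≤ K2 β :=
  Real.iSup_nonneg fun l ↦ mul_nonneg (by positivity) <|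
    tsum_nonneg fun k ↦ (one_div_pos.2 (int_sq_sub_add_pos hβ (le_of_lt l.2) k)).le

end Weights

section FourierCoeffOn

variable {a b : ℝ} (hab : a < b) {f f' : ℝ → ℂ}

lemma fourierCoeffOn_zero {E : Type*} [NormedAddCommGroup E] [NormedSpace ℂ E] (f : ℝ → E) :
    fourierCoeffOn hab f 0 = (1 / (b - a)) • ∫ x in a..b, f x := by
  simp [fourierCoeffOn_eq_integral]

lemma memLp_restrict_Ioc_of_continuousOn_Icc {E : Type*} [NormedAddCommGroup E] {f : ℝ → E}
    (hf : ContinuousOn f (Set.Icc a b)) (p : ENNReal) :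
    MemLp f p (volume.restrict (Set.Ioc a b)) := by
  obtain ⟨C, hC⟩ := isCompact_Icc.exists_bound_of_continuousOn hf
  refine .of_bound ((hf.mono Set.Ioc_subset_Icc_self).aestronglyMeasurable measurableSet_Ioc) C ?_
  filter_upwards [ae_restrict_mem measurableSet_Ioc] with x hx
  exact hC x (Set.Ioc_subset_Icc_self hx)

lemma norm_le_tsum_norm_fourierCoeffOn (hf : Continuous f) (hper : Function.Periodic f (b - a))
    (hsum : Summable fun n ↦ ‖fourierCoeffOn hab f n‖) (x : ℝ) :
    ‖f x‖ ≤ ∑' n, ‖fourierCoeffOn hab f n‖ := by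
  have : Fact (0 < b - a) := ⟨sub_pos.2 hab⟩
  let F : C(AddCircle (b - a), ℂ) := ⟨hper.lift, continuous_quot_lift _ hf⟩
  have hF (y : ℝ) : F y = f y := hper.lift_coe y
  have hcoeff (n : ℤ) : fourierCoeff F n = fourierCoeffOn hab f n := by
    rw [fourierCoeff_eq_intervalIntegral _ n a, fourierCoeffOn_eq_integral, add_sub_cancel]
    simp only [hF]
  have hseries := has_pointwise_sum_fourier_series_of_summable (f := F)
    (.of_norm (by simpa only [hcoeff] using hsum)) x
  rw [← hF, ← hseries.tsum_eq]
  refine tsum_of_norm_bounded hsum.hasSum fun n ↦ ?_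
  rw [hcoeff, norm_smul, fourier_apply, Circle.norm_coe, mul_one]

lemma sq_norm_le_tsum_one_div_mul_tsum_mul_sq_norm_fourierCoeffOn (hf : Continuous f)
    (hper : Function.Periodic f (b - a)) (hmean : ∫ x in a..b, f x = 0)
    {w : {n : ℤ // n ≠ 0} → ℝ} (hw : ∀ n, 0 < w n) (hw_sum : Summable fun n ↦ 1 / w n)
    (hwf_sum : Summable fun n ↦ w n * ‖fourierCoeffOn hab f n‖ ^ 2) (x : ℝ) :
    ‖f x‖ ^ 2 ≤ (∑' n, 1 / w n) * ∑' n, w n * ‖fourierCoeffOn hab f n‖ ^ 2 := by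
  obtain ⟨hsum, hle⟩ := summable_and_sq_tsum_le_of_sq_le_mul
    (fun n : {n : ℤ // n ≠ 0} ↦ norm_nonneg (fourierCoeffOn hab f n))
    (fun n ↦ one_div_nonneg.2 (hw n).le) (fun n ↦ mul_nonneg (hw n).le (sq_nonneg _))
    (fun n ↦ by rw [one_div, inv_mul_cancel_left₀ (hw n).ne']) hw_sum hwf_sum
  have hsum_int : HasSum (fun n ↦ ‖fourierCoeffOn hab f n‖) _ :=
    (hasSum_subtype_ne_iff (by simp [fourierCoeffOn_zero, hmean])).1 hsum.hasSum
  calc ‖f x‖ ^ 2 ≤ (∑' n, ‖fourierCoeffOn hab f n‖) ^ 2 := by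
        gcongr
        exact norm_le_tsum_norm_fourierCoeffOn hab hf hper hsum_int.summable x
    _ = (∑' n : {n : ℤ // n ≠ 0}, ‖fourierCoeffOn hab f n‖) ^ 2 := by rw [hsum_int.tsum_eq]
    _ ≤ _ := hle

lemma fourierCoeffOn_derivative (hfc : ContinuousOn f (Set.Icc a b))
    (hff' : ∀ x ∈ Set.Ioo a b, HasDerivWithinAt f (f' x) (Set.Ioi x) x) (hfab : f a = f b)
    (hf' : IntervalIntegrable f' volume a b) (n : ℤ) :
    fourierCoeffOn hab f' n =
      2 * π * Complex.I * n / (b - a : ℝ) * fourierCoeffOn hab f n := by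
  rw [← Set.uIcc_of_le hab.le] at hfc
  have hff'_minmax : ∀ x ∈ Set.Ioo (min a b) (max a b),
      HasDerivWithinAt f (f' x) (Set.Ioi x) x := by
    rwa [min_eq_left hab.le, max_eq_right hab.le]
  rcases eq_or_ne n 0 with rfl | hn
  · rw [fourierCoeffOn_zero,
      intervalIntegral.integral_eq_sub_of_hasDeriv_right hfc hff'_minmax hf', hfab]
    simp
  · have hba : (b - a : ℂ) ≠ 0 := by exact_mod_cast (sub_pos.2 hab).ne'
    have hnC : (n : ℂ) ≠ 0 := Int.cast_ne_zero.2 hn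
    have hpi : (π : ℂ) ≠ 0 := Complex.ofReal_ne_zero.2 pi_ne_zero
    rw [fourierCoeffOn_of_hasDeriv_right hab hn hfc hff'_minmax hf', hfab]
    push_cast
    field_simp
    ring

lemma hasSum_sq_norm_fourierCoeffOn_derivative (hfc : ContinuousOn f (Set.Icc a b))
    (hff' : ∀ x ∈ Set.Ioo a b, HasDerivWithinAt f (f' x) (Set.Ioi x) x) (hfab : f a = f b)
    (hf' : MemLp f' 2 (volume.restrict (Set.Ioc a b))) :
    HasSum (fun n : ℤ ↦ (2 * π * n / (b - a)) ^ 2 * ‖fourierCoeffOn hab f n‖ ^ 2)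
      ((b - a)⁻¹ * ∫ x in a..b, ‖f' x‖ ^ 2) := by
  have hf'_int : IntervalIntegrable f' volume a b :=
    (intervalIntegrable_iff_integrableOn_Ioc_of_le hab.le).2 (hf'.integrable one_le_two)
  refine (hasSum_sq_fourierCoeffOn hab hf').congr_fun fun n ↦ ?_
  rw [fourierCoeffOn_derivative hab hfc hff' hfab hf'_int, norm_mul, mul_pow]
  simp [div_pow, mul_pow, -Complex.ofReal_sub]

end FourierCoeffOn

lemma wirtinger_inequality {a b : ℝ} (hab : a < b) {f f' : ℝ → ℂ}
    (hfc : ContinuousOn f (Set.Icc a b))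
    (hff' : ∀ x ∈ Set.Ioo a b, HasDerivWithinAt f (f' x) (Set.Ioi x) x) (hfab : f a = f b)
    (hf' : MemLp f' 2 (volume.restrict (Set.Ioc a b))) (hmean : ∫ x in a..b, f x = 0) :
    (2 * π / (b - a)) ^ 2 * ∫ x in a..b, ‖f x‖ ^ 2 ≤ ∫ x in a..b, ‖f' x‖ ^ 2 := by
  have hba : 0 < (b - a)⁻¹ := inv_pos.2 (sub_pos.2 hab)
  have parseval :=
    hasSum_sq_fourierCoeffOn hab (memLp_restrict_Ioc_of_continuousOn_Icc hfc 2)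
  have parseval' := hasSum_sq_norm_fourierCoeffOn_derivative hab hfc hff' hfab hf'
  have term_le (n : ℤ) : (2 * π / (b - a)) ^ 2 * ‖fourierCoeffOn hab f n‖ ^ 2 ≤
      (2 * π * n / (b - a)) ^ 2 * ‖fourierCoeffOn hab f n‖ ^ 2 := by
    rcases eq_or_ne n 0 with rfl | hn
    · simp [fourierCoeffOn_zero, hmean]
    · rw [mul_div_right_comm (2 * π) (n : ℝ), mul_pow _ (n : ℝ)]
      gcongr
      exact le_mul_of_one_le_right (sq_nonneg _) (one_le_sq_int_cast ⟨n, hn⟩)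
  refine le_of_mul_le_mul_left ?_ hba
  rw [mul_left_comm]
  exact hasSum_le term_le (parseval.mul_left _) parseval'

lemma integral_sq_norm_sub_mul_sq_norm {E : Type*} [NormedAddCommGroup E] {a b : ℝ}
    (hab : a ≤ b) (β : ℝ) {f f' : ℝ → E}
    (hf : MemLp f 2 (volume.restrict (Set.Ioc a b)))
    (hf' : MemLp f' 2 (volume.restrict (Set.Ioc a b))) :
    ∫ x in a..b, (‖f' x‖ ^ 2 - β * ‖f x‖ ^ 2) =
      (∫ x in a..b, ‖f' x‖ ^ 2) - β * ∫ x in a..b, ‖f x‖ ^ 2 := by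
  have sq_integrable {g : ℝ → E} (hg : MemLp g 2 (volume.restrict (Set.Ioc a b))) :
      IntervalIntegrable (fun x ↦ ‖g x‖ ^ 2) volume a b :=
    (intervalIntegrable_iff_integrableOn_Ioc_of_le hab).2 (hg.integrable_norm_pow two_ne_zero)
  rw [intervalIntegral.integral_sub (sq_integrable hf') ((sq_integrable hf).const_mul β),
    intervalIntegral.integral_const_mul]

section Periodic

variable {β l : ℝ} {f f' : ℝ → ℂ}

lemma hasSum_sub_add_mul_sq_norm_fourierCoeffOn (hf : ContinuousOn f (Set.Icc 0 (2 * π)))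
    (h0 : f 0 = f (2 * π)) (hmean : ∫ x in (0 : ℝ)..(2 * π), f x = 0)
    (hff' : ∀ x ∈ Set.Ioo 0 (2 * π), HasDerivWithinAt f (f' x) (Set.Ioi x) x)
    (hf' : MemLp f' 2 (volume.restrict (Set.Ioc 0 (2 * π)))) (β l : ℝ) :
    HasSum (fun k : {k : ℤ // k ≠ 0} ↦
        ((k.1 : ℝ) ^ 2 - β + l) * ‖fourierCoeffOn two_pi_pos f k‖ ^ 2)
      ((2 * π)⁻¹ * ((∫ x in (0 : ℝ)..(2 * π), (‖f' x‖ ^ 2 - β * ‖f x‖ ^ 2)) +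
        l * ∫ x in (0 : ℝ)..(2 * π), ‖f x‖ ^ 2)) := by
  have hfL2 := memLp_restrict_Ioc_of_continuousOn_Icc hf 2
  have parseval := hasSum_sq_fourierCoeffOn two_pi_pos hfL2
  have parseval' := hasSum_sq_norm_fourierCoeffOn_derivative two_pi_pos hf hff' h0 hf'
  refine (hasSum_subtype_ne_iff (f := fun k : ℤ ↦
    ((k : ℝ) ^ 2 - β + l) * ‖fourierCoeffOn two_pi_pos f k‖ ^ 2)
    (by simp [fourierCoeffOn_zero, hmean])).2 ?_
  convert parseval'.add (parseval.mul_left (l - β)) using 1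
  · ext k
    rw [sub_zero, mul_div_cancel_left₀ _ two_pi_pos.ne']
    ring
  · rw [integral_sq_norm_sub_mul_sq_norm two_pi_pos.le β hfL2 hf', sub_zero, smul_eq_mul]
    ring

lemma sq_norm_le_tsum_mul_integral (hβ : β < 1) (hl : 0 < l) (hf : Continuous f)
    (hper : Function.Periodic f (2 * π)) (hmean : ∫ x in (0 : ℝ)..(2 * π), f x = 0)
    (hff' : ∀ x ∈ Set.Ioo 0 (2 * π), HasDerivWithinAt f (f' x) (Set.Ioi x) x)
    (hf' : MemLp f' 2 (volume.restrict (Set.Ioc 0 (2 * π)))) (x : ℝ) :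
    ‖f x‖ ^ 2 ≤ (∑' k : {k : ℤ // k ≠ 0}, 1 / ((k.1 : ℝ) ^ 2 - β + l)) *
      ((2 * π)⁻¹ * ((∫ x in (0 : ℝ)..(2 * π), (‖f' x‖ ^ 2 - β * ‖f x‖ ^ 2)) +
        l * ∫ x in (0 : ℝ)..(2 * π), ‖f x‖ ^ 2)) := by
  have hwf := hasSum_sub_add_mul_sq_norm_fourierCoeffOn hf.continuousOn hper.eq.symm hmean hff'
    hf' β l
  rw [← hwf.tsum_eq]
  exact sq_norm_le_tsum_one_div_mul_tsum_mul_sq_norm_fourierCoeffOn two_pi_pos hf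
    (by rwa [sub_zero]) hmean (int_sq_sub_add_pos hβ hl.le)
    (summable_one_div_int_sq_sub_add hβ hl) hwf.summable x

lemma integral_sq_norm_derivative_sub_nonneg (hβ : β < 1)
    (hf : ContinuousOn f (Set.Icc 0 (2 * π))) (h0 : f 0 = f (2 * π))
    (hmean : ∫ x in (0 : ℝ)..(2 * π), f x = 0)
    (hff' : ∀ x ∈ Set.Ioo 0 (2 * π), HasDerivWithinAt f (f' x) (Set.Ioi x) x)
    (hf' : MemLp f' 2 (volume.restrict (Set.Ioc 0 (2 * π)))) :
    0 ≤ ∫ x in (0 : ℝ)..(2 * π), (‖f' x‖ ^ 2 - β * ‖f x‖ ^ 2) := by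
  have wirtinger := wirtinger_inequality two_pi_pos hf hff' h0 hf' hmean
  rw [sub_zero, div_self two_pi_pos.ne', one_pow, one_mul] at wirtinger
  have hnonneg : 0 ≤ ∫ x in (0 : ℝ)..(2 * π), ‖f x‖ ^ 2 :=
    intervalIntegral.integral_nonneg two_pi_pos.le fun x _ ↦ sq_nonneg _
  rw [integral_sq_norm_sub_mul_sq_norm two_pi_pos.le β
    (memLp_restrict_Ioc_of_continuousOn_Icc hf 2) hf']
  linarith [mul_le_of_le_one_left hnonneg hβ.le]

end Periodic

theorem stmt_7_general {β : ℝ} (hβ : β < 1) {f f' : ℝ → ℂ} (hf : Continuous f)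
    (hper : Function.Periodic f (2 * π)) (hmean : ∫ x in (0 : ℝ)..(2 * π), f x = 0)
    (hff' : ∀ x ∈ Set.Ioo 0 (2 * π), HasDerivWithinAt f (f' x) (Set.Ioi x) x)
    (hf' : MemLp f' 2 (volume.restrict (Set.Ioc 0 (2 * π)))) :
    (∀ x, ‖f x‖ ^ 2 ≤ K2 β *
        √(∫ x in (0 : ℝ)..(2 * π), (‖f' x‖ ^ 2 - β * ‖f x‖ ^ 2)) *
        √(∫ x in (0 : ℝ)..(2 * π), ‖f x‖ ^ 2)) ∧
      0 ≤ ∫ x in (0 : ℝ)..(2 * π), (‖f' x‖ ^ 2 - β * ‖f x‖ ^ 2) := by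
  have energy_nonneg := integral_sq_norm_derivative_sub_nonneg hβ hf.continuousOn hper.eq.symm
    hmean hff' hf'
  refine ⟨fun x ↦ ?_, energy_nonneg⟩
  have mass_nonneg : 0 ≤ ∫ x in (0 : ℝ)..(2 * π), ‖f x‖ ^ 2 :=
    intervalIntegral.integral_nonneg two_pi_pos.le fun x _ ↦ sq_nonneg _
  refine le_mul_sqrt_mul_sqrt_of_forall_pos_le (K2_nonneg hβ) energy_nonneg mass_nonneg ?_
  intro t ht
  have bound := sq_norm_le_tsum_mul_integral hβ (pow_pos ht 2) hf hper hmean hff' hf' x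
  have hK2 := sqrt_div_pi_mul_tsum_le_K2 hβ (pow_pos ht 2)
  rw [Real.sqrt_sq ht.le] at hK2
  set A := ∫ x in (0 : ℝ)..(2 * π), (‖f' x‖ ^ 2 - β * ‖f x‖ ^ 2)
  set B := ∫ x in (0 : ℝ)..(2 * π), ‖f x‖ ^ 2
  set S := ∑' k : {k : ℤ // k ≠ 0}, 1 / ((k.1 : ℝ) ^ 2 - β + t ^ 2)
  calc ‖f x‖ ^ 2 ≤ S * ((2 * π)⁻¹ * (A + t ^ 2 * B)) := bound
    _ = t / π * S * ((A / t + B * t) / 2) := by field_simp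
    _ ≤ K2 β * ((A / t + B * t) / 2) := by gcongr

theorem stmt_7 (β : ℝ) (hβ0 : 0 ≤ β) (hβ1 : β < 1)
    (u : ℝ → ℝ) (hu : ContDiff ℝ 1 u) (hper : Function.Periodic u (2 * π))
    (hmean : ∫ x in (0:ℝ)..(2 * π), u x = 0) :
    (∀ x : ℝ, u x ^ 2 ≤ K2 β *
        Real.sqrt (∫ x in (0:ℝ)..(2 * π), ((deriv u x) ^ 2 - β * (u x) ^ 2)) *
        Real.sqrt (∫ x in (0:ℝ)..(2 * π), (u x) ^ 2)) ∧
      0 ≤ ∫ x in (0:ℝ)..(2 * π), ((deriv u x) ^ 2 - β * (u x) ^ 2) := by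
  have hu' : Continuous fun x ↦ ((deriv u x : ℝ) : ℂ) :=
    Complex.continuous_ofReal.comp (hu.continuous_deriv le_rfl)
  simpa using stmt_7_general hβ1 (f := fun x ↦ (u x : ℂ))
    (f' := fun x ↦ ((deriv u x : ℝ) : ℂ))
    (Complex.continuous_ofReal.comp hu.continuous) (hper.comp Complex.ofReal)
    (by rw [intervalIntegral.integral_ofReal, hmean, Complex.ofReal_zero])
    (fun x _ ↦ (hu.differentiable_one x).hasDerivAt.ofReal_comp.hasDerivWithinAt)
    (memLp_restrict_Ioc_of_continuousOn_Icc hu'.continuousOn 2)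
end
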